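/- arXiv:2111.06507 — 3 statements merged into one kernel-verified Lean document; each statement's English description precedes it below -/
import Mathlib

section
/- Let L be a field, let r ≥ 1, and let m_1, ..., m_r ∈ L be such that no nonempty subset of {m_1,...,m_r} has sum zero (i.e., for every nonempty S ⊆ {1,...,r}, Σ_{i∈S} m_i ≠ 0). Let c_1, ..., c_r ∈ L be arbitrary. Then the set of tuples (x_1,...,x_r) ∈ L^r satisfying m_1 x_1^j + m_2 x_2^j + ... + m_r x_r^j = c_j for all j = 1, ..., r is finite of cardinality at most r!. -/
open scoped Classical
open Polynomial

/-! Over an algebraically closed field `K` the power sums `p_k = ∑ i, m_i X_i ^ k`, `1 ≤ k ≤ r`, are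
forms of degrees `1, ..., r`. Their only common zero is the origin: grouping equal values, a
nonzero value would contradict the invertibility of a Vandermonde matrix, because no subset of the
`m_i` sums to zero. By the Nullstellensatz the `p_k` then generate an ideal containing a power of
each variable, and by homogeneity `K[X_1, ..., X_r]` is a finite module over
`A = K[p_1, ..., p_r]`. Comparing transcendence degrees, the `p_k` are algebraically independent,
so that `A` is integrally closed.

Let `l` be a linear form with minimal polynomial of degree `N` over `A`. The products of the
monomials in the `p_k` with `l ^ j`, `j < N`, are linearly independent over `K`; comparing their
number with the dimension of the space of polynomials of degree at most `n` gives
`N ≤ 1 * 2 * ⋯ * r` as `n → ∞`. Choose `l` to separate given points at which all `p_k` take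
prescribed values `c_k`. Specializing the minimal polynomial at `p_k = c_k`, one obtains a monic
polynomial of degree `N` over `K` that has the values of `l` at these points as roots. So there are
at most `r!` points. -/

theorem sum_mul_mul_eval_eq_zero {R ι : Type*} [CommSemiring R] [Fintype ι] {m y : ι → R} {n : ℕ}
    (h : ∀ j < n, ∑ i, m i * y i ^ (j + 1) = 0) {g : R[X]} (hg : g.natDegree < n) :
    ∑ i, m i * (y i * g.eval (y i)) = 0 := by
  calc ∑ i, m i * (y i * g.eval (y i))
      = ∑ i, ∑ j ∈ Finset.range n, g.coeff j * (m i * y i ^ (j + 1)) := by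
        refine Finset.sum_congr rfl fun i _ => ?_
        rw [eval_eq_sum_range' hg, Finset.mul_sum, Finset.mul_sum]
        exact Finset.sum_congr rfl fun j _ => by ring
    _ = ∑ j ∈ Finset.range n, g.coeff j * ∑ i, m i * y i ^ (j + 1) := by
        rw [Finset.sum_comm]
        simp only [Finset.mul_sum]
    _ = 0 := Finset.sum_eq_zero fun j hj => by rw [h j (Finset.mem_range.1 hj), mul_zero]

theorem eq_zero_of_sum_mul_pow_eq_zero {R ι : Type*} [CommRing R] [IsDomain R] [Fintype ι]
    {m y : ι → R} (hm : ∀ S : Finset ι, S.Nonempty → ∑ i ∈ S, m i ≠ 0)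
    (h : ∀ j < Fintype.card ι, ∑ i, m i * y i ^ (j + 1) = 0) : y = 0 := by
  funext k
  by_contra hk
  -- This polynomial vanishes at every value of `y` except `y k`, so it isolates the indices
  -- at which `y` takes the value `y k`.
  set s : Finset R := (Finset.univ.image y).erase (y k)
  let g : R[X] := Lagrange.nodal s id
  have hg_deg : g.natDegree < Fintype.card ι := calc
    g.natDegree = s.card := Lagrange.natDegree_nodal
    _ < (Finset.univ.image y).card :=
      Finset.card_erase_lt_of_mem (Finset.mem_image_of_mem y (Finset.mem_univ k))
    _ ≤ Fintype.card ι := Finset.card_image_le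
  have hg_zero : ∀ i, y i ≠ y k → g.eval (y i) = 0 := fun i hi =>
    Lagrange.eval_nodal_at_node (v := id) <|
      Finset.mem_erase.2 ⟨hi, Finset.mem_image_of_mem y (Finset.mem_univ i)⟩
  have hg_ne_zero : g.eval (y k) ≠ 0 :=
    Lagrange.eval_nodal_not_at_node fun v hv => (Finset.ne_of_mem_erase hv).symm
  have hsum : (∑ i with y i = y k, m i) * (y k * g.eval (y k)) = 0 := by
    rw [← sum_mul_mul_eval_eq_zero h hg_deg, Finset.sum_mul, Finset.sum_filter]
    refine Finset.sum_congr rfl fun i _ => ?_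
    split_ifs with hi
    · rw [hi]
    · rw [hg_zero i hi, mul_zero, mul_zero]
  exact mul_ne_zero (hm _ ⟨k, by simp⟩) (mul_ne_zero hk hg_ne_zero) hsum

theorem pow_mul_le_pow_mul_of_forall_mul_le_mul {f : ℕ → ℕ} {N D c : ℕ}
    (h : ∀ n, N * f n ≤ D * f (n + c)) (k : ℕ) : N ^ k * f 0 ≤ D ^ k * f (k * c) := by
  induction k with
  | zero => simp
  | succ k ih => calc
      N ^ (k + 1) * f 0 = N * (N ^ k * f 0) := by ring
      _ ≤ N * (D ^ k * f (k * c)) := by gcongr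
      _ = D ^ k * (N * f (k * c)) := by ring
      _ ≤ D ^ k * (D * f (k * c + c)) := by exact Nat.mul_le_mul_left _ (h _)
      _ = D ^ (k + 1) * f ((k + 1) * c) := by rw [Nat.succ_mul]; ring

-- Otherwise iterating `h` would make `f` grow exponentially, at rate `N / D`.
theorem le_of_forall_mul_le_mul_of_le_pow {f : ℕ → ℕ} {r N D c : ℕ} (hf₀ : f 0 ≠ 0)
    (hf : ∀ n, f n ≤ (n + 1) ^ r) (h : ∀ n, N * f n ≤ D * f (n + c)) : N ≤ D := by
  by_contra! hlt
  have hD : 0 < D := by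
    refine Nat.pos_of_ne_zero fun hD => ?_
    have h₀ := h 0
    simp only [hD, zero_mul, Nat.le_zero, mul_eq_zero] at h₀
    omega
  have hratio : (1 : ℝ) < N / D := by
    rw [one_lt_div (by positivity)]
    exact_mod_cast hlt
  have hbound : ∀ k : ℕ, 1 ≤ k → ((c + 1 : ℝ) ^ r)⁻¹ ≤ k ^ r / (N / D : ℝ) ^ k := by
    intro k hk
    have hgrowth : N ^ k ≤ D ^ k * ((c + 1) * k) ^ r := calc
      N ^ k ≤ N ^ k * f 0 := Nat.le_mul_of_pos_right _ (Nat.pos_of_ne_zero hf₀)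
      _ ≤ D ^ k * f (k * c) := pow_mul_le_pow_mul_of_forall_mul_le_mul h k
      _ ≤ D ^ k * ((c + 1) * k) ^ r := by
        gcongr
        exact (hf _).trans (Nat.pow_le_pow_left (by nlinarith) r)
    rw [le_div_iff₀ (by positivity), inv_mul_le_iff₀ (by positivity), div_pow,
      div_le_iff₀ (by positivity), ← mul_pow, mul_comm]
    exact_mod_cast hgrowth
  have hlim := tendsto_pow_const_div_const_pow_of_one_lt r hratio
  have hle : ((c + 1 : ℝ) ^ r)⁻¹ ≤ 0 :=
    ge_of_tendsto hlim (Filter.eventually_atTop.2 ⟨1, hbound⟩)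
  exact hle.not_gt (by positivity)

/-- The exponents of the monomials of weighted degree at most `n`, where the variable `X i` has
weight `d i`. Their number is the dimension of a space of polynomials in forms of degrees `d i`. -/
def weightedSimplex {ι : Type*} (d : ι → ℕ) (n : ℕ) : Set (ι →₀ ℕ) :=
  {a | Finsupp.weight d a ≤ n}

theorem weightedSimplex_finite {ι : Type*} [Finite ι] {d : ι → ℕ} (hd : ∀ i, d i ≠ 0) (n : ℕ) :
    (weightedSimplex d n).Finite :=
  Finsupp.finite_of_nat_weight_le d hd n

theorem ncard_weightedSimplex_ne_zero {ι : Type*} [Finite ι] {d : ι → ℕ} (hd : ∀ i, d i ≠ 0)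
    (n : ℕ) : (weightedSimplex d n).ncard ≠ 0 :=
  Set.ncard_ne_zero_of_mem (a := 0) (by simp [weightedSimplex]) (weightedSimplex_finite hd n)

theorem ncard_weightedSimplex_le_pow {ι : Type*} [Fintype ι] {d : ι → ℕ} (hd : ∀ i, d i ≠ 0)
    (n : ℕ) : (weightedSimplex d n).ncard ≤ (n + 1) ^ Fintype.card ι := by
  have hlt (a : weightedSimplex d n) (i : ι) : a.1 i < n + 1 :=
    Nat.lt_succ_of_le ((Finsupp.le_weight d (hd i) a.1).trans a.2)
  calc (weightedSimplex d n).ncard ≤ Nat.card (ι → Fin (n + 1)) :=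
        Nat.card_le_card_of_injective (fun a i => ⟨a.1 i, hlt a i⟩) fun a b hab =>
          Subtype.ext <| Finsupp.ext fun i => congrArg Fin.val (congrFun hab i)
    _ = (n + 1) ^ Fintype.card ι := by simp

-- Division with remainder by `d i` in the `i`-th coordinate.
theorem ncard_weightedSimplex_one_le {ι : Type*} [Fintype ι] {d : ι → ℕ} (hd : ∀ i, d i ≠ 0)
    (n : ℕ) : (weightedSimplex (1 : ι → ℕ) n).ncard ≤ (weightedSimplex d n).ncard * ∏ i, d i := by
  have hquot (a : weightedSimplex (1 : ι → ℕ) n) :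
      Finsupp.equivFunOnFinite.symm (fun i => a.1 i / d i) ∈ weightedSimplex d n := by
    have ha : Finsupp.weight 1 a.1 ≤ n := a.2
    refine le_trans ?_ ha
    simp only [Finsupp.weight_eq_sum, smul_eq_mul, Finsupp.equivFunOnFinite_symm_apply_apply,
      Pi.one_apply, mul_one]
    exact Finset.sum_le_sum fun i _ => Nat.div_mul_le_self _ _
  have := (weightedSimplex_finite hd n).to_subtype
  calc (weightedSimplex (1 : ι → ℕ) n).ncard
      ≤ Nat.card (weightedSimplex d n × ∀ i, Fin (d i)) := by
        refine Nat.card_le_card_of_injective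
          (fun a => (⟨_, hquot a⟩,
            fun i => ⟨a.1 i % d i, Nat.mod_lt _ (Nat.pos_of_ne_zero (hd i))⟩))
          fun a b hab => Subtype.ext <| Finsupp.ext fun i => ?_
        obtain ⟨hdiv, hmod⟩ := Prod.mk.inj hab
        have hdiv_i := DFunLike.congr_fun (congrArg Subtype.val hdiv) i
        have hmod_i := congrArg Fin.val (congrFun hmod i)
        dsimp at hdiv_i hmod_i
        rw [← Nat.div_add_mod (a.1 i) (d i), hdiv_i, hmod_i, Nat.div_add_mod]
    _ = (weightedSimplex d n).ncard * ∏ i, d i := by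
        rw [Nat.card_prod, Nat.card_pi, Nat.card_coe_set_eq]
        simp only [Nat.card_fin]

theorem finrank_restrictTotalDegree (R ι : Type*) [CommSemiring R] [StrongRankCondition R] (n : ℕ) :
    Module.finrank R (MvPolynomial.restrictTotalDegree ι R n) =
      (weightedSimplex (1 : ι → ℕ) n).ncard := by
  have hset : weightedSimplex (1 : ι → ℕ) n = {a : ι →₀ ℕ | (a.sum fun _ e => e) ≤ n} := by
    ext a
    simp [weightedSimplex, Finsupp.weight_apply]
  rw [hset]
  exact Module.finrank_eq_nat_card_basis (MvPolynomial.basisRestrictSupport R _)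

theorem homogeneousComponent_mul_of_isHomogeneous {σ R : Type*} [CommSemiring R]
    {p : MvPolynomial σ R} {d : ℕ} (hp : p.IsHomogeneous d) (g : MvPolynomial σ R) (n : ℕ) :
    MvPolynomial.homogeneousComponent n (g * p) =
      if d ≤ n then MvPolynomial.homogeneousComponent (n - d) g * p else 0 := by
  let _ : GradedAlgebra (MvPolynomial.homogeneousSubmodule σ R) := MvPolynomial.gradedAlgebra
  simp only [← MvPolynomial.decomposition.decompose'_apply]
  exact DirectSum.coe_decompose_mul_of_right_mem (MvPolynomial.homogeneousSubmodule σ R) n hp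

section
variable {σ κ R : Type*} [CommSemiring R] {p : κ → MvPolynomial σ R} {d : κ → ℕ}

theorem mem_span_totalDegree_lt_of_mem_span (hp : ∀ j, (p j).IsHomogeneous (d j))
    (hd : ∀ j, d j ≠ 0) {n : ℕ} {q : MvPolynomial σ R} (hq : q.IsHomogeneous n)
    (hqp : q ∈ Ideal.span (Set.range p)) :
    q ∈ Submodule.span (Algebra.adjoin R (Set.range p))
      {f : MvPolynomial σ R | f.totalDegree < n} := by
  obtain ⟨g, rfl⟩ := Finsupp.mem_ideal_span_range_iff_exists_finsupp.1 hqp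
  rw [← MvPolynomial.homogeneousComponent_eq_self hq, Finsupp.sum, map_sum]
  refine Submodule.sum_mem _ fun j _ => ?_
  rw [homogeneousComponent_mul_of_isHomogeneous (hp j)]
  split_ifs with hjn
  · have hdeg : (MvPolynomial.homogeneousComponent (n - d j) (g j)).totalDegree < n :=
      (MvPolynomial.homogeneousComponent_isHomogeneous (n - d j) (g j)).totalDegree_le.trans_lt
        (by have := hd j; omega)
    rw [mul_comm]
    exact Submodule.smul_mem _ (⟨p j, Algebra.subset_adjoin ⟨j, rfl⟩⟩ :
      Algebra.adjoin R (Set.range p)) (Submodule.subset_span hdeg)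
  · exact Submodule.zero_mem _

theorem monomial_mem_span_of_X_pow_mem_span (hp : ∀ j, (p j).IsHomogeneous (d j))
    (hd : ∀ j, d j ≠ 0) {e : σ →₀ ℕ}
    (he : ∀ i, MvPolynomial.X i ^ e i ∈ Ideal.span (Set.range p)) (a : σ →₀ ℕ) (c : R) :
    MvPolynomial.monomial a c ∈ Submodule.span (Algebra.adjoin R (Set.range p))
      ((fun b => MvPolynomial.monomial b (1 : R)) '' Set.Iic e) := by
  set M := Submodule.span (Algebra.adjoin R (Set.range p))
    ((fun b => MvPolynomial.monomial b (1 : R)) '' Set.Iic e)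
  induction hn : a.degree using Nat.strong_induction_on generalizing a c with
  | _ n ih =>
    by_cases hae : a ≤ e
    · have hsmul := Submodule.smul_mem M (algebraMap R (Algebra.adjoin R (Set.range p)) c)
        (Submodule.subset_span ⟨a, hae, rfl⟩)
      rwa [algebraMap_smul, MvPolynomial.smul_monomial, smul_eq_mul, mul_one] at hsmul
    · obtain ⟨i, hi⟩ : ∃ i, e i < a i := by simpa [Finsupp.le_def] using hae
      have hmem : MvPolynomial.monomial a c ∈ Ideal.span (Set.range p) := by
        refine Ideal.mem_of_dvd _ ?_ (he i)
        rw [MvPolynomial.X_pow_eq_monomial, MvPolynomial.monomial_dvd_monomial]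
        exact ⟨Or.inr (by simpa using hi.le), one_dvd c⟩
      refine Submodule.span_le.2 ?_ <|
        mem_span_totalDegree_lt_of_mem_span hp hd (MvPolynomial.isHomogeneous_monomial c hn) hmem
      intro f hf
      rw [SetLike.mem_coe, f.as_sum]
      refine Submodule.sum_mem _ fun b hb => ih _ ?_ b _ rfl
      exact (MvPolynomial.le_totalDegree hb).trans_lt hf

theorem finite_adjoin_of_X_pow_mem_span [Finite σ] (hp : ∀ j, (p j).IsHomogeneous (d j))
    (hd : ∀ j, d j ≠ 0) (h : ∀ i, ∃ n, MvPolynomial.X i ^ n ∈ Ideal.span (Set.range p)) :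
    Module.Finite (Algebra.adjoin R (Set.range p)) (MvPolynomial σ R) := by
  choose e he using h
  let e' : σ →₀ ℕ := Finsupp.equivFunOnFinite.symm e
  refine ⟨Submodule.fg_def.2 ⟨(fun b => MvPolynomial.monomial b 1) '' Set.Iic e',
    (Set.finite_Iic e').image _, eq_top_iff.2 fun f _ => ?_⟩⟩
  rw [f.as_sum]
  exact Submodule.sum_mem _ fun a _ => monomial_mem_span_of_X_pow_mem_span hp hd he a _

end

theorem exists_X_pow_mem_span {K σ κ : Type*} [Field K] [IsAlgClosed K] [Finite σ]
    {p : κ → MvPolynomial σ K} (h₀ : ∀ x, (∀ j, MvPolynomial.eval x (p j) = 0) → x = 0) (i : σ) :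
    ∃ n, MvPolynomial.X i ^ n ∈ Ideal.span (Set.range p) := by
  have hX : MvPolynomial.X i ∈ (Ideal.span (Set.range p)).radical := by
    rw [← MvPolynomial.vanishingIdeal_zeroLocus_eq_radical (K := K),
      MvPolynomial.zeroLocus_span, MvPolynomial.mem_vanishingIdeal_iff]
    intro x hx
    rw [h₀ x fun j => hx _ ⟨j, rfl⟩, MvPolynomial.aeval_X, Pi.zero_apply]
  exact hX

theorem linearIndependent_pow_of_isIntegral {A B : Type*} [CommRing A] [IsDomain A]
    [IsIntegrallyClosed A] [CommRing B] [IsDomain B] [Algebra A B] [Module.IsTorsionFree A B]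
    {b : B} (hb : IsIntegral A b) :
    LinearIndependent A fun i : Fin (minpoly A b).natDegree => b ^ (i : ℕ) := by
  let P := Algebra.adjoin.powerBasis' hb
  have hbasis : (Algebra.adjoin A {b}).val.toLinearMap ∘ P.basis =
      fun i : Fin P.dim => b ^ (i : ℕ) := by
    funext i
    rw [Function.comp_apply, P.basis_eq_pow, AlgHom.toLinearMap_apply, map_pow]
    simp [P]
  have hP := P.basis.linearIndependent.map' (Algebra.adjoin A {b}).val.toLinearMap
    (LinearMap.ker_eq_bot.2 Subtype.val_injective)
  rwa [hbasis] at hP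

theorem isIntegrallyClosed_adjoin_of_algebraicIndependent {K κ B : Type*} [Field K] [CommRing B]
    [Algebra K B] {p : κ → B} (hp : AlgebraicIndependent K p) :
    IsIntegrallyClosed (Algebra.adjoin K (Set.range p)) :=
  .of_equiv hp.aevalEquiv.toRingEquiv

theorem algebraicIndependent_of_isIntegral_adjoin {K ι : Type*} [Field K] [Finite ι]
    {p : ι → MvPolynomial ι K}
    [Algebra.IsIntegral (Algebra.adjoin K (Set.range p)) (MvPolynomial ι K)] :
    AlgebraicIndependent K p :=
  (Algebra.IsAlgebraic.isTranscendenceBasis_of_lift_le_trdeg_of_finite K p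
    (by simp [MvPolynomial.trdeg_of_isDomain])).1

theorem linearIndependent_aeval_monomial_mul_pow {K κ B : Type*} [Field K] [CommRing B]
    [IsDomain B] [Algebra K B] {p : κ → B} (hp : AlgebraicIndependent K p) {b : B}
    (hb : IsIntegral (Algebra.adjoin K (Set.range p)) b) :
    LinearIndependent K
      fun x : (κ →₀ ℕ) × Fin (minpoly (Algebra.adjoin K (Set.range p)) b).natDegree =>
        MvPolynomial.aeval p (MvPolynomial.monomial x.1 (1 : K)) * b ^ (x.2 : ℕ) := by
  have := isIntegrallyClosed_adjoin_of_algebraicIndependent hp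
  have hmonomial :=
    ((MvPolynomial.basisMonomials κ K).map hp.aevalEquiv.toLinearEquiv).linearIndependent
  have hprod := linearIndependent_smul hmonomial (linearIndependent_pow_of_isIntegral hb)
  simpa [Algebra.smul_def] using hprod

theorem totalDegree_ne_zero_of_algebraicIndependent {σ κ R : Type*} [CommRing R] [Nontrivial R]
    {p : κ → MvPolynomial σ R} (hp : AlgebraicIndependent R p) (j : κ) :
    (p j).totalDegree ≠ 0 := by
  intro h
  rw [MvPolynomial.totalDegree_eq_zero_iff_eq_C] at h
  exact hp.transcendental j (h ▸ isAlgebraic_algebraMap _)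

theorem totalDegree_aeval_monomial_le {σ κ R : Type*} [CommSemiring R] (p : κ → MvPolynomial σ R)
    (a : κ →₀ ℕ) :
    (MvPolynomial.aeval p (MvPolynomial.monomial a (1 : R))).totalDegree ≤
      Finsupp.weight (fun j => (p j).totalDegree) a := by
  rw [MvPolynomial.aeval_monomial, map_one, one_mul, Finsupp.prod, Finsupp.weight_apply]
  refine (MvPolynomial.totalDegree_finsetProd _ _).trans ?_
  exact Finset.sum_le_sum fun j _ => MvPolynomial.totalDegree_pow _ _

theorem ncard_weightedSimplex_mul_natDegree_minpoly_le {K σ κ : Type*} [Field K] [Finite σ]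
    [Finite κ] {p : κ → MvPolynomial σ K} (hp : AlgebraicIndependent K p) {b : MvPolynomial σ K}
    (hb : IsIntegral (Algebra.adjoin K (Set.range p)) b) (n : ℕ) :
    (weightedSimplex (fun j => (p j).totalDegree) n).ncard *
        (minpoly (Algebra.adjoin K (Set.range p)) b).natDegree ≤
      (weightedSimplex (1 : σ → ℕ)
        (n + (minpoly (Algebra.adjoin K (Set.range p)) b).natDegree * b.totalDegree)).ncard := by
  let N := (minpoly (Algebra.adjoin K (Set.range p)) b).natDegree
  let W := weightedSimplex (fun j => (p j).totalDegree) n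
  let V := MvPolynomial.restrictTotalDegree σ K (n + N * b.totalDegree)
  let v (x : W × Fin N) : MvPolynomial σ K :=
    MvPolynomial.aeval p (MvPolynomial.monomial x.1.1 (1 : K)) * b ^ (x.2 : ℕ)
  have hvV (x : W × Fin N) : v x ∈ V := by
    rw [MvPolynomial.mem_restrictTotalDegree]
    refine (MvPolynomial.totalDegree_mul _ _).trans (Nat.add_le_add ?_ ?_)
    · exact (totalDegree_aeval_monomial_le p x.1.1).trans x.1.2
    · exact (MvPolynomial.totalDegree_pow _ _).trans (Nat.mul_le_mul_right _ x.2.2.le)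
  have hv : LinearIndependent K fun x => (⟨v x, hvV x⟩ : V) :=
    .of_comp V.subtype <| (linearIndependent_aeval_monomial_mul_pow hp hb).comp
      (Prod.map Subtype.val id) (Subtype.val_injective.prodMap Function.injective_id)
  have := (weightedSimplex_finite (totalDegree_ne_zero_of_algebraicIndependent hp) n).fintype
  calc W.ncard * N = Fintype.card (W × Fin N) := by
        rw [Fintype.card_prod, Fintype.card_fin, ← Nat.card_eq_fintype_card, Nat.card_coe_set_eq]
    _ ≤ Module.finrank K V := hv.fintype_card_le_finrank
    _ = (weightedSimplex (1 : σ → ℕ) (n + N * b.totalDegree)).ncard :=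
      finrank_restrictTotalDegree K σ _

theorem natDegree_minpoly_le_prod_totalDegree {K ι : Type*} [Field K] [Fintype ι]
    {p : ι → MvPolynomial ι K}
    [Algebra.IsIntegral (Algebra.adjoin K (Set.range p)) (MvPolynomial ι K)]
    (b : MvPolynomial ι K) :
    (minpoly (Algebra.adjoin K (Set.range p)) b).natDegree ≤ ∏ j, (p j).totalDegree := by
  let N := (minpoly (Algebra.adjoin K (Set.range p)) b).natDegree
  have hp : AlgebraicIndependent K p := algebraicIndependent_of_isIntegral_adjoin
  have hone (i : ι) : (1 : ι → ℕ) i ≠ 0 := one_ne_zero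
  refine le_of_forall_mul_le_mul_of_le_pow (c := N * b.totalDegree)
    (ncard_weightedSimplex_ne_zero hone 0) (ncard_weightedSimplex_le_pow hone) fun n => ?_
  let W := weightedSimplex (fun j => (p j).totalDegree) n
  calc N * (weightedSimplex (1 : ι → ℕ) n).ncard
      ≤ N * (W.ncard * ∏ j, (p j).totalDegree) := by
        gcongr
        exact ncard_weightedSimplex_one_le (totalDegree_ne_zero_of_algebraicIndependent hp) n
    _ = (∏ j, (p j).totalDegree) * (W.ncard * N) := by ring
    _ ≤ (∏ j, (p j).totalDegree) *
          (weightedSimplex (1 : ι → ℕ) (n + N * b.totalDegree)).ncard := by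
        gcongr
        exact ncard_weightedSimplex_mul_natDegree_minpoly_le hp
          (Algebra.IsIntegral.isIntegral b) n

theorem card_le_natDegree_minpoly {A B S α : Type*} [CommRing A] [CommRing B] [Algebra A B]
    [CommRing S] [IsDomain S] {b : B} (hb : IsIntegral A b) {ψ : A →+* S} {φ : α → B →+* S}
    {s : Finset α} (hφ : ∀ x ∈ s, (φ x).comp (algebraMap A B) = ψ)
    (hinj : Set.InjOn (fun x => φ x b) s) : s.card ≤ (minpoly A b).natDegree := by
  let P := (minpoly A b).map ψ
  have hP : P ≠ 0 := ((minpoly.monic hb).map ψ).ne_zero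
  have hroot : ∀ x ∈ s, φ x b ∈ P.roots.toFinset := fun x hx => by
    rw [Multiset.mem_toFinset, mem_roots hP, IsRoot, eval_map, ← hφ x hx, ← hom_eval₂,
      ← aeval_def, minpoly.aeval, map_zero]
  calc s.card ≤ P.roots.toFinset.card := Finset.card_le_card_of_injOn _ hroot hinj
    _ ≤ P.roots.card := Multiset.toFinset_card_le _
    _ ≤ (minpoly A b).natDegree := card_roots_map_le_natDegree _

theorem exists_injOn_eval {K ι : Type*} [Field K] [Infinite K] [Finite ι] (s : Finset (ι → K)) :
    ∃ l : MvPolynomial ι K, Set.InjOn (fun x => MvPolynomial.eval x l) s := by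
  have := Fintype.ofFinite ι
  obtain ⟨f, hf⟩ := Module.exists_dual_forall_apply_ne_zero (K := K)
    (fun q : {q : s × s // q.1 ≠ q.2} => (q.1.1 : ι → K) - q.1.2)
    fun q => sub_ne_zero.2 (Subtype.coe_ne_coe.2 q.2)
  refine ⟨Matrix.toMvPolynomial (LinearMap.toMatrix' (LinearMap.pi fun _ : Unit => f)) (),
    fun x hx y hy hxy => ?_⟩
  by_contra hne
  refine hf ⟨(⟨x, hx⟩, ⟨y, hy⟩), fun h => hne (congrArg Subtype.val h)⟩ ?_
  simpa [Matrix.toMvPolynomial_eval_eq_apply, sub_eq_zero] using hxy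

theorem card_le_prod_totalDegree {K ι : Type*} [Field K] [Infinite K] [Fintype ι]
    {p : ι → MvPolynomial ι K}
    [Algebra.IsIntegral (Algebra.adjoin K (Set.range p)) (MvPolynomial ι K)] {c : ι → K}
    {s : Finset (ι → K)} (hs : ∀ x ∈ s, ∀ j, MvPolynomial.eval x (p j) = c j) :
    s.card ≤ ∏ j, (p j).totalDegree := by
  obtain rfl | ⟨x₀, hx₀⟩ := s.eq_empty_or_nonempty
  · simp
  obtain ⟨l, hl⟩ := exists_injOn_eval s
  let evalRestrict (x : ι → K) : Algebra.adjoin K (Set.range p) →ₐ[K] K :=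
    (MvPolynomial.aeval x).comp (Subalgebra.val _)
  have heval : ∀ x ∈ s, evalRestrict x = evalRestrict x₀ := by
    refine fun x hx => AlgHom.adjoin_ext ?_
    rintro _ ⟨j, rfl⟩
    exact (hs x hx j).trans (hs x₀ hx₀ j).symm
  calc s.card ≤ (minpoly (Algebra.adjoin K (Set.range p)) l).natDegree :=
        card_le_natDegree_minpoly (Algebra.IsIntegral.isIntegral l)
          (fun x hx => congrArg AlgHom.toRingHom (heval x hx)) hl
    _ ≤ ∏ j, (p j).totalDegree := natDegree_minpoly_le_prod_totalDegree l

theorem encard_fiber_le_prod_totalDegree {K ι : Type*} [Field K] [IsAlgClosed K] [Fintype ι]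
    {p : ι → MvPolynomial ι K} {d : ι → ℕ} (hp : ∀ j, (p j).IsHomogeneous (d j))
    (hd : ∀ j, d j ≠ 0) (h₀ : ∀ x, (∀ j, MvPolynomial.eval x (p j) = 0) → x = 0) (c : ι → K) :
    {x | ∀ j, MvPolynomial.eval x (p j) = c j}.encard ≤ ↑(∏ j, (p j).totalDegree) := by
  have := IsAlgClosed.instInfinite (K := K)
  have := finite_adjoin_of_X_pow_mem_span hp hd (exists_X_pow_mem_span h₀)
  by_contra! hlt
  obtain ⟨t, ht, htcard⟩ := Set.exists_subset_encard_eq (Order.add_one_le_of_lt hlt)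
  lift t to Finset (ι → K) using
    Set.encard_ne_top_iff.1 (htcard ▸ ENat.natCast_ne_top (∏ j, (p j).totalDegree + 1))
  have hcard := card_le_prod_totalDegree fun x hx => ht hx
  rw [Set.encard_coe_eq_coe_finsetCard] at htcard
  have : t.card = ∏ j, (p j).totalDegree + 1 := by exact_mod_cast htcard
  omega

/-- The weighted power sum `∑ i, m i * X i ^ k`,
whose values are the left-hand sides of the system. -/
noncomputable def weightedPowerSum {R ι : Type*} [CommSemiring R] [Fintype ι] (m : ι → R)
    (k : ℕ) : MvPolynomial ι R :=
  ∑ i, MvPolynomial.C (m i) * MvPolynomial.X i ^ k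

namespace weightedPowerSum
variable {R ι : Type*} [CommSemiring R] [Fintype ι]

theorem eval_eq (m x : ι → R) (k : ℕ) :
    MvPolynomial.eval x (weightedPowerSum m k) = ∑ i, m i * x i ^ k := by
  simp [weightedPowerSum]

theorem isHomogeneous (m : ι → R) (k : ℕ) : (weightedPowerSum m k).IsHomogeneous k :=
  .sum _ _ _ fun i _ => MvPolynomial.isHomogeneous_C_mul_X_pow (m i) i k

end weightedPowerSum

theorem encard_weightedPowerSum_fiber_le {K : Type*} [Field K] [IsAlgClosed K] {r : ℕ}
    {m : Fin r → K} (hm : ∀ S : Finset (Fin r), S.Nonempty → ∑ i ∈ S, m i ≠ 0) (c : Fin r → K) :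
    {x : Fin r → K | ∀ j : Fin r, ∑ i, m i * x i ^ ((j : ℕ) + 1) = c j}.encard ≤ r.factorial := by
  let p (j : Fin r) := weightedPowerSum m (j + 1)
  have hp (j : Fin r) : (p j).IsHomogeneous (j + 1) := weightedPowerSum.isHomogeneous m _
  have hdeg : ∏ j, (p j).totalDegree ≤ r.factorial := calc
    ∏ j, (p j).totalDegree ≤ ∏ j : Fin r, ((j : ℕ) + 1) :=
      Finset.prod_le_prod' fun j _ => (hp j).totalDegree_le
    _ = r.factorial := by
      rw [Fin.prod_univ_eq_prod_range (· + 1), Finset.prod_range_add_one_eq_factorial]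
  have hfiber := encard_fiber_le_prod_totalDegree hp (fun _ => Nat.succ_ne_zero _)
    (fun x hx => eq_zero_of_sum_mul_pow_eq_zero hm fun j hj => by
      simpa [p, weightedPowerSum.eval_eq] using hx ⟨j, by simpa using hj⟩) c
  simp only [p, weightedPowerSum.eval_eq] at hfiber
  exact hfiber.trans (by exact_mod_cast hdeg)

theorem weighted_power_sums_finite_solutions_general (R : Type*) [CommRing R] [IsDomain R] (r : ℕ)
    (m c : Fin r → R) (hm : ∀ S : Finset (Fin r), S.Nonempty → ∑ i ∈ S, m i ≠ 0) :
    {x : Fin r → R | ∀ j : Fin r, ∑ i, m i * x i ^ ((j : ℕ) + 1) = c j}.Finite ∧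
      {x : Fin r → R | ∀ j : Fin r, ∑ i, m i * x i ^ ((j : ℕ) + 1) = c j}.ncard
        ≤ Nat.factorial r := by
  let φ := (algebraMap (FractionRing R) (AlgebraicClosure (FractionRing R))).comp
    (algebraMap R (FractionRing R))
  have hφ : Function.Injective φ :=
    (algebraMap (FractionRing R) _).injective.comp (IsFractionRing.injective R _)
  have hm' : ∀ S : Finset (Fin r), S.Nonempty → ∑ i ∈ S, φ (m i) ≠ 0 := fun S hS => by
    rw [← map_sum]
    exact (map_ne_zero_iff φ hφ).2 (hm S hS)
  rw [← Set.encard_le_coe_iff_finite_ncard_le]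
  refine (Set.encard_le_encard_of_injOn (f := fun x => φ ∘ x) (fun x hx j => ?_)
    hφ.comp_left.injOn).trans (encard_weightedPowerSum_fiber_le hm' (φ ∘ c))
  simp only [Function.comp_apply, ← hx j, map_sum, map_mul, map_pow]

/-- Proposition 3.4 of Bhargava's paper. Let `L` be a field and `m_1, ..., m_r ∈ L` be
such that no nonempty subset of `{m_1,...,m_r}` sums to zero, and let
`c_1, ..., c_r ∈ L` be arbitrary. Then the system of equations
`m_1 x_1^j + ... + m_r x_r^j = c_j` (`j = 1, ..., r`) has only finitely many solutions
in `L`; in fact at most `r!`. -/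
theorem weighted_power_sums_finite_solutions (L : Type*) [Field L] (r : ℕ) (hr : 1 ≤ r)
    (m c : Fin r → L)
    (hm : ∀ S : Finset (Fin r), S.Nonempty → ∑ i ∈ S, m i ≠ 0) :
    {x : Fin r → L | ∀ j : Fin r, ∑ i, m i * x i ^ ((j : ℕ) + 1) = c j}.Finite ∧
      {x : Fin r → L | ∀ j : Fin r, ∑ i, m i * x i ^ ((j : ℕ) + 1) = c j}.ncard
        ≤ Nat.factorial r :=
  weighted_power_sums_finite_solutions_general L r m c hm
end

section
/- Let K be a field whose characteristic is zero or greater than n (so that the characteristic is prime to n!), and let 1 ≤ k ≤ n-1. Fix a_1, ..., a_{n-k} ∈ K. Then the number of tuples (a_{n-k+1}, ..., a_n) ∈ K^k such that the polynomial P(x) = x^n + a_1 x^{n-1} + ... + a_n has index exactly k over K is at most q(k, n-k) · (n-k)!, where q(k, n-k) denotes the number of partitions of k into at most n-k parts. -/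
open scoped Classical
open Polynomial

/-- The index of a polynomial `P` over a field `K`: writing `P = ∏ P_i^{e_i}` with the
`P_i` distinct irreducible of degree `f_i`, the index is `Σ (e_i - 1) f_i`; when the
irreducible factors of `P` are separable (e.g. in characteristic `0` or characteristic
greater than `deg P`) this equals `deg P` minus the number of distinct roots of `P` in
an algebraic closure of `K`. -/
noncomputable def polyIndexOver (K : Type*) [Field K] (P : Polynomial K) : ℕ :=
  P.natDegree - ((P.map (algebraMap K (AlgebraicClosure K))).roots.toFinset.card)

/-- The index over `𝔽_p` of the reduction modulo a prime `p` of the monic integer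
polynomial `x^n + a_1 x^{n-1} + ... + a_n`. -/
noncomputable def indexModP (p : ℕ) (hp : p.Prime) (n : ℕ) (a : Fin n → ℤ) : ℕ :=
  haveI : Fact p.Prime := ⟨hp⟩
  polyIndexOver (ZMod p)
    (X ^ n + ∑ i : Fin n, C ((a i : ZMod p)) * X ^ (n - 1 - (i : ℕ)))

/-!
Over an algebraic closure, a monic polynomial of degree `n` and index `k` is
`∏ (X - r_i)^{e_i}` with `m = n - k` distinct roots, and the numbers `e_i - 1` form a partition of
`k` into at most `m` parts. For fixed multiplicities, the `m` prescribed coefficients are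
polynomials of degrees `m, m - 1, …, 1` in the roots, and their Jacobian is invertible wherever the
roots are distinct because every `e_i ≤ k + 1` is nonzero in `K`. Bézout's inequality for
nondegenerate zeros then bounds the number of solutions by `m!`.

For Bézout's inequality, let `f` be a square system with finitely many chosen nondegenerate zeros
`p_i`, and let `h_i` be polynomials with `h_i(p_j) = δ_ij`. A relation `∑ b_i(f) h_i = 0` forces all
`b_i` to vanish: `f` is a local coordinate system at `p_j`, so if every `b_i` vanishes to order `d`
at the origin then the relation makes each of them vanish to order `d + 1`, and Krull's intersection
theorem applies. Hence `(b_i) ↦ ∑ b_i(f) h_i` is injective. Giving the `j`-th variable of `b_i` the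
weight `deg f_j` and counting dimensions, the number of zeros times the number of monomials of
weight at most `u` is at most `∏ deg f_j` times the number of monomials of weight at most `u + G`,
for a constant `G`; as these numbers grow polynomially in `u`, the number of zeros is at most
`∏ deg f_j`.
-/

section PointIdeal

variable {R σ : Type*} [CommRing R]

/-- The ideal of `R[x_i : i ∈ σ]` of polynomials vanishing at the rational point `s`.
Its powers measure the order of vanishing at `s`. -/
noncomputable abbrev pointIdeal (s : σ → R) : Ideal (MvPolynomial σ R) :=
  RingHom.ker (MvPolynomial.eval s)

/-- The Jacobian matrix `(∂f_j/∂x_i)` of a square polynomial system, evaluated at the point `s`;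
rows are indexed by the polynomials and columns by the variables. -/
noncomputable def jacobianAt (f : σ → MvPolynomial σ R) (s : σ → R) : Matrix σ σ R :=
  Matrix.of fun j i => MvPolynomial.eval s (MvPolynomial.pderiv i (f j))

lemma pointIdeal_pow_le_comap_bind₁ {g : σ → MvPolynomial σ R} {r s : σ → R}
    (hg : ∀ i, MvPolynomial.eval s (g i) = r i) (d : ℕ) :
    pointIdeal r ^ d ≤ (pointIdeal s ^ d).comap (MvPolynomial.bind₁ g) := by
  refine (Ideal.pow_right_mono (fun x hx => ?_) d).trans (Ideal.le_comap_pow _ d)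
  have heval := MvPolynomial.eval₂Hom_bind₁ (RingHom.id R) s g x
  obtain rfl : (fun i => MvPolynomial.eval s (g i)) = r := funext hg
  exact heval.trans hx

lemma sub_linearization_mem_pointIdeal_sq [Fintype σ] (s : σ → R) (p : MvPolynomial σ R) :
    p - (MvPolynomial.C (MvPolynomial.eval s p) +
      ∑ i, MvPolynomial.C (MvPolynomial.eval s (MvPolynomial.pderiv i p)) *
        (MvPolynomial.X i - MvPolynomial.C (s i))) ∈ pointIdeal s ^ 2 := by
  induction p using MvPolynomial.induction_on with
  | C a => simp
  | add p q hp hq =>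
    convert add_mem hp hq using 1
    simp only [map_add, add_mul, Finset.sum_add_distrib]
    ring
  | mul_X p k hp =>
    set L := ∑ i, MvPolynomial.C (MvPolynomial.eval s (MvPolynomial.pderiv i p)) *
        (MvPolynomial.X i - MvPolynomial.C (s i)) with hL
    have hX (i : σ) : MvPolynomial.X i - MvPolynomial.C (s i) ∈ pointIdeal s := by
      simp [pointIdeal, RingHom.mem_ker]
    have hLmem : L ∈ pointIdeal s := sum_mem fun i _ => Ideal.mul_mem_left _ _ (hX i)
    have hcross : L * (MvPolynomial.X k - MvPolynomial.C (s k)) ∈ pointIdeal s ^ 2 :=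
      sq (pointIdeal s) ▸ Ideal.mul_mem_mul hLmem (hX k)
    have hlin : ∑ i, MvPolynomial.C (MvPolynomial.eval s
          (MvPolynomial.pderiv i (p * MvPolynomial.X k))) *
            (MvPolynomial.X i - MvPolynomial.C (s i)) =
        L * MvPolynomial.C (s k) + MvPolynomial.C (MvPolynomial.eval s p) *
          (MvPolynomial.X k - MvPolynomial.C (s k)) := by
      simp only [Derivation.leibniz, MvPolynomial.pderiv_X, smul_eq_mul, map_add, map_mul,
        MvPolynomial.eval_X, add_mul, Finset.sum_add_distrib, hL, Finset.sum_mul]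
      rw [Finset.sum_eq_single k (fun i _ hi => by simp [hi.symm]) (by simp)]
      rw [Pi.single_eq_same, map_one, map_one, mul_one, add_comm]
      exact congrArg (· + _) (Finset.sum_congr rfl fun i _ => by ring)
    convert add_mem (Ideal.mul_mem_right (MvPolynomial.X k) _ hp) hcross using 1
    rw [hlin, map_mul, MvPolynomial.eval_X, MvPolynomial.C_mul]
    ring

variable {F : Type*} [Field F]

lemma isCoprime_pointIdeal {r s : σ → F} (h : r ≠ s) :
    IsCoprime (pointIdeal r) (pointIdeal s) := by
  obtain ⟨i, hi⟩ := Function.ne_iff.mp h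
  have hmax (t : σ → F) : (pointIdeal t).IsMaximal :=
    RingHom.ker_isMaximal_of_surjective _ fun a => ⟨MvPolynomial.C a, MvPolynomial.eval_C a⟩
  have := hmax r
  have := hmax s
  refine Ideal.isCoprime_of_isMaximal fun heq => hi ?_
  have hmem : MvPolynomial.X i - MvPolynomial.C (r i) ∈ pointIdeal s :=
    heq ▸ by simp [pointIdeal, RingHom.mem_ker]
  simpa [pointIdeal, RingHom.mem_ker, sub_eq_zero, eq_comm] using hmem

lemma exists_eval_eq_ite {ι : Type*} [Finite ι] [DecidableEq ι] {p : ι → σ → F}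
    (hp : Function.Injective p) (i : ι) :
    ∃ h : MvPolynomial σ F, ∀ j, MvPolynomial.eval (p j) h = if i = j then 1 else 0 := by
  obtain ⟨h, hh⟩ := Ideal.exists_forall_sub_mem_ideal (I := fun j => pointIdeal (p j))
    (fun _ _ hij => isCoprime_pointIdeal (hp.ne hij))
    (fun j => if i = j then 1 else 0)
  refine ⟨h, fun j => ?_⟩
  have := sub_eq_zero.mp ((map_sub (MvPolynomial.eval (p j)) _ _).symm.trans (hh j))
  rw [this]
  split_ifs <;> simp

end PointIdeal

lemma sub_mem_pow_succ_of_sub_mem_sq {R : Type*} [CommRing R] {I : Ideal R} {χ : R →+* R}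
    (hχ : ∀ x, χ x - x ∈ I ^ 2) (d : ℕ) {x : R} (hx : x ∈ I ^ d) : χ x - x ∈ I ^ (d + 1) := by
  induction d generalizing x with
  | zero => exact Ideal.pow_le_pow_right one_le_two (hχ x)
  | succ d ih =>
    rw [pow_succ] at hx
    induction hx using Submodule.mul_induction_on' with
    | mem_mul_mem y hy z hz =>
      have hχy : χ y ∈ I ^ d := by
        simpa using add_mem (Ideal.pow_le_pow_right d.le_succ (ih hy)) hy
      have hsplit : χ (y * z) - y * z = χ y * (χ z - z) + (χ y - y) * z := by
        rw [map_mul]; ring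
      rw [hsplit]
      refine add_mem ?_ ?_
      · simpa only [← pow_add] using Ideal.mul_mem_mul hχy (hχ z)
      · simpa only [← pow_succ] using Ideal.mul_mem_mul (ih hy) hz
    | add y _ z _ hy hz =>
      rw [map_add, add_sub_add_comm]
      exact add_mem hy hz

section OrderOfVanishing

variable {F σ : Type*} [Field F] [Fintype σ] [DecidableEq σ]

lemma mem_pointIdeal_pow_succ_of_bind₁_mem {f : σ → MvPolynomial σ F} {s : σ → F}
    (hf : ∀ j, MvPolynomial.eval s (f j) = 0) (hJ : (jacobianAt f s).det ≠ 0) {d : ℕ}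
    {b : MvPolynomial σ F} (hb : b ∈ pointIdeal 0 ^ d)
    (hfb : MvPolynomial.bind₁ f b ∈ pointIdeal s ^ (d + 1)) : b ∈ pointIdeal 0 ^ (d + 1) := by
  set J := jacobianAt f s
  -- The first-order inverse `y ↦ s + J⁻¹ y` of `f` at `s`.
  let g (i : σ) : MvPolynomial σ F := MvPolynomial.C (s i) + J⁻¹.toMvPolynomial i
  have hg (d : ℕ) : pointIdeal s ^ d ≤ (pointIdeal 0 ^ d).comap (MvPolynomial.bind₁ g) :=
    pointIdeal_pow_le_comap_bind₁ (fun i => by simp [g]) d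
  have hlin (j : σ) : MvPolynomial.bind₁ g (∑ i, MvPolynomial.C (J j i) *
      (MvPolynomial.X i - MvPolynomial.C (s i))) = MvPolynomial.X j := by
    have hinv := Matrix.toMvPolynomial_mul J J⁻¹ j
    rw [Matrix.mul_nonsing_inv _ (isUnit_iff_ne_zero.mpr hJ), Matrix.toMvPolynomial_one] at hinv
    simp [hinv, Matrix.toMvPolynomial, g, ← MvPolynomial.C_mul_X_eq_monomial]
  have hgf (j : σ) : MvPolynomial.bind₁ g (f j) - MvPolynomial.X j ∈ pointIdeal 0 ^ 2 := by
    have := hg 2 (sub_linearization_mem_pointIdeal_sq s (f j))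
    rw [hf, map_zero, zero_add, Ideal.mem_comap, map_sub] at this
    rw [← hlin j]
    exact this
  let χ := (MvPolynomial.bind₁ g).comp (MvPolynomial.bind₁ f)
  have hχ (x : MvPolynomial σ F) : χ x - x ∈ pointIdeal 0 ^ 2 := by
    have hmk : (Ideal.Quotient.mkₐ F (pointIdeal (0 : σ → F) ^ 2)).comp χ =
        Ideal.Quotient.mkₐ F _ := by
      ext j
      simpa [χ] using (Ideal.Quotient.mk_eq_mk_iff_sub_mem _ _).mpr (hgf j)
    exact (Ideal.Quotient.mk_eq_mk_iff_sub_mem _ _).mp (DFunLike.congr_fun hmk x)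
  have hdiff : χ b - b ∈ pointIdeal 0 ^ (d + 1) :=
    sub_mem_pow_succ_of_sub_mem_sq (χ := χ.toRingHom) hχ d hb
  have hχb : χ b ∈ pointIdeal 0 ^ (d + 1) := hg (d + 1) hfb
  simpa using sub_mem hχb hdiff

lemma eq_zero_of_sum_bind₁_mul_eq_zero {ι : Type*} [Fintype ι] [DecidableEq ι] {p : ι → σ → F}
    {f : σ → MvPolynomial σ F} (hf : ∀ i j, MvPolynomial.eval (p i) (f j) = 0)
    (hJ : ∀ i, (jacobianAt f (p i)).det ≠ 0) {h : ι → MvPolynomial σ F}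
    (hh : ∀ i j, MvPolynomial.eval (p j) (h i) = if i = j then 1 else 0)
    {b : ι → MvPolynomial σ F} (hb : ∑ i, MvPolynomial.bind₁ f (b i) * h i = 0) : b = 0 := by
  have hpow (d : ℕ) : ∀ j, b j ∈ pointIdeal 0 ^ d := by
    induction d with
    | zero => simp
    | succ d ih =>
      intro j
      refine mem_pointIdeal_pow_succ_of_bind₁_mem (hf j) (hJ j) (ih j) ?_
      have hsum : ∑ i, MvPolynomial.bind₁ f (b i) * (h i - if i = j then 1 else 0) =
          -MvPolynomial.bind₁ f (b j) := by
        simp [mul_sub, hb]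
      rw [← neg_mem_iff, ← hsum, pow_succ]
      refine sum_mem fun i _ => Ideal.mul_mem_mul ?_ ?_
      · exact pointIdeal_pow_le_comap_bind₁ (hf j) d (ih i)
      · rw [RingHom.mem_ker, map_sub, hh]
        split_ifs <;> simp
  have hkrull : ⨅ d : ℕ, pointIdeal (0 : σ → F) ^ d = ⊥ :=
    Ideal.iInf_pow_eq_bot_of_isDomain _ (RingHom.ker_ne_top _)
  funext j
  rw [Pi.zero_apply, ← Ideal.mem_bot, ← hkrull, Ideal.mem_iInf]
  exact fun d => hpow d j

end OrderOfVanishing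

section WeightCount

variable {σ : Type*}

/-- The number of monomials of weighted degree at most `u` in variables of weights `w`.
It is the affine Hilbert function of the polynomial ring graded by `w`, the
usual grading being `w = 1`. -/
noncomputable def weightCount (w : σ → ℕ) (u : ℕ) : ℕ :=
  Nat.card {α : σ →₀ ℕ // Finsupp.weight w α ≤ u}

lemma finite_weight_le [Finite σ] {w : σ → ℕ} (hw : ∀ j, 0 < w j) (u : ℕ) :
    Finite {α : σ →₀ ℕ // Finsupp.weight w α ≤ u} :=
  Finsupp.finite_of_nat_weight_le w (fun j => (hw j).ne') u

lemma weightCount_pos [Finite σ] {w : σ → ℕ} (hw : ∀ j, 0 < w j) (u : ℕ) : 0 < weightCount w u :=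
  have := finite_weight_le hw u
  have : Nonempty {α : σ →₀ ℕ // Finsupp.weight w α ≤ u} := ⟨0, by simp⟩
  Nat.card_pos

lemma finrank_restrictSupport_weight_le (R : Type*) [CommRing R] [Nontrivial R] (w : σ → ℕ)
    (u : ℕ) :
    Module.finrank R (MvPolynomial.restrictSupport R {α | Finsupp.weight w α ≤ u}) =
      weightCount w u :=
  Module.finrank_eq_nat_card_basis (MvPolynomial.basisRestrictSupport R _)

lemma finite_restrictSupport_weight_le (R : Type*) [CommSemiring R] [Finite σ] {w : σ → ℕ}
    (hw : ∀ j, 0 < w j) (u : ℕ) :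
    Module.Finite R (MvPolynomial.restrictSupport R {α | Finsupp.weight w α ≤ u}) :=
  have : Finite {α | Finsupp.weight w α ≤ u} := finite_weight_le hw u
  .of_basis (MvPolynomial.basisRestrictSupport R _)

variable [Fintype σ]

lemma weightCount_le_pow {w : σ → ℕ} (hw : ∀ j, 0 < w j) (u : ℕ) :
    weightCount w u ≤ (u + 1) ^ Fintype.card σ := by
  let toFin (α : {α : σ →₀ ℕ // Finsupp.weight w α ≤ u}) (j : σ) : Fin (u + 1) :=
    ⟨α.1 j, Nat.lt_succ_of_le ((Finsupp.le_weight w (hw j).ne' α.1).trans α.2)⟩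
  have hinj : Function.Injective toFin := fun α β h => Subtype.ext <| Finsupp.ext fun j =>
    congrArg Fin.val (congrFun h j)
  simpa [weightCount] using Nat.card_le_card_of_injective toFin hinj

lemma weightCount_one_le_prod_mul {w : σ → ℕ} (hw : ∀ j, 0 < w j) (u : ℕ) :
    weightCount (1 : σ → ℕ) u ≤ (∏ j, w j) * weightCount w u := by
  have := finite_weight_le hw u
  let quot (α : σ →₀ ℕ) : σ →₀ ℕ := Finsupp.equivFunOnFinite.symm fun j => α j / w j
  have hquot (α : σ →₀ ℕ) : Finsupp.weight w (quot α) ≤ Finsupp.weight 1 α := by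
    simp only [Finsupp.weight_eq_sum, quot, Finsupp.equivFunOnFinite_symm_apply_apply,
      smul_eq_mul, Pi.one_apply, mul_one]
    exact Finset.sum_le_sum fun j _ => Nat.div_mul_le_self _ _
  let divMod (α : {α : σ →₀ ℕ // Finsupp.weight 1 α ≤ u}) :
      (∀ j, Fin (w j)) × {α : σ →₀ ℕ // Finsupp.weight w α ≤ u} :=
    (fun j => ⟨α.1 j % w j, Nat.mod_lt _ (hw j)⟩, ⟨quot α.1, (hquot α.1).trans α.2⟩)
  have hinj : Function.Injective divMod := by
    refine fun α β h => Subtype.ext <| Finsupp.ext fun j => ?_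
    have hmod : α.1 j % w j = β.1 j % w j := congrArg (fun x => (x.1 j : ℕ)) h
    have hdiv : α.1 j / w j = β.1 j / w j := congrArg (fun x => x.2.1 j) h
    rw [← Nat.div_add_mod (α.1 j) (w j), hmod, hdiv, Nat.div_add_mod]
  simpa [weightCount, Nat.card_prod] using Nat.card_le_card_of_injective divMod hinj

end WeightCount

lemma le_of_forall_mul_le_mul_add {N : ℕ → ℕ} {a b G m : ℕ} (hN0 : 0 < N 0)
    (hN : ∀ u, N u ≤ (u + 1) ^ m) (h : ∀ u, a * N u ≤ b * N (u + G)) : a ≤ b := by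
  by_contra! hba
  have hiter (t : ℕ) : a ^ t * N 0 ≤ b ^ t * N (t * G) := by
    induction t with
    | zero => simp
    | succ t ih =>
      calc a ^ (t + 1) * N 0 = a * (a ^ t * N 0) := by ring
        _ ≤ a * (b ^ t * N (t * G)) := by gcongr
        _ = b ^ t * (a * N (t * G)) := by ring
        _ ≤ b ^ t * (b * N (t * G + G)) := Nat.mul_le_mul_left _ (h _)
        _ = b ^ (t + 1) * N ((t + 1) * G) := by ring_nf
  have hb : 0 < b := Nat.pos_of_ne_zero fun hb => by
    have := h 0
    rw [hb, zero_mul, nonpos_iff_eq_zero, mul_eq_zero] at this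
    omega
  have hbound (t : ℕ) (ht : 1 ≤ t) : a ^ t ≤ b ^ t * ((G + 1) ^ m * t ^ m) := by
    calc a ^ t ≤ a ^ t * N 0 := Nat.le_mul_of_pos_right _ hN0
      _ ≤ b ^ t * N (t * G) := hiter t
      _ ≤ b ^ t * (t * G + 1) ^ m := by gcongr; exact hN _
      _ ≤ b ^ t * ((G + 1) * t) ^ m := by gcongr; linarith
      _ = b ^ t * ((G + 1) ^ m * t ^ m) := by rw [mul_pow]
  have hlim := tendsto_pow_const_div_const_pow_of_one_lt m
    (r := (a / b : ℝ)) ((one_lt_div (by positivity)).mpr (by exact_mod_cast hba))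
  have hpos : (0 : ℝ) < 1 / (G + 1) ^ m := by positivity
  refine hpos.not_ge (ge_of_tendsto hlim ?_)
  filter_upwards [Filter.eventually_ge_atTop 1] with t ht
  have hbt : (a : ℝ) ^ t ≤ b ^ t * ((G + 1) ^ m * t ^ m) := by exact_mod_cast hbound t ht
  have ha : (0 : ℝ) < a := by exact_mod_cast hb.trans hba
  rw [div_pow, div_div_eq_mul_div, div_le_div_iff₀ (by positivity) (by positivity)]
  linarith

section Bezout

variable {R σ : Type*}

lemma totalDegree_bind₁_le_weightedTotalDegree [CommSemiring R] {f : σ → MvPolynomial σ R}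
    {w : σ → ℕ} (hf : ∀ j, (f j).totalDegree ≤ w j) (b : MvPolynomial σ R) :
    (MvPolynomial.bind₁ f b).totalDegree ≤ b.weightedTotalDegree w := by
  rw [MvPolynomial.bind₁, MvPolynomial.aeval_def, MvPolynomial.eval₂_eq]
  refine MvPolynomial.totalDegree_finsetSum_le fun α hα => ?_
  refine le_trans ?_ (MvPolynomial.le_weightedTotalDegree w hα)
  refine (MvPolynomial.totalDegree_mul _ _).trans ?_
  rw [MvPolynomial.algebraMap_eq, MvPolynomial.totalDegree_C, zero_add, Finsupp.weight_apply]
  refine (MvPolynomial.totalDegree_finsetProd _ _).trans (Finset.sum_le_sum fun j _ => ?_)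
  exact (MvPolynomial.totalDegree_pow _ _).trans (Nat.mul_le_mul_left _ (hf j))

lemma mem_restrictSupport_weight_le_iff [CommSemiring R] {w : σ → ℕ} {u : ℕ}
    {b : MvPolynomial σ R} :
    b ∈ MvPolynomial.restrictSupport R {α | Finsupp.weight w α ≤ u} ↔
      b.weightedTotalDegree w ≤ u := by
  simp [MvPolynomial.mem_restrictSupport_iff, MvPolynomial.weightedTotalDegree, Set.subset_def]

variable [Fintype σ] [DecidableEq σ]

lemma totalDegree_pos_of_det_jacobianAt_ne_zero [CommRing R] {f : σ → MvPolynomial σ R}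
    {s : σ → R} {j : σ} (hJ : (jacobianAt f s).det ≠ 0) : 0 < (f j).totalDegree := by
  refine Nat.pos_of_ne_zero fun hdeg => hJ (Matrix.det_eq_zero_of_row_eq_zero j fun i => ?_)
  rw [jacobianAt, Matrix.of_apply, MvPolynomial.totalDegree_eq_zero_iff_eq_C.mp hdeg]
  simp

variable {F ι : Type*} [Field F] [Fintype ι] {p : ι → σ → F} {f : σ → MvPolynomial σ F}

lemma exists_card_mul_weightCount_le (hp : Function.Injective p)
    (hf : ∀ i j, MvPolynomial.eval (p i) (f j) = 0) (hJ : ∀ i, (jacobianAt f (p i)).det ≠ 0)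
    {w : σ → ℕ} (hwpos : ∀ j, 0 < w j) (hw : ∀ j, (f j).totalDegree ≤ w j) :
    ∃ G, ∀ u, Fintype.card ι * weightCount w u ≤ weightCount (1 : σ → ℕ) (u + G) := by
  choose h hh using exists_eval_eq_ite hp
  refine ⟨Finset.univ.sup fun i => (h i).totalDegree, fun u => ?_⟩
  set G := Finset.univ.sup fun i => (h i).totalDegree
  have hmem (b : ι → MvPolynomial.restrictSupport F {α | Finsupp.weight w α ≤ u}) :
      ∑ i, MvPolynomial.bind₁ f (b i) * h i ∈
        MvPolynomial.restrictSupport F {α | Finsupp.weight 1 α ≤ u + G} := by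
    rw [mem_restrictSupport_weight_le_iff, MvPolynomial.weightedTotalDegree_one]
    refine MvPolynomial.totalDegree_finsetSum_le fun i _ => ?_
    refine (MvPolynomial.totalDegree_mul _ _).trans (add_le_add ?_ ?_)
    · exact (totalDegree_bind₁_le_weightedTotalDegree hw _).trans
        (mem_restrictSupport_weight_le_iff.mp (b i).2)
    · exact Finset.le_sup (f := fun i => (h i).totalDegree) (Finset.mem_univ i)
  let Φ : (ι → MvPolynomial.restrictSupport F {α | Finsupp.weight w α ≤ u}) →ₗ[F]
      MvPolynomial.restrictSupport F {α : σ →₀ ℕ | Finsupp.weight 1 α ≤ u + G} :=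
    { toFun b := ⟨∑ i, MvPolynomial.bind₁ f (b i) * h i, hmem b⟩
      map_add' b c := by ext1; simp [add_mul, Finset.sum_add_distrib]
      map_smul' a b := by ext1; simp [Finset.smul_sum] }
  have hΦ : Function.Injective Φ := by
    rw [injective_iff_map_eq_zero]
    intro b hb
    have hzero := eq_zero_of_sum_bind₁_mul_eq_zero hf hJ hh (congrArg Subtype.val hb)
    exact funext fun i => Subtype.ext (congrFun hzero i)
  have := finite_restrictSupport_weight_le F hwpos u
  have := finite_restrictSupport_weight_le F (w := (1 : σ → ℕ)) (fun _ => one_pos) (u + G)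
  have hle := LinearMap.finrank_le_finrank_of_injective hΦ
  rwa [finrank_restrictSupport_weight_le, Module.finrank_pi_fintype, Finset.sum_const,
    finrank_restrictSupport_weight_le, smul_eq_mul, Finset.card_univ] at hle

theorem card_le_prod_totalDegree_of_det_jacobianAt_ne_zero (hp : Function.Injective p)
    (hf : ∀ i j, MvPolynomial.eval (p i) (f j) = 0) (hJ : ∀ i, (jacobianAt f (p i)).det ≠ 0) :
    Fintype.card ι ≤ ∏ j, (f j).totalDegree := by
  rcases isEmpty_or_nonempty ι with _ | ⟨⟨i⟩⟩
  · simp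
  have hpos (j : σ) := totalDegree_pos_of_det_jacobianAt_ne_zero (j := j) (hJ i)
  obtain ⟨G, hG⟩ := exists_card_mul_weightCount_le hp hf hJ hpos (fun _ => le_rfl)
  exact le_of_forall_mul_le_mul_add (weightCount_pos hpos 0) (weightCount_le_pow hpos)
    fun u => (hG u).trans (weightCount_one_le_prod_mul hpos (u + G))

end Bezout

section ProdXSubCPow

variable {R S ι : Type*} [CommRing R] [CommRing S] [Fintype ι]

/-- The monic polynomial `∏ (X - r_i)^{e_i}` with roots `r_i` and multiplicities `e_i`. With
`r = MvPolynomial.X` it is the universal polynomial with these multiplicities. -/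
noncomputable def prodXSubCPow (e : ι → ℕ) (r : ι → R) : R[X] :=
  ∏ i, (X - C (r i)) ^ e i

lemma map_prodXSubCPow (φ : R →+* S) (e : ι → ℕ) (r : ι → R) :
    (prodXSubCPow e r).map φ = prodXSubCPow e (φ ∘ r) := by
  simp [prodXSubCPow, Polynomial.map_prod]

lemma monic_prodXSubCPow (e : ι → ℕ) (r : ι → R) : (prodXSubCPow e r).Monic :=
  monic_prod_of_monic _ _ fun i _ => (monic_X_sub_C (r i)).pow (e i)

lemma natDegree_prodXSubCPow [Nontrivial R] (e : ι → ℕ) (r : ι → R) :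
    (prodXSubCPow e r).natDegree = ∑ i, e i := by
  rw [prodXSubCPow, natDegree_prod_of_monic _ _ fun i _ => (monic_X_sub_C (r i)).pow (e i)]
  exact Finset.sum_congr rfl fun i _ => by
    rw [(monic_X_sub_C _).natDegree_pow, natDegree_X_sub_C, mul_one]

lemma prodXSubCPow_eq_multiset_prod (e : ι → ℕ) (r : ι → R) :
    prodXSubCPow e r = ((∑ i, e i • {r i} : Multiset R).map fun a => X - C a).prod := by
  rw [← Multiset.coe_mapAddMonoidHom, map_sum, Multiset.prod_sum]
  simp [prodXSubCPow, Multiset.map_nsmul, Multiset.prod_nsmul]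

end ProdXSubCPow

lemma totalDegree_esymm_le {R σ : Type*} [CommSemiring R]
    {s : Multiset (MvPolynomial σ R)} (hs : ∀ x ∈ s, x.totalDegree ≤ 1) (d : ℕ) :
    (s.esymm d).totalDegree ≤ d := by
  have hsum (t : Multiset (MvPolynomial σ R)) (ht : ∀ x ∈ t, x.totalDegree ≤ d) :
      t.sum.totalDegree ≤ d :=
    Multiset.sum_induction (fun x => x.totalDegree ≤ d) t
      (fun x y hx hy => (MvPolynomial.totalDegree_add x y).trans (max_le hx hy)) (by simp) ht
  refine hsum _ fun x hx => ?_
  obtain ⟨t, ht, rfl⟩ := Multiset.mem_map.mp hx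
  obtain ⟨hts, rfl⟩ := Multiset.mem_powersetCard.mp ht
  refine (MvPolynomial.totalDegree_multiset_prod t).trans ?_
  simpa using Multiset.sum_le_card_nsmul (t.map MvPolynomial.totalDegree) 1
    (by simpa using fun x hx => hs x (Multiset.mem_of_le hts hx))

section Universal

variable {R σ : Type*} [CommRing R] [Fintype σ]

lemma totalDegree_coeff_prodXSubCPow_X_le [Nontrivial R] (e : σ → ℕ) (c : ℕ) :
    ((prodXSubCPow e (MvPolynomial.X : σ → MvPolynomial σ R)).coeff c).totalDegree ≤
      (∑ i, e i) - c := by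
  rcases lt_or_ge (∑ i, e i) c with hc | hc
  · rw [coeff_eq_zero_of_natDegree_lt (by rwa [natDegree_prodXSubCPow]),
      MvPolynomial.totalDegree_zero]
    exact Nat.zero_le _
  set s : Multiset (MvPolynomial σ R) := ∑ i, e i • {MvPolynomial.X i} with hs
  have hcard : Multiset.card s = ∑ i, e i := by simp [hs]
  have hdeg : ∀ x ∈ s, x.totalDegree ≤ 1 := fun x hx => by
    obtain ⟨i, -, hi⟩ := Multiset.mem_sum.mp hx
    obtain rfl := Multiset.mem_singleton.mp (Multiset.mem_of_mem_nsmul hi)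
    exact (MvPolynomial.totalDegree_X i).le
  rw [prodXSubCPow_eq_multiset_prod, Multiset.prod_X_sub_C_coeff s (hcard ▸ hc), hcard]
  refine (MvPolynomial.totalDegree_mul _ _).trans ?_
  rw [← MvPolynomial.C_1, ← MvPolynomial.C_neg, ← MvPolynomial.C_pow, MvPolynomial.totalDegree_C,
    zero_add]
  exact totalDegree_esymm_le hdeg _

variable [DecidableEq σ]

lemma pderiv_coeff_prodXSubCPow_X (e : σ → ℕ) (i : σ) (c : ℕ) :
    MvPolynomial.pderiv i ((prodXSubCPow e (MvPolynomial.X : σ → MvPolynomial σ R)).coeff c) =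
      -(((e i : (MvPolynomial σ R)[X]) * (X - C (MvPolynomial.X i)) ^ (e i - 1) *
        ∏ l ∈ Finset.univ.erase i, (X - C (MvPolynomial.X l)) ^ e l).coeff c) := by
  let D : Derivation R (MvPolynomial σ R)[X] (MvPolynomial σ R)[X] :=
    PolynomialModule.equivPolynomialSelf.compDer (MvPolynomial.pderiv i).mapCoeffs
  have hcoeff (p : (MvPolynomial σ R)[X]) (c : ℕ) :
      (D p).coeff c = MvPolynomial.pderiv i (p.coeff c) := rfl
  have hD (l : σ) : D (X - C (MvPolynomial.X l)) = if l = i then -1 else 0 := by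
    ext1 d
    rw [hcoeff, coeff_sub, map_sub, coeff_X, coeff_C]
    split_ifs <;> simp_all [MvPolynomial.pderiv_X, coeff_one]
  have hDpow (l : σ) : D ((X - C (MvPolynomial.X l)) ^ e l) =
      if l = i then -((e i : (MvPolynomial σ R)[X]) * (X - C (MvPolynomial.X i)) ^ (e i - 1))
        else 0 := by
    rw [D.leibniz_pow, hD]
    split_ifs with h
    · rw [h, nsmul_eq_mul, smul_eq_mul]
      ring
    · simp
  have hDprod : D (∏ l ∈ Finset.univ.erase i, (X - C (MvPolynomial.X l)) ^ e l) = 0 := by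
    refine Finset.prod_induction _ (fun q => D q = 0) (fun p q hp hq => ?_) (by simp) ?_
    · rw [D.leibniz, hp, hq, smul_zero, smul_zero, add_zero]
    · exact fun l hl => by rw [hDpow, if_neg (Finset.ne_of_mem_erase hl)]
  rw [← hcoeff, prodXSubCPow, ← Finset.mul_prod_erase _ _ (Finset.mem_univ i), D.leibniz, hDprod,
    hDpow, if_pos rfl, smul_zero, zero_add, smul_eq_mul, ← coeff_neg]
  congr 1
  ring

lemma eval_pderiv_coeff_prodXSubCPow_X {e : σ → ℕ} (he : ∀ i, e i ≠ 0) (r : σ → R) (i : σ)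
    (c : ℕ) :
    MvPolynomial.eval r (MvPolynomial.pderiv i ((prodXSubCPow e MvPolynomial.X).coeff c)) =
      -(prodXSubCPow (e - 1) r *
        (C (e i : R) * Lagrange.nodal (Finset.univ.erase i) r)).coeff c := by
  rw [pderiv_coeff_prodXSubCPow_X, map_neg, ← coeff_map]
  congr 2
  have hsplit (l : σ) : (X - C (r l)) ^ e l = (X - C (r l)) ^ (e l - 1) * (X - C (r l)) :=
    (pow_sub_one_mul (he l) _).symm
  simp only [Polynomial.map_mul, Polynomial.map_natCast, Polynomial.map_pow, Polynomial.map_sub,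
    map_X, map_C, Polynomial.map_prod, MvPolynomial.eval_X, prodXSubCPow,
    Lagrange.nodal_eq, hsplit, Finset.prod_mul_distrib, Pi.sub_apply, Pi.one_apply,
    ← Finset.mul_prod_erase _ (fun l => (X - C (r l)) ^ (e l - 1)) (Finset.mem_univ i),
    C_eq_natCast]
  ring

lemma natDegree_sum_C_mul_nodal_erase_lt [Nontrivial R] [Nonempty σ] (v r : σ → R) :
    (∑ i, C (v i) * Lagrange.nodal (Finset.univ.erase i) r).natDegree < Fintype.card σ := by
  refine lt_of_le_of_lt (natDegree_sum_le_of_forall_le _ _ fun i _ => ?_)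
    (Nat.sub_one_lt Fintype.card_ne_zero)
  refine (natDegree_C_mul_le _ _).trans_eq ?_
  rw [Lagrange.natDegree_nodal, Finset.card_erase_of_mem (Finset.mem_univ i), Finset.card_univ]

lemma eq_zero_of_sum_C_mul_nodal_erase_eq_zero [IsDomain R] {r v : σ → R}
    (hr : Function.Injective r) (h : ∑ i, C (v i) * Lagrange.nodal (Finset.univ.erase i) r = 0) :
    v = 0 := by
  funext i
  have heval := congrArg (eval (r i)) h
  rw [eval_finsetSum, Finset.sum_eq_single i (fun l _ hl => ?_) (by simp)] at heval
  · rw [eval_mul, eval_C, eval_zero] at heval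
    refine (mul_eq_zero.mp heval).resolve_right (Lagrange.eval_nodal_not_at_node fun l hl => ?_)
    exact hr.ne (Finset.ne_of_mem_erase hl).symm
  · rw [eval_mul, Lagrange.eval_nodal_at_node (by simpa using hl.symm), mul_zero]

end Universal

section TopCoeffSystem

variable {R : Type*} [CommRing R] {m : ℕ}

/-- The square system expressing that `∏ (X - x_i)^{e_i}` has coefficient `c_j` at `X^{k+j}`
for `j < m`. -/
noncomputable def topCoeffSystem (e : Fin m → ℕ) (k : ℕ) (c : Fin m → R) (j : Fin m) :
    MvPolynomial (Fin m) R :=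
  (prodXSubCPow e MvPolynomial.X).coeff (k + j) - MvPolynomial.C (c j)

lemma eval_topCoeffSystem (e : Fin m → ℕ) (k : ℕ) (c r : Fin m → R) (j : Fin m) :
    MvPolynomial.eval r (topCoeffSystem e k c j) = (prodXSubCPow e r).coeff (k + j) - c j := by
  have hX : MvPolynomial.eval r ∘ MvPolynomial.X = r := funext fun i => MvPolynomial.eval_X i
  rw [topCoeffSystem, map_sub, MvPolynomial.eval_C, ← coeff_map, map_prodXSubCPow, hX]

lemma totalDegree_topCoeffSystem_le [Nontrivial R] {e : Fin m → ℕ} {k : ℕ} (hsum : ∑ i, e i = m + k)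
    (c : Fin m → R) (j : Fin m) : (topCoeffSystem e k c j).totalDegree ≤ m - j := by
  refine (MvPolynomial.totalDegree_sub_C_le _ _).trans ?_
  have := totalDegree_coeff_prodXSubCPow_X_le (R := R) e (k + j)
  omega

lemma jacobianAt_topCoeffSystem_mulVec {e : Fin m → ℕ} (he : ∀ i, e i ≠ 0) (k : ℕ)
    (c r v : Fin m → R) (j : Fin m) :
    (jacobianAt (topCoeffSystem e k c) r).mulVec v j = -(prodXSubCPow (e - 1) r *
      ∑ i, C (v i * e i) * Lagrange.nodal (Finset.univ.erase i) r).coeff (k + j) := by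
  simp only [Matrix.mulVec, dotProduct, jacobianAt, Matrix.of_apply, topCoeffSystem, map_sub,
    MvPolynomial.pderiv_C, sub_zero, eval_pderiv_coeff_prodXSubCPow_X he, Finset.mul_sum,
    finsetSum_coeff, ← Finset.sum_neg_distrib]
  refine Finset.sum_congr rfl fun i _ => ?_
  rw [neg_mul, mul_comm _ (v i), ← coeff_C_mul, C_mul, mul_assoc, mul_left_comm]

lemma natDegree_prodXSubCPow_sub_one [Nontrivial R] {e : Fin m → ℕ} {k : ℕ} (he : ∀ i, e i ≠ 0)
    (hsum : ∑ i, e i = m + k) (r : Fin m → R) : (prodXSubCPow (e - 1) r).natDegree = k := by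
  have hsplit : ∑ i, e i = ∑ i, (e - 1) i + ∑ _i : Fin m, 1 := by
    rw [← Finset.sum_add_distrib]
    exact Finset.sum_congr rfl fun i _ => (Nat.sub_add_cancel (Nat.pos_of_ne_zero (he i))).symm
  rw [hsum, Finset.sum_const, Finset.card_univ, Fintype.card_fin, smul_eq_mul, mul_one,
    add_comm] at hsplit
  rw [natDegree_prodXSubCPow, Nat.add_right_cancel hsplit]

variable {F : Type*} [Field F]

-- A kernel vector `v` yields `N = ∑ v_i e_i ∏_{l ≠ i} (X - r_l)` of degree `< m` for which the
-- product with the monic polynomial `∏ (X - r_i)^{e_i - 1}` of degree `k` has degree `< k`.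
lemma det_jacobianAt_topCoeffSystem_ne_zero {e : Fin m → ℕ} {k : ℕ} (he : ∀ i, (e i : F) ≠ 0)
    (hsum : ∑ i, e i = m + k) (c : Fin m → F) {r : Fin m → F} (hr : Function.Injective r) :
    (jacobianAt (topCoeffSystem e k c) r).det ≠ 0 := by
  have he' (i : Fin m) : e i ≠ 0 := fun h => he i (by simp [h])
  intro hdet
  obtain ⟨v, hv, hJv⟩ := Matrix.exists_mulVec_eq_zero_iff.mpr hdet
  have : Nonempty (Fin m) := (Function.ne_iff.mp hv).nonempty
  let N := ∑ i, C (v i * e i) * Lagrange.nodal (Finset.univ.erase i) r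
  have hN0 : N = 0 := by
    by_contra hne
    have hlt : N.natDegree < m :=
      (natDegree_sum_C_mul_nodal_erase_lt (fun i => v i * (e i : F)) r).trans_eq
        (Fintype.card_fin m)
    have hcoeff := jacobianAt_topCoeffSystem_mulVec he' k c r v ⟨N.natDegree, hlt⟩
    have hlead := coeff_mul_degree_add_degree (prodXSubCPow (e - 1) r) N
    rw [natDegree_prodXSubCPow_sub_one he' hsum, (monic_prodXSubCPow _ _).leadingCoeff,
      one_mul] at hlead
    rw [hJv, Pi.zero_apply, zero_eq_neg] at hcoeff
    exact hne (leadingCoeff_eq_zero.mp (hlead.symm.trans hcoeff))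
  refine hv (funext fun i => ?_)
  have hvi := congrFun (eq_zero_of_sum_C_mul_nodal_erase_eq_zero hr hN0) i
  exact (mul_eq_zero.mp hvi).resolve_right (he i)

lemma prod_fin_sub_eq_factorial (m : ℕ) : ∏ j : Fin m, (m - j) = m.factorial := by
  rw [Fin.prod_univ_eq_prod_range (fun j => m - j), ← Nat.descFactorial_eq_prod_range,
    Nat.descFactorial_self]

theorem card_le_factorial_of_coeff_prodXSubCPow_eq {ι : Type*} [Fintype ι] {e : Fin m → ℕ}
    {k : ℕ} (he : ∀ i, (e i : F) ≠ 0) (hsum : ∑ i, e i = m + k) {r : ι → Fin m → F}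
    (hr : Function.Injective r) (hri : ∀ i, Function.Injective (r i)) {c : Fin m → F}
    (hc : ∀ i (j : Fin m), (prodXSubCPow e (r i)).coeff (k + j) = c j) :
    Fintype.card ι ≤ m.factorial :=
  calc Fintype.card ι ≤ ∏ j, (topCoeffSystem e k c j).totalDegree :=
        card_le_prod_totalDegree_of_det_jacobianAt_ne_zero hr
          (fun i j => by rw [eval_topCoeffSystem, hc, sub_self])
          (fun i => det_jacobianAt_topCoeffSystem_ne_zero he hsum c (hri i))
    _ ≤ ∏ j : Fin m, (m - j) :=
        Finset.prod_le_prod' fun j _ => totalDegree_topCoeffSystem_le hsum c j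
    _ = m.factorial := prod_fin_sub_eq_factorial m

end TopCoeffSystem

lemma exists_equiv_of_map_univ_eq {α β γ : Type*} [Fintype α] [Fintype β] {f : α → γ} {g : β → γ}
    (h : Finset.univ.val.map f = Finset.univ.val.map g) : ∃ σ : α ≃ β, ∀ a, g (σ a) = f a := by
  have hcard (c : γ) : Fintype.card {a // f a = c} = Fintype.card {b // g b = c} := by
    have := congrArg (Multiset.count c) h
    simpa only [Multiset.count_map, eq_comm (a := c), Fintype.card_subtype, Finset.card_def,
      Finset.filter_val] using this
  exact ⟨Equiv.ofFiberEquiv fun c => Fintype.equivOfCardEq (hcard c),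
    fun a => Equiv.ofFiberEquiv_map _ a⟩

lemma exists_map_univ_fin_eq {α : Type*} {M : Multiset α} {m : ℕ} (hM : Multiset.card M = m) :
    ∃ e : Fin m → α, Finset.univ.val.map e = M := by
  obtain ⟨l, rfl⟩ := Quot.exists_rep M
  subst hM
  exact ⟨l.get, (Fin.univ_val_map l.get).trans (by rw [List.ofFn_get]; rfl)⟩

section RootMultiplicities

variable {F : Type*} [Field F]

/-- The multiset of the multiplicities of the distinct roots of `P`. -/
noncomputable def rootMultiplicities (P : F[X]) : Multiset ℕ :=
  P.roots.toFinset.val.map fun a => P.roots.count a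

lemma card_rootMultiplicities (P : F[X]) :
    Multiset.card (rootMultiplicities P) = P.roots.toFinset.card :=
  Multiset.card_map _ _

lemma pos_of_mem_rootMultiplicities {P : F[X]} {t : ℕ} (ht : t ∈ rootMultiplicities P) :
    0 < t := by
  obtain ⟨a, ha, rfl⟩ := Multiset.mem_map.mp ht
  exact Multiset.count_pos.mpr (Multiset.mem_toFinset.mp ha)

lemma sum_rootMultiplicities {P : F[X]} (hP : P.Splits) :
    (rootMultiplicities P).sum = P.natDegree :=
  (Multiset.toFinset_sum_count_eq P.roots).trans hP.natDegree_eq_card_roots.symm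

lemma exists_eq_prodXSubCPow {ι : Type*} [Fintype ι] {e : ι → ℕ} {P : F[X]} (hmonic : P.Monic)
    (hsplits : P.Splits) (he : Finset.univ.val.map e = rootMultiplicities P) :
    ∃ r : ι → F, Function.Injective r ∧ prodXSubCPow e r = P := by
  obtain ⟨σ, hσ⟩ := exists_equiv_of_map_univ_eq (β := P.roots.toFinset)
    (g := fun a => P.roots.count (a : F)) (f := e) (by
      rw [he, rootMultiplicities]
      exact (Multiset.attach_map_val' _ fun a => P.roots.count a).symm)
  refine ⟨fun i => σ i, Subtype.val_injective.comp σ.injective, ?_⟩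
  calc prodXSubCPow e (fun i => (σ i : F))
      = ∏ i, (X - C (σ i : F)) ^ P.roots.count (σ i : F) := by simp only [prodXSubCPow, hσ]
    _ = ∏ a : P.roots.toFinset, (X - C (a : F)) ^ P.roots.count (a : F) :=
        σ.prod_comp fun a => (X - C (a : F)) ^ P.roots.count (a : F)
    _ = ∏ a ∈ P.roots.toFinset, (X - C a) ^ P.roots.count a :=
        Finset.prod_coe_sort _ fun a => (X - C a) ^ P.roots.count a
    _ = (P.roots.map fun a => X - C a).prod := (Finset.prod_multiset_map_count _ _).symm
    _ = P := (hsplits.eq_prod_roots_of_monic hmonic).symm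

lemma card_le_factorial_of_rootMultiplicities_eq {T : Finset F[X]} {M : Multiset ℕ} {k m : ℕ}
    {R : F[X]} (hcard : Multiset.card M = m) (hsum : M.sum = m + k)
    (hM : ∀ t ∈ M, (t : F) ≠ 0) (hmonic : ∀ P ∈ T, P.Monic) (hsplits : ∀ P ∈ T, P.Splits)
    (hdiff : ∀ P ∈ T, (P - R).degree < k) (hT : ∀ P ∈ T, rootMultiplicities P = M) :
    T.card ≤ m.factorial := by
  obtain ⟨e, rfl⟩ := exists_map_univ_fin_eq hcard
  choose r hri hr using fun P : T =>
    exists_eq_prodXSubCPow (hmonic P P.2) (hsplits P P.2) (hT P P.2).symm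
  have hrinj : Function.Injective r := fun P Q h => Subtype.ext <| by rw [← hr P, h, hr Q]
  have hcoeff (P : T) (j : Fin m) : (prodXSubCPow e (r P)).coeff (k + j) = R.coeff (k + j) := by
    have hlt : ((P : F[X]) - R).degree < ((k + j : ℕ) : WithBot ℕ) :=
      (hdiff P P.2).trans_le (by exact_mod_cast Nat.le_add_right k j)
    rw [hr, ← sub_eq_zero, ← coeff_sub, coeff_eq_zero_of_degree_lt hlt]
  rw [← Fintype.card_coe]
  exact card_le_factorial_of_coeff_prodXSubCPow_eq
    (fun i => hM _ (Multiset.mem_map_of_mem e (Finset.mem_univ_val i))) hsum hrinj hri hcoeff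

end RootMultiplicities

section Partition

variable {k : ℕ}

/-- The multiset of `m` positive integers obtained from a partition with at most `m` parts by
padding it with zeros to `m` parts and adding `1` to each. -/
def shiftedParts (m : ℕ) (p : Nat.Partition k) : Multiset ℕ :=
  p.parts.map (· + 1) + Multiset.replicate (m - Multiset.card p.parts) 1

lemma exists_shiftedParts_eq {M : Multiset ℕ} {m : ℕ} (hpos : ∀ t ∈ M, 0 < t)
    (hcard : Multiset.card M = m) (hsum : M.sum = m + k) :
    ∃ p : Nat.Partition k, Multiset.card p.parts ≤ m ∧ shiftedParts m p = M := by
  have hpred : (M.map fun t => t - 1).sum = k := by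
    have hsplit : M = (M.map fun t => t - 1).map (· + 1) := by
      rw [Multiset.map_map]
      exact (Multiset.map_id' M).symm.trans
        (Multiset.map_congr rfl fun t ht => (Nat.sub_add_cancel (hpos t ht)).symm)
    have := congrArg Multiset.sum hsplit
    simp only [hsum, Multiset.sum_map_add, Multiset.map_id', Multiset.map_const',
      Multiset.sum_replicate, Multiset.card_map, hcard, smul_eq_mul, mul_one] at this
    omega
  let p := Nat.Partition.ofSums k (M.map fun t => t - 1) hpred
  have hparts : p.parts = (M.filter fun t => t - 1 ≠ 0).map fun t => t - 1 :=
    Multiset.filter_map _ _ _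
  have hsplit := Multiset.filter_add_not (fun t => t - 1 ≠ 0) M
  have hcards := congrArg Multiset.card hsplit
  rw [Multiset.card_add, hcard] at hcards
  have hlarge : p.parts.map (· + 1) = M.filter fun t => t - 1 ≠ 0 := by
    rw [hparts, Multiset.map_map]
    exact (Multiset.map_congr rfl fun t ht =>
      Nat.sub_add_cancel (hpos t (Multiset.mem_of_mem_filter ht))).trans (Multiset.map_id' _)
  have hones : Multiset.replicate (m - Multiset.card p.parts) 1 =
      M.filter fun t => ¬t - 1 ≠ 0 := by
    refine (Multiset.eq_replicate.mpr ⟨?_, fun t ht => ?_⟩).symm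
    · rw [hparts, Multiset.card_map]
      omega
    · obtain ⟨htM, ht⟩ := Multiset.mem_filter.mp ht
      have := hpos t htM
      omega
  refine ⟨p, ?_, ?_⟩
  · rw [hparts, Multiset.card_map]
    omega
  · rw [shiftedParts, hlarge, hones, hsplit]

end Partition

lemma le_of_mem_of_card_of_sum {M : Multiset ℕ} {k m t : ℕ} (hpos : ∀ t ∈ M, 0 < t)
    (hcard : Multiset.card M = m) (hsum : M.sum = m + k) (ht : t ∈ M) : t ≤ k + 1 := by
  obtain ⟨N, rfl⟩ := Multiset.exists_cons_of_mem ht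
  have := Multiset.card_nsmul_le_sum (s := N) (a := 1) fun x hx =>
    hpos x (Multiset.mem_cons_of_mem hx)
  simp only [Multiset.card_cons, Multiset.sum_cons, smul_eq_mul, mul_one] at hcard hsum this
  omega

theorem card_le_card_partition_mul_factorial {F : Type*} [Field F] {T : Finset F[X]} {k m : ℕ}
    {R : F[X]} (hF : ∀ t, 0 < t → t ≤ k + 1 → (t : F) ≠ 0) (hmonic : ∀ P ∈ T, P.Monic)
    (hsplits : ∀ P ∈ T, P.Splits) (hdeg : ∀ P ∈ T, P.natDegree = m + k)
    (hroots : ∀ P ∈ T, P.roots.toFinset.card = m) (hdiff : ∀ P ∈ T, (P - R).degree < k) :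
    T.card ≤ Nat.card {p : Nat.Partition k // Multiset.card p.parts ≤ m} * m.factorial := by
  have hcard (P) (hP : P ∈ T) : Multiset.card (rootMultiplicities P) = m :=
    (card_rootMultiplicities P).trans (hroots P hP)
  have hsum (P) (hP : P ∈ T) : (rootMultiplicities P).sum = m + k :=
    (sum_rootMultiplicities (hsplits P hP)).trans (hdeg P hP)
  let S : Finset (Multiset ℕ) := Finset.univ.image
    fun p : {p : Nat.Partition k // Multiset.card p.parts ≤ m} => shiftedParts m p.1
  have hmaps : ∀ P ∈ T, rootMultiplicities P ∈ S := fun P hP => by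
    obtain ⟨p, hp, hpP⟩ := exists_shiftedParts_eq
      (fun _ => pos_of_mem_rootMultiplicities) (hcard P hP) (hsum P hP)
    exact Finset.mem_image.mpr ⟨⟨p, hp⟩, Finset.mem_univ _, hpP⟩
  have hfiber : ∀ M ∈ S, (T.filter fun P => rootMultiplicities P = M).card ≤ m.factorial := by
    intro M _
    rcases (T.filter fun P => rootMultiplicities P = M).eq_empty_or_nonempty with h | ⟨P, hP⟩
    · simp [h]
    obtain ⟨hPT, rfl⟩ := Finset.mem_filter.mp hP
    have hM (t) (ht : t ∈ rootMultiplicities P) : (t : F) ≠ 0 :=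
      hF t (pos_of_mem_rootMultiplicities ht) (le_of_mem_of_card_of_sum
        (fun _ => pos_of_mem_rootMultiplicities) (hcard P hPT) (hsum P hPT) ht)
    have hsub {Q} (hQ : Q ∈ T.filter fun Q => rootMultiplicities Q = rootMultiplicities P) :=
      (Finset.mem_filter.mp hQ).1
    exact card_le_factorial_of_rootMultiplicities_eq (hcard P hPT) (hsum P hPT) hM
      (fun Q hQ => hmonic Q (hsub hQ)) (fun Q hQ => hsplits Q (hsub hQ))
      (fun Q hQ => hdiff Q (hsub hQ)) (fun Q hQ => (Finset.mem_filter.mp hQ).2)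
  calc T.card ≤ m.factorial * S.card := Finset.card_le_mul_card_image_of_maps_to hmaps _ hfiber
    _ ≤ m.factorial * Nat.card {p : Nat.Partition k // Multiset.card p.parts ≤ m} := by
        gcongr
        exact Finset.card_image_le.trans_eq (by rw [Finset.card_univ, Nat.card_eq_fintype_card])
    _ = _ := mul_comm _ _

lemma degree_sum_C_mul_X_pow_lt {R ι : Type*} [Semiring R] [Fintype ι] (c : ι → R) {d : ι → ℕ}
    {N : ℕ} (hd : ∀ i, d i < N) : (∑ i, C (c i) * X ^ d i : R[X]).degree < N :=
  (degree_sum_le _ _).trans_lt <| (Finset.sup_lt_iff (WithBot.bot_lt_coe N)).mpr fun i _ =>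
    (degree_C_mul_X_pow_le (d i) (c i)).trans_lt (Nat.cast_lt.mpr (hd i))

lemma sum_C_mul_X_pow_injective {R ι : Type*} [Semiring R] [Fintype ι] {d : ι → ℕ}
    (hd : Function.Injective d) :
    Function.Injective fun c : ι → R => (∑ i, C (c i) * X ^ d i : R[X]) := by
  intro b c h
  funext j
  simpa [coeff_X_pow, hd.eq_iff] using congrArg (coeff · (d j)) h

lemma finite_and_ncard_le_of_forall_finset_card_le {α : Type*} {s : Set α} {N : ℕ}
    (h : ∀ T : Finset α, ↑T ⊆ s → T.card ≤ N) : s.Finite ∧ s.ncard ≤ N := by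
  have hs : s.Finite := by
    by_contra hs
    obtain ⟨T, hTs, hT⟩ := Set.Infinite.exists_subset_card_eq hs (N + 1)
    exact absurd (h T hTs) (by omega)
  exact ⟨hs, (Set.ncard_eq_toFinset_card s hs).trans_le (h _ hs.coe_toFinset.subset)⟩

lemma natCast_ne_zero_of_lt_ringChar {R : Type*} [NonAssocSemiring R] {N t : ℕ}
    (hR : ringChar R = 0 ∨ N < ringChar R) (ht : 0 < t) (htN : t ≤ N) : (t : R) ≠ 0 := by
  rw [Ne, ringChar.spec]
  intro hdvd
  rcases hR with h | h
  · rw [h, zero_dvd_iff] at hdvd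
    exact ht.ne' hdvd
  · exact absurd (Nat.le_of_dvd ht hdvd) (by omega)

theorem card_le_of_polyIndexOver_eq {K : Type*} [Field K] {T : Finset K[X]} {k m : ℕ} {R : K[X]}
    (hK : ringChar K = 0 ∨ k + 1 < ringChar K) (hmonic : ∀ P ∈ T, P.Monic)
    (hdeg : ∀ P ∈ T, P.natDegree = m + k) (hindex : ∀ P ∈ T, polyIndexOver K P = k)
    (hdiff : ∀ P ∈ T, (P - R).degree < k) :
    T.card ≤ Nat.card {p : Nat.Partition k // Multiset.card p.parts ≤ m} * m.factorial := by
  let φ := algebraMap K (AlgebraicClosure K)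
  have hcast (t : ℕ) (ht : 0 < t) (htk : t ≤ k + 1) : (t : AlgebraicClosure K) ≠ 0 := by
    rw [← map_natCast φ]
    exact (map_ne_zero φ).mpr (natCast_ne_zero_of_lt_ringChar hK ht htk)
  have hroots (P) (hP : P ∈ T) : (P.map φ).roots.toFinset.card = m := by
    have hle : (P.map φ).roots.toFinset.card ≤ m + k :=
      (Multiset.toFinset_card_le _).trans ((card_roots' _).trans_eq
        ((natDegree_map φ).trans (hdeg P hP)))
    have hind := hindex P hP
    rw [polyIndexOver, hdeg P hP] at hind
    change m + k - (P.map φ).roots.toFinset.card = k at hind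
    omega
  rw [← Finset.card_image_of_injective T (map_injective φ φ.injective)]
  refine card_le_card_partition_mul_factorial (R := R.map φ) hcast ?_ ?_ ?_ ?_ ?_ <;>
    simp only [Finset.forall_mem_image]
  · exact fun P hP => (hmonic P hP).map φ
  · exact fun P _ => IsAlgClosed.splits _
  · exact fun P hP => (natDegree_map φ).trans (hdeg P hP)
  · exact hroots
  · exact fun P hP => by
      rw [← Polynomial.map_sub, degree_map]
      exact hdiff P hP

theorem index_k_fiber_count_general (K : Type*) [Field K] (n k : ℕ)
    (hchar : ringChar K = 0 ∨ k + 1 < ringChar K) (hkn : k ≤ n) (a : Fin (n - k) → K) :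
    {b : Fin k → K | polyIndexOver K
        (X ^ n + ∑ i : Fin (n - k), C (a i) * X ^ (n - 1 - (i : ℕ)) +
          ∑ j : Fin k, C (b j) * X ^ (k - 1 - (j : ℕ))) = k}.Finite ∧
      {b : Fin k → K | polyIndexOver K
        (X ^ n + ∑ i : Fin (n - k), C (a i) * X ^ (n - 1 - (i : ℕ)) +
          ∑ j : Fin k, C (b j) * X ^ (k - 1 - (j : ℕ))) = k}.ncard
        ≤ Nat.card {p : Nat.Partition k // Multiset.card p.parts ≤ n - k} *
            Nat.factorial (n - k) := by
  let A : K[X] := ∑ i : Fin (n - k), C (a i) * X ^ (n - 1 - (i : ℕ))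
  let B (b : Fin k → K) : K[X] := ∑ j : Fin k, C (b j) * X ^ (k - 1 - (j : ℕ))
  have hB (b) : (B b).degree < k := degree_sum_C_mul_X_pow_lt b fun j => by omega
  have hAB (b) : (A + B b).degree < n :=
    (degree_add_le _ _).trans_lt <| max_lt (degree_sum_C_mul_X_pow_lt a fun i => by omega)
      ((hB b).trans_le (by exact_mod_cast hkn))
  have hinj : Function.Injective fun b => X ^ n + A + B b := (add_right_injective _).comp <|
    sum_C_mul_X_pow_injective fun i j h => Fin.ext (by omega)
  refine finite_and_ncard_le_of_forall_finset_card_le fun T hT => ?_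
  rw [← Finset.card_image_of_injective T hinj]
  refine card_le_of_polyIndexOver_eq (R := X ^ n + A) hchar ?_ ?_ ?_ ?_ <;>
    simp only [Finset.forall_mem_image]
  · exact fun b _ => by rw [add_assoc]; exact monic_X_pow_add (hAB b)
  · exact fun b _ => by
      rw [add_assoc, natDegree_add_eq_left_of_degree_lt ((hAB b).trans_eq (degree_X_pow n).symm),
        natDegree_X_pow, Nat.sub_add_cancel hkn]
  · exact fun b hb => hT hb
  · exact fun b _ => by rw [add_sub_cancel_left]; exact hB b

/-- Proposition 3.3 of Bhargava's paper. Let `K` be a field of characteristic zero or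
greater than `n` (so prime to `n!`), let `1 ≤ k < n`, and fix `a_1, ..., a_{n-k} ∈ K`.
Then the number of tuples `(a_{n-k+1}, ..., a_n) ∈ K^k` such that
`P(x) = x^n + a_1 x^{n-1} + ... + a_n` has index exactly `k` over `K` is at most
`q(k, n-k)·(n-k)!`, where `q(k, n-k)` is the number of partitions of `k` into at most
`n-k` parts. -/
theorem index_k_fiber_count (K : Type*) [Field K] (n k : ℕ)
    (hchar : ringChar K = 0 ∨ n < ringChar K) (hk : 1 ≤ k) (hkn : k < n)
    (a : Fin (n - k) → K) :
    {b : Fin k → K | polyIndexOver K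
        (X ^ n + ∑ i : Fin (n - k), C (a i) * X ^ (n - 1 - (i : ℕ)) +
          ∑ j : Fin k, C (b j) * X ^ (k - 1 - (j : ℕ))) = k}.Finite ∧
      {b : Fin k → K | polyIndexOver K
        (X ^ n + ∑ i : Fin (n - k), C (a i) * X ^ (n - 1 - (i : ℕ)) +
          ∑ j : Fin k, C (b j) * X ^ (k - 1 - (j : ℕ))) = k}.ncard
        ≤ Nat.card {p : Nat.Partition k // Multiset.card p.parts ≤ n - k} *
            Nat.factorial (n - k) := by
  exact index_k_fiber_count_general K n k (hchar.imp_right (lt_of_le_of_lt hkn)) hkn.le a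
end

section
/- Fix n ≥ 1, an integer k ≥ 0, and ε > 0. There is a constant C = C(n, ε) such that for every prime p and every real H ≥ 1, the number of tuples (a_1,...,a_n) ∈ ℤ^n with |a_i| ≤ H for all i, such that the reduction modulo p of x^n + a_1 x^{n-1} + ... + a_n has index at least k over 𝔽_p, is at most C · (H^n / p^k + p^{n - k - 1/2 + ε}). -/
open scoped Classical
open Polynomial

/-!
Translation `g (x) ↦ g (x + c)` preserves both the index and the set of monic polynomials of degree
`n`. For `p > n`, the lower coefficients of `g (x + c)` are polynomials in `c` of distinct degrees
`1, …, n`, so every nontrivial linear combination of them is nonconstant of degree at most `n`, and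
Weil's bound controls its exponential sum. Hence every translation orbit is equidistributed: a
product of Fejér kernels that majorizes the box `|a_i| ≤ H` modulo `p` has the expected average over
each orbit up to an error of order `p ^ (-1/2)`. It remains to count all polynomials over `𝔽_p` of
index at least `k`: such a polynomial has a radical of degree at most `n - k`, which determines it
up to boundedly many choices, so there are `O (p ^ (n - k))` of them. If `p` is bounded in terms of
`n` or `p < 8 H`, counting the points of the box in each residue class is enough.

Weil's bound itself comes from Stepanov's method. An auxiliary polynomial of small degree vanishing
on the fibres of `x ↦ Tr (f x)` bounds the exponential sums over the extensions of large even degree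
of the ground field. Up to sign, these sums are the power sums of the inverse roots of an
`L`-function, which is a polynomial of degree less than the degree of `f`, so every inverse root has
absolute value at most the square root of the cardinality of the ground field.
-/

section NewtonPairs

/-- `IsNewtonPair a S` says `m a_m = ∑_{i < m} a_i S_{m - i}` for all `m`, which amounts to
`∑ a_m T ^ m = a_0 exp (∑_{m ≥ 1} S_m T ^ m / m)` without the denominators. It holds for the signed
elementary symmetric functions and the negated power sums of a multiset, and for the coefficients of
an `L`-function and the character sums over the finite extensions of the base field. -/
def IsNewtonPair {R : Type*} [CommRing R] (a S : ℕ → R) : Prop :=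
  ∀ m : ℕ, (m : R) * a m = ∑ i ∈ Finset.range m, a i * S (m - i)

/-- The power sum `p_k(s)`, the sum of the `k`-th powers of the elements of `s`. -/
def powerSum {R : Type*} [CommSemiring R] (s : Multiset R) (k : ℕ) : R :=
  (s.map (· ^ k)).sum

theorem aeval_psum_eq_powerSum {R ι : Type*} [CommRing R] [Fintype ι] (z : ι → R) (k : ℕ) :
    MvPolynomial.aeval z (MvPolynomial.psum ι R k) = powerSum (Finset.univ.val.map z) k := by
  simp only [MvPolynomial.psum, map_sum, map_pow, MvPolynomial.aeval_X, powerSum,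
    Multiset.map_map, Function.comp_def]
  rfl

theorem mul_esymm_eq_sum_powerSum {R : Type*} [CommRing R] (s : Multiset R) (k : ℕ) :
    (k : R) * s.esymm k = (-1) ^ (k + 1) *
      ∑ i ∈ Finset.range k, (-1) ^ i * s.esymm i * powerSum s (k - i) := by
  obtain ⟨l, rfl⟩ := Quot.exists_rep s
  change (k : R) * (l : Multiset R).esymm k = (-1) ^ (k + 1) *
    ∑ i ∈ Finset.range k, (-1) ^ i * (l : Multiset R).esymm i * powerSum (l : Multiset R) (k - i)
  have values : Finset.univ.val.map l.get = (l : Multiset R) := by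
    rw [Fin.univ_val_map, List.ofFn_get]
  have newton := congrArg (MvPolynomial.aeval (R := R) l.get)
    (MvPolynomial.mul_esymm_eq_sum (Fin l.length) R k)
  simp only [map_mul, map_natCast, map_sum, map_pow, map_neg, map_one,
    MvPolynomial.aeval_esymm_eq_multiset_esymm, aeval_psum_eq_powerSum, values] at newton
  rw [newton, Finset.sum_filter, Finset.Nat.sum_antidiagonal_eq_sum_range_succ_mk,
    Finset.sum_range_succ, if_neg (lt_irrefl k), add_zero]
  exact congrArg _ (Finset.sum_congr rfl fun i hi ↦ if_pos (Finset.mem_range.1 hi))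

theorem isNewtonPair_esymm_powerSum {R : Type*} [CommRing R] (s : Multiset R) :
    IsNewtonPair (fun m ↦ (-1) ^ m * s.esymm m) (fun m ↦ -powerSum s m) := by
  intro m
  have sign : (-1 : R) ^ m * (-1) ^ (m + 1) = -1 := by
    rw [← pow_add, show m + (m + 1) = 2 * m + 1 by ring]
    simp [pow_succ, pow_mul]
  rw [mul_left_comm, mul_esymm_eq_sum_powerSum, ← mul_assoc, sign, neg_one_mul,
    ← Finset.sum_neg_distrib]
  simp only [mul_neg]

theorem multisetEsymm_zero {R : Type*} [CommSemiring R] (s : Multiset R) : s.esymm 0 = 1 := by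
  simp [Multiset.esymm]

namespace IsNewtonPair

theorem sub_eq_of_agree {R : Type*} [CommRing R] {a a' S S' : ℕ → R} (h : IsNewtonPair a S)
    (h' : IsNewtonPair a' S') (ha : a 0 = 1) {d : ℕ} (agree : ∀ i < d, a' i = a i) {k : ℕ}
    (hk : 1 ≤ k) (hkd : k ≤ d) : S' k - S k = k * (a' k - a k) := by
  induction k using Nat.strong_induction_on with
  | _ k ih =>
    obtain ⟨k, rfl⟩ := Nat.exists_eq_add_of_le' hk
    have tails : ∑ i ∈ Finset.range k, a' (i + 1) * S' (k + 1 - (i + 1)) =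
        ∑ i ∈ Finset.range k, a (i + 1) * S (k + 1 - (i + 1)) := by
      refine Finset.sum_congr rfl fun i hi ↦ ?_
      have hik := Finset.mem_range.1 hi
      have hS := ih (k + 1 - (i + 1)) (by lia) (by lia) (by lia)
      rw [agree _ (by lia), sub_self, mul_zero, sub_eq_zero] at hS
      rw [hS, agree _ (by lia)]
    have hm := h (k + 1)
    have hm' := h' (k + 1)
    rw [Finset.sum_range_succ', Nat.sub_zero] at hm hm'
    rw [tails, agree 0 (by lia), ha] at hm'
    rw [ha] at hm
    linear_combination hm - hm'

theorem norm_le_one {a S : ℕ → ℂ} (h : IsNewtonPair a S) (ha : a 0 = 1)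
    (hS : ∀ j, 1 ≤ j → ‖S j‖ ≤ 1) (k : ℕ) : ‖a k‖ ≤ 1 := by
  induction k using Nat.strong_induction_on with
  | _ k ih =>
    rcases Nat.eq_zero_or_pos k with rfl | hk
    · simp [ha]
    have bound : (k : ℝ) * ‖a k‖ ≤ k * 1 :=
      calc (k : ℝ) * ‖a k‖ = ‖∑ i ∈ Finset.range k, a i * S (k - i)‖ := by
            rw [← h k, norm_mul, Complex.norm_natCast]
        _ ≤ ∑ i ∈ Finset.range k, 1 := by
            refine norm_sum_le_of_le _ fun i hi ↦ ?_
            have hik := Finset.mem_range.1 hi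
            rw [norm_mul]
            exact mul_le_one₀ (ih i hik) (norm_nonneg _) (hS _ (by lia))
        _ = k * 1 := by simp
    exact le_of_mul_le_mul_left bound (by exact_mod_cast hk)

end IsNewtonPair

end NewtonPairs

section PowerSumGrowth

theorem norm_lt_two_of_norm_powerSum_le_one {s : Multiset ℂ}
    (h : ∀ j, 1 ≤ j → ‖powerSum s j‖ ≤ 1) {z : ℂ} (hz : z ∈ s) : ‖z‖ < 2 := by
  let Q : ℂ[X] := (s.map fun w ↦ X - C w).prod
  have monic : Q.Monic := monic_multisetProd_X_sub_C s
  have root : Q.IsRoot z := by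
    rw [← mem_roots monic.ne_zero, roots_multiset_prod_X_sub_C]
    exact hz
  have esymm_le (k : ℕ) : ‖s.esymm k‖ ≤ 1 := by
    simpa using (isNewtonPair_esymm_powerSum s).norm_le_one (by simp [multisetEsymm_zero])
      (by simpa using h) k
  have coeff_le (i : ℕ) (hi : i ∈ Finset.range Q.natDegree) : ‖Q.coeff i‖₊ ≤ 1 := by
    rw [natDegree_multiset_prod_X_sub_C_eq_card, Finset.mem_range] at hi
    rw [Multiset.prod_X_sub_C_coeff s hi.le, ← NNReal.coe_le_coe]
    simpa using esymm_le _
  have cauchy : cauchyBound Q ≤ 2 := by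
    rw [cauchyBound, monic.leadingCoeff, nnnorm_one, div_one, ← one_add_one_eq_two]
    exact add_le_add_left (Finset.sup_le coeff_le) 1
  exact (root.norm_lt_cauchyBound monic.ne_zero).trans_le (by exact_mod_cast cauchy)

theorem norm_sq_le_of_norm_powerSum_le {s : Multiset ℂ} {ρ B : ℝ} (hρ : 0 < ρ) {c₀ : ℕ}
    (h : ∀ c, c₀ ≤ c → ‖powerSum s (2 * c)‖ ≤ B * ρ ^ c) {z : ℂ} (hz : z ∈ s) : ‖z‖ ^ 2 ≤ ρ := by
  by_contra! hlt
  let B' := max B 1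
  have one_le : 1 ≤ B' := le_max_right _ _
  have pow_lt (c : ℕ) (hc : c₀ + 1 ≤ c) : (‖z‖ ^ 2 / ρ) ^ c < 2 * B' := by
    -- All power sums of the rescaled `2 c`-th powers are at most `1`, even if `B` is large.
    let scale (w : ℂ) : ℂ := w ^ (2 * c) / (B' * ρ ^ c : ℝ)
    have hpos : 0 < B' * ρ ^ c := by positivity
    have scaled (j : ℕ) (hj : 1 ≤ j) : ‖powerSum (s.map scale) j‖ ≤ 1 := by
      have hsum : powerSum (s.map scale) j =
          powerSum s (2 * (c * j)) / ((B' * ρ ^ c : ℝ) : ℂ) ^ j := by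
        simp only [powerSum, Multiset.map_map, Function.comp_def, scale, div_pow, ← pow_mul,
          mul_assoc, Multiset.sum_map_div]
      rw [hsum, norm_div, norm_pow, Complex.norm_of_nonneg hpos.le,
        div_le_one (pow_pos hpos j), mul_pow, ← pow_mul]
      refine (h (c * j) (by nlinarith)).trans ?_
      have : B ≤ B' ^ j := (le_max_left _ _).trans (le_self_pow₀ one_le (by lia))
      gcongr
    have := norm_lt_two_of_norm_powerSum_le_one scaled (Multiset.mem_map_of_mem scale hz)
    rw [norm_div, norm_pow, Complex.norm_of_nonneg hpos.le, div_lt_iff₀ hpos, pow_mul] at this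
    rw [div_pow, div_lt_iff₀ (pow_pos hρ c)]
    linarith
  have hgt : 1 < ‖z‖ ^ 2 / ρ := (one_lt_div hρ).2 hlt
  obtain ⟨N, hN⟩ := pow_unbounded_of_one_lt (2 * B') hgt
  have mono : (‖z‖ ^ 2 / ρ) ^ N ≤ (‖z‖ ^ 2 / ρ) ^ (N + c₀ + 1) :=
    pow_le_pow_right₀ hgt.le (by lia)
  exact absurd (hN.trans_le mono) (pow_lt _ (by lia)).not_gt

theorem exists_multiset_esymm_eq {K : Type*} [Field K] [IsAlgClosed K] {a : ℕ → K} (ha : a 0 = 1)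
    {n : ℕ} (hn : ∀ m, n < m → a m = 0) :
    ∃ s : Multiset K, s.card = n ∧ ∀ m, a m = (-1) ^ m * s.esymm m := by
  let Q : K[X] := ∑ i ∈ Finset.range (n + 1), C (a (n - i)) * X ^ i
  have coeff_Q (i : ℕ) (hi : i ≤ n) : Q.coeff i = a (n - i) := by
    simp only [Q, finsetSum_coeff, coeff_C_mul_X_pow, Finset.sum_ite_eq, Finset.mem_range]
    rw [if_pos (by lia)]
  have degree_le : Q.natDegree ≤ n :=
    natDegree_sum_le_of_forall_le _ _ fun i hi ↦
      (natDegree_C_mul_X_pow_le _ _).trans (Nat.lt_succ_iff.1 (Finset.mem_range.1 hi))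
  have coeff_n : Q.coeff n = 1 := by rw [coeff_Q n le_rfl, Nat.sub_self, ha]
  have degree_Q : Q.natDegree = n :=
    natDegree_eq_of_le_of_coeff_ne_zero degree_le (coeff_n ▸ one_ne_zero)
  have monic : Q.Monic := monic_of_natDegree_le_of_coeff_eq_one n degree_le coeff_n
  have card_roots : Q.roots.card = n :=
    (splits_iff_card_roots.1 (IsAlgClosed.splits Q)).trans degree_Q
  refine ⟨Q.roots, card_roots, fun m ↦ ?_⟩
  rcases le_or_gt m n with hm | hm
  · have vieta := coeff_eq_esymm_roots_of_splits (IsAlgClosed.splits Q) (k := n - m) (by lia)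
    rwa [monic.leadingCoeff, degree_Q, one_mul, Nat.sub_sub_self hm, coeff_Q _ (by lia),
      Nat.sub_sub_self hm] at vieta
  · rw [hn m hm, Multiset.esymm, Multiset.powersetCard_eq_empty m (by lia)]
    simp

theorem IsNewtonPair.norm_le_mul_sqrt {a S : ℕ → ℂ} (h : IsNewtonPair a S) (ha : a 0 = 1) {n : ℕ}
    (hn : ∀ m, n < m → a m = 0) {ρ B : ℝ} (hρ : 0 < ρ) {c₀ : ℕ}
    (hS : ∀ c, c₀ ≤ c → ‖S (2 * c)‖ ≤ B * ρ ^ c) : ‖S 1‖ ≤ n * √ρ := by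
  obtain ⟨s, card_s, esymm_s⟩ := exists_multiset_esymm_eq ha hn
  have eq_powerSum (m : ℕ) (hm : 1 ≤ m) : powerSum s m = -S m := by
    have := h.sub_eq_of_agree (isNewtonPair_esymm_powerSum s) ha (d := m)
      (fun i _ ↦ (esymm_s i).symm) hm le_rfl
    rw [← esymm_s m, sub_self, mul_zero] at this
    linear_combination -this
  have norm_le (z : ℂ) (hz : z ∈ s) : ‖z‖ ≤ √ρ := by
    refine Real.le_sqrt_of_sq_le (norm_sq_le_of_norm_powerSum_le hρ (c₀ := c₀ + 1) (B := B) ?_ hz)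
    intro c hc
    rw [eq_powerSum _ (by lia), norm_neg]
    exact hS c (by lia)
  calc ‖S 1‖ = ‖s.sum‖ := by rw [← norm_neg, ← eq_powerSum 1 le_rfl]; simp [powerSum]
    _ ≤ (s.map norm).sum := norm_multiset_sum_le s
    _ ≤ (s.map norm).card • √ρ := Multiset.sum_le_card_nsmul _ _ (by simpa using norm_le)
    _ = n * √ρ := by rw [Multiset.card_map, card_s, nsmul_eq_mul]

end PowerSumGrowth

section Stepanov

variable {K : Type*} [Field K]

theorem exists_sum_C_mul_eq_zero {ι : Type*} [Fintype ι] {v : ι → K[X]} {E : ℕ}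
    (hv : ∀ t, (v t).natDegree < E) (hE : E < Fintype.card ι) :
    ∃ w : ι → K, (∃ t, w t ≠ 0) ∧ ∑ t, C (w t) * v t = 0 := by
  let u (t : ι) : degreeLT K E :=
    ⟨v t, mem_degreeLT.2 (degree_le_natDegree.trans_lt (by exact_mod_cast hv t))⟩
  have dependent : ¬ LinearIndependent K u := fun h ↦ by
    have := h.fintype_card_le_finrank
    rw [(degreeLTEquiv K E).finrank_eq, Module.finrank_fin_fun] at this
    lia
  obtain ⟨w, hw, nonzero⟩ := Fintype.not_linearIndependent_iff.1 dependent
  refine ⟨w, nonzero, ?_⟩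
  simpa [u, smul_eq_C_mul] using congrArg (Submodule.subtype _) hw

theorem sum_ne_zero_of_natDegree_injective {ι : Type*} [Fintype ι] {f : ι → K[X]}
    (inj : ∀ t t', f t ≠ 0 → f t' ≠ 0 → (f t).natDegree = (f t').natDegree → t = t') {t₀ : ι}
    (ht₀ : f t₀ ≠ 0) : ∑ t, f t ≠ 0 := by
  intro hsum
  have degree_sum := degree_sum_eq_of_disjoint f Finset.univ fun t ht t' ht' hne heq ↦
    hne (inj t t' ht.2 ht'.2 (natDegree_eq_of_degree_eq heq))
  rw [hsum, degree_zero] at degree_sum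
  refine ht₀ (degree_eq_bot.1 (le_bot_iff.1 ?_))
  rw [degree_sum]
  exact Finset.le_sup (f := fun t ↦ (f t).degree) (Finset.mem_univ t₀)

theorem natDegree_sum_pow_pow {f : K[X]} (hf : 0 < f.natDegree) {q : ℕ} (hq : 1 < q) (c : ℕ) :
    (∑ i ∈ Finset.range (c + 1), f ^ q ^ i).natDegree = f.natDegree * q ^ c := by
  induction c with
  | zero => simp
  | succ c ih =>
    have top : (f ^ q ^ (c + 1)).natDegree = f.natDegree * q ^ (c + 1) := by
      rw [natDegree_pow, mul_comm]
    rw [Finset.sum_range_succ, natDegree_add_eq_right_of_natDegree_lt, top]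
    rw [ih, top]
    exact Nat.mul_lt_mul_of_pos_left (Nat.pow_lt_pow_right hq c.lt_succ_self) hf

/-- The products `X ^ (k + i r) z ^ j` with `i < I`, `j < q`, `k < D`, out of which the auxiliary
polynomial in Stepanov's method is assembled. -/
noncomputable def stepanovMonomial (z : K[X]) (r : ℕ) {I q D : ℕ} (t : Fin I × Fin q × Fin D) :
    K[X] :=
  X ^ ((t.2.2 : ℕ) + t.1 * r) * z ^ (t.2.1 : ℕ)

variable {z : K[X]} {d D q : ℕ}

theorem natDegree_stepanovMonomial (hz0 : z ≠ 0) (hz : z.natDegree = d * D) {I : ℕ}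
    (t : Fin I × Fin q × Fin D) :
    (stepanovMonomial z (q * D) t).natDegree = D * (q * t.1 + d * t.2.1) + t.2.2 := by
  rw [stepanovMonomial, natDegree_mul (pow_ne_zero _ X_ne_zero) (pow_ne_zero _ hz0),
    natDegree_X_pow, natDegree_pow, hz]
  ring

theorem stepanovExponent_injective (hqd : Nat.Coprime q d) {I : ℕ} :
    Function.Injective fun t : Fin I × Fin q × Fin D ↦
      D * (q * (t.1 : ℕ) + d * t.2.1) + t.2.2 := by
  rintro ⟨⟨i, hi⟩, ⟨j, hj⟩, ⟨k, hk⟩⟩ ⟨⟨i', hi'⟩, ⟨j', hj'⟩, ⟨k', hk'⟩⟩ h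
  dsimp only at h
  have hkk : k = k' := by
    simpa [Nat.mul_add_mod, Nat.mod_eq_of_lt hk, Nat.mod_eq_of_lt hk'] using congrArg (· % D) h
  subst hkk
  have quotients : q * i + d * j = q * i' + d * j' :=
    Nat.eq_of_mul_eq_mul_left (by lia : 0 < D) (by lia)
  have hjj : j = j' := by
    have modEq : d * j ≡ d * j' [MOD q] := by
      simpa [Nat.ModEq, Nat.mul_add_mod] using congrArg (· % q) quotients
    exact (Nat.ModEq.cancel_left_of_coprime hqd modEq).eq_of_lt_of_lt hj hj'
  subst hjj
  obtain rfl : i = i' := Nat.eq_of_mul_eq_mul_left (by lia : 0 < q) (by lia)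
  rfl

theorem natDegree_stepanovMonomial_le (hz0 : z ≠ 0) (hz : z.natDegree = d * D)
    (t : Fin (D + d + 1) × Fin q × Fin D) :
    (stepanovMonomial z (q * D) t).natDegree ≤ q * D * D + (2 * d + 1) * (q * D) := by
  obtain ⟨⟨i, hi⟩, ⟨j, hj⟩, ⟨k, hk⟩⟩ := t
  rw [natDegree_stepanovMonomial hz0 hz]
  calc D * (q * i + d * j) + k ≤ D * (q * (D + d) + d * q) + q * D := by
        have : D ≤ q * D := Nat.le_mul_of_pos_left D (by lia)
        gcongr <;> lia
    _ = q * D * D + (2 * d + 1) * (q * D) := by ring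

theorem exists_stepanovRelation (hz : z.natDegree = d * D) (hlt : D + d + 1 < q * D) (a : K) :
    ∃ w : Fin (D + d + 1) × Fin q × Fin D → K, (∃ t, w t ≠ 0) ∧
      ∑ t, C (w t) * (X ^ (t.2.2 * (q * D) + t.1 : ℕ) * (C a - z) ^ (t.2.1 : ℕ)) = 0 := by
  refine exists_sum_C_mul_eq_zero (E := D * (q * D) + (D + d + 1) + d * (q * D)) ?_ ?_
  · rintro ⟨⟨i, hi⟩, ⟨j, hj⟩, ⟨k, hk⟩⟩
    have natDegree_sub : (C a - z).natDegree ≤ d * D := by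
      refine (natDegree_sub_le _ _).trans ?_
      simp [hz]
    calc (X ^ (k * (q * D) + i) * (C a - z) ^ j).natDegree
        ≤ (k * (q * D) + i) + j * (d * D) := by
          refine natDegree_mul_le_of_le (natDegree_X_pow_le _) ?_
          exact natDegree_pow_le_of_le j natDegree_sub
      _ < D * (q * D) + (D + d + 1) + q * (d * D) := by
          have : k * (q * D) ≤ D * (q * D) := Nat.mul_le_mul_right _ hk.le
          have : j * (d * D) ≤ q * (d * D) := Nat.mul_le_mul_right _ hj.le
          lia
      _ = D * (q * D) + (D + d + 1) + d * (q * D) := by ring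
  · simp only [Fintype.card_prod, Fintype.card_fin]
    nlinarith

variable {p N : ℕ}

/- On the solutions `x`, raising to the power `r = p ^ N` turns `X ^ (k + i r) z ^ j` into
`X ^ (k r + i) (a - z) ^ j`. The latter polynomials have much lower degree and hence satisfy a
linear relation; taking `r`-th roots of its coefficients gives the auxiliary polynomial. -/
theorem eval_stepanovMonomial_pow {x a : K} (hx : x ^ (p ^ N) ^ 2 = x)
    (hzx : z.eval x ^ p ^ N = a - z.eval x) {I : ℕ} (t : Fin I × Fin q × Fin D) :
    (stepanovMonomial z (p ^ N) t).eval x ^ p ^ N =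
      (X ^ (t.2.2 * p ^ N + t.1 : ℕ) * (C a - z) ^ (t.2.1 : ℕ)).eval x := by
  have hxi : x ^ ((t.1 : ℕ) * p ^ N * p ^ N) = x ^ (t.1 : ℕ) := by
    rw [mul_assoc, ← sq, mul_comm, pow_mul, hx]
  simp only [stepanovMonomial, eval_mul, eval_pow, eval_X, eval_sub, eval_C, mul_pow, ← hzx]
  rw [← pow_mul x, add_mul, pow_add, hxi, ← pow_add, ← pow_mul, ← pow_mul, mul_comm (p ^ N)]

variable [ExpChar K p] [PerfectRing K p]

theorem exists_stepanovPolynomial (hz : z.natDegree = d * D) (hqD : q * D = p ^ N)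
    (hqd : Nat.Coprime q d) (hlt : D + d + 1 < q * D) (a : K) :
    ∃ G : K[X], G ≠ 0 ∧ G.natDegree ≤ q * D * D + (2 * d + 1) * (q * D) ∧
      ∀ x : K, x ^ (p ^ N) ^ 2 = x → z.eval x ^ p ^ N = a - z.eval x → G.eval x = 0 := by
  have d_ne_zero : d ≠ 0 := by
    rintro rfl
    rw [Nat.coprime_zero_right] at hqd
    lia
  have hz0 : z ≠ 0 := by
    rintro rfl
    have : d * D ≠ 0 := mul_ne_zero d_ne_zero (by rintro rfl; lia)
    exact this (by simpa using hz.symm)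
  obtain ⟨w, ⟨t₀, ht₀⟩, relation⟩ := exists_stepanovRelation hz hlt a
  let root (t : Fin (D + d + 1) × Fin q × Fin D) : K := (iterateFrobeniusEquiv K p N).symm (w t)
  have root_pow t : root t ^ p ^ N = w t := (iterateFrobeniusEquiv K p N).apply_symm_apply (w t)
  let term t := C (root t) * stepanovMonomial z (q * D) t
  have natDegree_term t (ht : term t ≠ 0) :
      (term t).natDegree = (stepanovMonomial z (q * D) t).natDegree :=
    natDegree_C_mul fun h ↦ ht (by simp [term, h])
  refine ⟨∑ t, term t, ?_, ?_, fun x hx hzx ↦ ?_⟩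
  · refine sum_ne_zero_of_natDegree_injective (t₀ := t₀) (fun t t' ht ht' h ↦ ?_) ?_
    · rw [natDegree_term t ht, natDegree_term t' ht', natDegree_stepanovMonomial hz0 hz,
        natDegree_stepanovMonomial hz0 hz] at h
      exact stepanovExponent_injective hqd h
    · refine mul_ne_zero (C_ne_zero.2 ?_)
        (mul_ne_zero (pow_ne_zero _ X_ne_zero) (pow_ne_zero _ hz0))
      simpa [root] using ht₀
  · exact natDegree_sum_le_of_forall_le _ _ fun t _ ↦
      (natDegree_C_mul_le _ _).trans (natDegree_stepanovMonomial_le hz0 hz t)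
  · have := congrArg (eval x) relation
    rw [hqD, eval_zero, eval_finsetSum] at this
    refine eq_zero_of_pow_eq_zero (n := p ^ N) ?_
    rw [eval_finsetSum, sum_pow_char_pow, ← this]
    refine Finset.sum_congr rfl fun t _ ↦ ?_
    rw [eval_C_mul, eval_C_mul, mul_pow, root_pow, hqD, eval_stepanovMonomial_pow hx hzx]

theorem card_le_of_eval_pow_eq_sub (hz : z.natDegree = d * D) (hqD : q * D = p ^ N)
    (hqd : Nat.Coprime q d) (hlt : D + d + 1 < q * D) (a : K) (s : Finset K)
    (hs : ∀ x ∈ s, x ^ (p ^ N) ^ 2 = x ∧ z.eval x ^ p ^ N = a - z.eval x) :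
    s.card ≤ q * D * D + (2 * d + 1) * (q * D) := by
  obtain ⟨G, G_ne_zero, degree_G, G_root⟩ := exists_stepanovPolynomial hz hqD hqd hlt a
  have subset : s.val ⊆ G.roots := fun x hx ↦
    (mem_roots G_ne_zero).2 (G_root x (hs x hx).1 (hs x hx).2)
  exact (card_le_degree_of_subset_roots subset).trans degree_G

end Stepanov

section Orbits

/-- The first `j` points `x, φ x, …, φ^[j - 1] x` of the orbit of `x` under `φ`, with
multiplicity. -/
def orbitSegment {α : Type*} (φ : α → α) (x : α) (j : ℕ) : Multiset α :=
  (Multiset.range j).map fun i ↦ φ^[i] x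

variable {α : Type*} {φ : α → α} {x : α}

theorem card_orbitSegment (φ : α → α) (x : α) (j : ℕ) : (orbitSegment φ x j).card = j := by
  simp [orbitSegment]

theorem mem_orbitSegment_self {j : ℕ} (hj : j ≠ 0) : x ∈ orbitSegment φ x j :=
  Multiset.mem_map.2 ⟨0, Multiset.mem_range.2 (Nat.pos_of_ne_zero hj), rfl⟩

theorem map_orbitSegment {j : ℕ} (hx : Function.IsPeriodicPt φ j x) :
    (orbitSegment φ x j).map φ = orbitSegment φ x j := by
  rcases j with _ | j
  · rfl
  have shift : (orbitSegment φ x (j + 1)).map φ = (Multiset.range (j + 1)).map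
      fun i ↦ φ^[i + 1] x := by
    simp only [orbitSegment, Multiset.map_map, Function.comp_def, Function.iterate_succ_apply']
  rw [shift, Multiset.range_succ, Multiset.map_cons, hx.eq, orbitSegment, add_comm j 1,
    Multiset.range_add]
  simp [add_comm, Function.comp_def, Function.iterate_succ_apply]

theorem orbitSegment_mul {e : ℕ} (hx : Function.IsPeriodicPt φ e x) (k : ℕ) :
    orbitSegment φ x (e * k) = k • orbitSegment φ x e := by
  induction k with
  | zero => simp [orbitSegment]
  | succ k ih =>
    rw [succ_nsmul, ← ih, orbitSegment, Nat.mul_succ, Multiset.range_add, Multiset.map_add,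
      Multiset.map_map]
    refine congrArg _ (Multiset.map_congr rfl fun i _ ↦ ?_)
    rw [Function.comp_apply, add_comm, Function.iterate_add_apply, (hx.mul_const k).eq]

theorem nodup_orbitSegment_minimalPeriod (φ : α → α) (x : α) :
    (orbitSegment φ x (Function.minimalPeriod φ x)).Nodup :=
  Multiset.Nodup.map_on (fun _ hi _ hj h ↦ Function.iterate_injOn_Iio_minimalPeriod
    (Multiset.mem_range.1 hi) (Multiset.mem_range.1 hj) h) (Multiset.nodup_range _)

variable (hφ : Function.Injective φ) {s : Multiset α} (hs : s.map φ = s)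

include hφ hs

theorem count_iterate_eq (x : α) (i : ℕ) : s.count (φ^[i] x) = s.count x := by
  induction i with
  | zero => rfl
  | succ i ih =>
    rw [Function.iterate_succ_apply', ← ih]
    conv_lhs => rw [← hs]
    exact Multiset.count_map_eq_count' φ s hφ _

theorem mem_periodicPts_of_map_eq (hx : x ∈ s) : x ∈ Function.periodicPts φ := by
  have maps (i : ℕ) : φ^[i] x ∈ s.toFinset := by
    rw [Multiset.mem_toFinset, ← Multiset.count_pos, count_iterate_eq hφ hs, Multiset.count_pos]
    exact hx
  obtain ⟨i, -, j, -, hne, heq⟩ := Set.infinite_univ.exists_ne_map_eq_of_mapsTo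
    (fun i _ ↦ maps i) s.toFinset.finite_toSet
  wlog hij : i < j generalizing i j
  · exact this j i hne.symm heq.symm (by lia)
  refine Function.mk_mem_periodicPts (Nat.sub_pos_of_lt hij) (hφ.iterate i ?_)
  rw [← Function.iterate_add_apply, Nat.add_sub_cancel' hij.le, heq]

theorem nsmul_orbitSegment_le_iff (hx : x ∈ s) (k : ℕ) :
    k • orbitSegment φ x (Function.minimalPeriod φ x) ≤ s ↔ k ≤ s.count x := by
  have nodup := nodup_orbitSegment_minimalPeriod φ x
  have period_ne_zero : Function.minimalPeriod φ x ≠ 0 :=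
    (Function.minimalPeriod_pos_of_mem_periodicPts (mem_periodicPts_of_map_eq hφ hs hx)).ne'
  constructor
  · intro h
    have := Multiset.count_le_of_le x h
    rwa [Multiset.count_nsmul, Multiset.count_eq_one_of_mem nodup
      (mem_orbitSegment_self period_ne_zero), mul_one] at this
  · intro h
    refine Multiset.le_iff_count.2 fun y ↦ ?_
    rw [Multiset.count_nsmul]
    by_cases hy : y ∈ orbitSegment φ x (Function.minimalPeriod φ x)
    · obtain ⟨i, -, rfl⟩ := Multiset.mem_map.1 hy
      rwa [Multiset.count_eq_one_of_mem nodup hy, mul_one, count_iterate_eq hφ hs]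
    · rw [Multiset.count_eq_zero_of_notMem hy, mul_zero]
      exact Nat.zero_le _

theorem card_periods_eq_count (hx : x ∈ s) :
    ((Finset.range s.card).filter fun i ↦ Function.IsPeriodicPt φ (s.card - i) x ∧
      orbitSegment φ x (s.card - i) ≤ s).card = s.count x := by
  let e := Function.minimalPeriod φ x
  have hpos : 0 < e :=
    Function.minimalPeriod_pos_of_mem_periodicPts (mem_periodicPts_of_map_eq hφ hs hx)
  have periodic : Function.IsPeriodicPt φ e x := Function.isPeriodicPt_minimalPeriod φ x
  have le_iff (k : ℕ) : orbitSegment φ x (e * k) ≤ s ↔ k ≤ s.count x := by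
    rw [orbitSegment_mul periodic, nsmul_orbitSegment_le_iff hφ hs hx]
  have mul_le (k : ℕ) (hk : k ≤ s.count x) : e * k ≤ s.card := by
    simpa [card_orbitSegment] using Multiset.card_le_card ((le_iff k).2 hk)
  have card_Icc : (Finset.Icc 1 (s.count x)).card = s.count x := by simp
  refine Eq.trans (Finset.card_bij (fun k _ ↦ s.card - e * k) (fun k hk ↦ ?_)
    (fun k hk l hl h ↦ ?_) (fun i hi ↦ ?_)).symm card_Icc
  · obtain ⟨hk1, hk2⟩ := Finset.mem_Icc.1 hk
    have := mul_le k hk2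
    have : 0 < e * k := Nat.mul_pos hpos hk1
    rw [Finset.mem_filter, Finset.mem_range, Nat.sub_sub_self (mul_le k hk2)]
    exact ⟨by lia, periodic.mul_const k, (le_iff k).2 hk2⟩
  · have := mul_le k (Finset.mem_Icc.1 hk).2
    have := mul_le l (Finset.mem_Icc.1 hl).2
    exact Nat.eq_of_mul_eq_mul_left hpos (by lia)
  · obtain ⟨hi, per, hle⟩ := Finset.mem_filter.1 hi
    rw [Finset.mem_range] at hi
    obtain ⟨k, hk⟩ := per.minimalPeriod_dvd
    change s.card - i = e * k at hk
    refine ⟨k, Finset.mem_Icc.2 ⟨Nat.pos_of_ne_zero ?_, (le_iff k).1 (hk ▸ hle)⟩, by lia⟩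
    rintro rfl
    lia

theorem sum_card_orbitSegment_le {P : ℕ → Finset α}
    (hP : ∀ j ≠ 0, ∀ x, x ∈ P j ↔ Function.IsPeriodicPt φ j x) :
    ∑ i ∈ Finset.range s.card,
      ((P (s.card - i)).filter fun x ↦ orbitSegment φ x (s.card - i) ≤ s).card = s.card := by
  have restrict (i : ℕ) (hi : i ∈ Finset.range s.card) :
      (P (s.card - i)).filter (fun x ↦ orbitSegment φ x (s.card - i) ≤ s) =
        s.toFinset.filter fun x ↦ Function.IsPeriodicPt φ (s.card - i) x ∧
          orbitSegment φ x (s.card - i) ≤ s := by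
    have hj : s.card - i ≠ 0 := by
      have := Finset.mem_range.1 hi
      lia
    ext x
    rw [Finset.mem_filter, Finset.mem_filter, hP _ hj, Multiset.mem_toFinset]
    exact ⟨fun h ↦ ⟨Multiset.mem_of_le h.2 (mem_orbitSegment_self hj), h⟩, And.right⟩
  rw [Finset.sum_congr rfl fun i hi ↦ congrArg Finset.card (restrict i hi)]
  simp only [Finset.card_filter]
  rw [Finset.sum_comm, ← Multiset.toFinset_sum_count_eq]
  refine Finset.sum_congr rfl fun x hx ↦ ?_
  rw [← Finset.card_filter, Multiset.toFinset_sum_count_eq,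
    card_periods_eq_count hφ hs (Multiset.mem_toFinset.1 hx)]

end Orbits

section ArootsOverAlgClosed

theorem aroots_le_aroots_iff_dvd {F K : Type*} [Field F] [Field K] [Algebra F K]
    [IsAlgClosed K] {G g : F[X]} (hG : G ≠ 0) (hg : g ≠ 0) :
    G.aroots K ≤ g.aroots K ↔ G ∣ g := by
  rw [← map_dvd_map' (algebraMap F K)]
  exact ((IsAlgClosed.splits _).dvd_iff_roots_le_roots (map_ne_zero hG) (map_ne_zero hg)).symm

theorem eq_of_aroots_eq {F K : Type*} [Field F] [Field K] [Algebra F K] [IsAlgClosed K]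
    {g h : F[X]} (hg : g.Monic) (hh : h.Monic) (eq : g.aroots K = h.aroots K) : g = h :=
  eq_of_monic_of_associated hg hh <| associated_of_dvd_dvd
    ((aroots_le_aroots_iff_dvd hg.ne_zero hh.ne_zero).1 eq.le)
    ((aroots_le_aroots_iff_dvd hh.ne_zero hg.ne_zero).1 eq.ge)

end ArootsOverAlgClosed

section FrobeniusOrbits

open FiniteField (frobeniusAlgHom)

variable {F K : Type*} [Field F] [Fintype F] [Field K] [Algebra F K]

theorem iterate_frobeniusAlgHom (i : ℕ) (x : K) :
    (frobeniusAlgHom F K)^[i] x = x ^ Fintype.card F ^ i := by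
  rw [FiniteField.coe_frobeniusAlgHom, pow_iterate]

theorem mem_range_algebraMap_of_pow_card_eq {x : K} (hx : x ^ Fintype.card F = x) :
    x ∈ (algebraMap F K).range := by
  have splits : (X ^ Fintype.card F - X : F[X]).Splits :=
    Nat.card_eq_fintype_card (α := F) ▸ splits_X_pow_nat_card_sub_X
  refine splits.mem_range_of_isRoot
    (FiniteField.X_pow_card_sub_X_ne_zero F Fintype.one_lt_card) ?_
  simp [hx]

theorem exists_monic_aroots_eq {s : Multiset K} (hs : s.map (frobeniusAlgHom F K) = s) :
    ∃ g : F[X], g.Monic ∧ g.aroots K = s := by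
  let G : K[X] := (s.map fun x ↦ X - C x).prod
  have map_G : G.map (frobeniusAlgHom F K : K →+* K) = G := by
    simp only [G, Polynomial.map_multiset_prod, Multiset.map_map]
    conv_rhs => rw [← hs, Multiset.map_map]
    simp
  have lifts : G ∈ lifts (algebraMap F K) := by
    refine (lifts_iff_coeff_lifts _).2 fun n ↦ mem_range_algebraMap_of_pow_card_eq ?_
    simpa [coeff_map] using congrArg (coeff · n) map_G
  obtain ⟨g, hg, -, monic⟩ := lifts_and_natDegree_eq_and_monic lifts
    (monic_multisetProd_X_sub_C s)
  exact ⟨g, monic, by rw [aroots, hg, roots_multiset_prod_X_sub_C]⟩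

theorem map_frobeniusAlgHom_aroots [IsAlgClosed K] (g : F[X]) :
    (g.aroots K).map (frobeniusAlgHom F K) = g.aroots K := by
  have := (IsAlgClosed.splits (g.map (algebraMap F K))).roots_map
    (frobeniusAlgHom F K : K →+* K)
  rw [Polynomial.map_map, AlgHom.comp_algebraMap] at this
  exact this.symm

variable (F) in
/-- The finset of monic polynomials of degree `m` over a finite field. -/
noncomputable def monicOfDegree (m : ℕ) : Finset F[X] :=
  Finset.univ.map (((monicEquivDegreeLT m).trans
    (degreeLTEquiv F m).toEquiv).symm.toEmbedding.trans (Function.Embedding.subtype _))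

theorem mem_monicOfDegree {m : ℕ} {g : F[X]} :
    g ∈ monicOfDegree F m ↔ g.Monic ∧ g.natDegree = m := by
  let e := (monicEquivDegreeLT (R := F) m).trans (degreeLTEquiv F m).toEquiv
  refine Finset.mem_map.trans ⟨?_, fun hg ↦ ⟨e ⟨g, hg⟩, Finset.mem_univ _, ?_⟩⟩
  · rintro ⟨v, -, rfl⟩
    exact (e.symm v).2
  · exact congrArg Subtype.val (e.symm_apply_apply ⟨g, hg⟩)

variable (F) in
theorem card_monicOfDegree (m : ℕ) : (monicOfDegree F m).card = Fintype.card F ^ m := by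
  simp [monicOfDegree]

theorem add_mem_monicOfDegree {m k : ℕ} (hk : k < m) {g : F[X]} (hg : g ∈ monicOfDegree F m)
    (t : F) : g + C t * X ^ k ∈ monicOfDegree F m := by
  obtain ⟨monic, rfl⟩ := mem_monicOfDegree.1 hg
  have degree_lt : (C t * X ^ k).degree < g.degree :=
    (degree_C_mul_X_pow_le _ _).trans_lt
      (by rw [degree_eq_natDegree monic.ne_zero]; exact_mod_cast hk)
  exact mem_monicOfDegree.2 ⟨monic.add_of_left degree_lt,
    natDegree_add_eq_left_of_degree_lt degree_lt⟩

variable (F K) in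
/-- The points of `K` over the degree-`m` extension of the finite field `F` (for `m ≠ 0`), i.e. the
fixed points of the `m`-th power of the Frobenius of `F`. -/
noncomputable def extensionPoints (m : ℕ) : Finset K :=
  (X ^ Fintype.card F ^ m - X : K[X]).roots.toFinset

omit [Algebra F K] in
theorem mem_extensionPoints {m : ℕ} (hm : m ≠ 0) {x : K} :
    x ∈ extensionPoints F K m ↔ x ^ Fintype.card F ^ m = x := by
  rw [extensionPoints, Multiset.mem_toFinset,
    mem_roots (FiniteField.X_pow_card_pow_sub_X_ne_zero K hm Fintype.one_lt_card)]
  simp [sub_eq_zero]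

theorem mem_extensionPoints_iff_isPeriodicPt {m : ℕ} (hm : m ≠ 0) (x : K) :
    x ∈ extensionPoints F K m ↔ Function.IsPeriodicPt (frobeniusAlgHom F K) m x := by
  rw [mem_extensionPoints hm, Function.IsPeriodicPt, Function.IsFixedPt, iterate_frobeniusAlgHom]

variable (F K) in
theorem card_extensionPoints [IsAlgClosed K] {m : ℕ} (hm : m ≠ 0) :
    (extensionPoints F K m).card = Fintype.card F ^ m := by
  obtain ⟨p, hp⟩ := CharP.exists F
  have := charP_of_injective_algebraMap (algebraMap F K).injective p
  obtain ⟨k, -, hk⟩ := FiniteField.card F p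
  have p_dvd : p ∣ Fintype.card F ^ m := dvd_pow (hk ▸ dvd_pow_self p k.ne_zero) hm
  rw [extensionPoints,
    Multiset.toFinset_card_of_nodup (nodup_roots (galois_poly_separable p _ p_dvd)),
    splits_iff_card_roots.1 (IsAlgClosed.splits _),
    FiniteField.X_pow_card_pow_sub_X_natDegree_eq K hm Fintype.one_lt_card]

variable (F K) in
theorem extensionPoints_one :
    extensionPoints F K 1 = Finset.univ.map ⟨algebraMap F K, (algebraMap F K).injective⟩ := by
  ext x
  rw [mem_extensionPoints one_ne_zero, pow_one, Finset.mem_map]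
  constructor
  · intro hx
    obtain ⟨t, ht⟩ := mem_range_algebraMap_of_pow_card_eq hx
    exact ⟨t, Finset.mem_univ t, ht⟩
  · rintro ⟨t, -, rfl⟩
    simp [← map_pow, FiniteField.pow_card]

end FrobeniusOrbits

section LFunction

open FiniteField (frobeniusAlgHom)

variable {F K R : Type*} [Field F] [Fintype F] [Field K] [Algebra F K] [CommRing R]

variable (F) in
/-- The `m`-th coefficient of the L-function attached to `χ`: the sum over monic `g` of degree `m`
of the product of the values of `χ` at the roots of `g`. -/
noncomputable def lCoeff (χ : K → R) (m : ℕ) : R :=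
  ∑ g ∈ monicOfDegree F m, ((g.aroots K).map χ).prod

variable (F) in
/-- The `m`-th coefficient of the logarithmic derivative of the L-function attached to `χ`: a sum
over the points of the degree-`m` extension, each weighted by `χ` along its Frobenius orbit. -/
noncomputable def lPowerSum (χ : K → R) (m : ℕ) : R :=
  ∑ x ∈ extensionPoints F K m, ((orbitSegment (frobeniusAlgHom F K) x m).map χ).prod

variable (F) in
theorem lCoeff_zero (χ : K → R) : lCoeff F χ 0 = 1 := by
  have : monicOfDegree F 0 = {1} := by
    ext g
    rw [mem_monicOfDegree, Finset.mem_singleton]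
    exact ⟨fun h ↦ h.1.natDegree_eq_zero.1 h.2, fun h ↦ by simp [h]⟩
  simp [lCoeff, this]

theorem lCoeff_mul_prod_orbitSegment [IsAlgClosed K] (χ : K → R) {i j : ℕ} {x : K}
    (hx : Function.IsPeriodicPt (frobeniusAlgHom F K) j x) :
    lCoeff F χ i * ((orbitSegment (frobeniusAlgHom F K) x j).map χ).prod =
      ∑ g ∈ monicOfDegree F (i + j) with orbitSegment (frobeniusAlgHom F K) x j ≤ g.aroots K,
        ((g.aroots K).map χ).prod := by
  obtain ⟨G, monic_G, aroots_G⟩ := exists_monic_aroots_eq (map_orbitSegment hx)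
  have natDegree_G : G.natDegree = j := by
    rw [← IsAlgClosed.card_aroots_eq_natDegree (B := K), aroots_G, card_orbitSegment]
  have aroots_mul_G {h : F[X]} (hh : h.Monic) : (h * G).aroots K = h.aroots K + G.aroots K :=
    aroots_mul (hh.mul monic_G).ne_zero
  rw [lCoeff, Finset.sum_mul, ← aroots_G]
  refine Finset.sum_bij (fun h _ ↦ h * G) (fun h hh ↦ ?_)
    (fun _ _ _ _ eq ↦ mul_right_cancel₀ monic_G.ne_zero eq) (fun g hg ↦ ?_) (fun h hh ↦ ?_)
  · obtain ⟨monic_h, rfl⟩ := mem_monicOfDegree.1 hh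
    rw [Finset.mem_filter, mem_monicOfDegree, monic_h.natDegree_mul monic_G, natDegree_G,
      aroots_mul_G monic_h]
    exact ⟨⟨monic_h.mul monic_G, rfl⟩, Multiset.le_add_left _ _⟩
  · rw [Finset.mem_filter, mem_monicOfDegree] at hg
    obtain ⟨⟨monic_g, natDegree_g⟩, hle⟩ := hg
    obtain ⟨h, rfl⟩ := (aroots_le_aroots_iff_dvd monic_G.ne_zero monic_g.ne_zero).1 hle
    have monic_h := monic_G.of_mul_monic_left monic_g
    rw [monic_G.natDegree_mul monic_h] at natDegree_g
    exact ⟨h, mem_monicOfDegree.2 ⟨monic_h, by lia⟩, mul_comm _ _⟩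
  · rw [aroots_mul_G (mem_monicOfDegree.1 hh).1, Multiset.map_add, Multiset.prod_add]

theorem isNewtonPair_lCoeff_lPowerSum [IsAlgClosed K] (χ : K → R) :
    IsNewtonPair (lCoeff F χ) (lPowerSum F χ) := by
  intro m
  let φ := frobeniusAlgHom F K
  have expand (i : ℕ) (hi : i ∈ Finset.range m) : lCoeff F χ i * lPowerSum F χ (m - i) =
      ∑ g ∈ monicOfDegree F m, (((extensionPoints F K (m - i)).filter fun x ↦
        orbitSegment φ x (m - i) ≤ g.aroots K).card : R) * ((g.aroots K).map χ).prod := by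
    have hi := Finset.mem_range.1 hi
    have product (x : K) (hx : x ∈ extensionPoints F K (m - i)) :=
      lCoeff_mul_prod_orbitSegment χ (i := i)
        ((mem_extensionPoints_iff_isPeriodicPt (by lia) x).1 hx)
    rw [lPowerSum, Finset.mul_sum, Finset.sum_congr rfl product, Nat.add_sub_cancel' hi.le]
    simp only [Finset.card_filter, Finset.sum_filter, Nat.cast_sum, Finset.sum_mul, Nat.cast_ite,
      Nat.cast_one, Nat.cast_zero, ite_mul, one_mul, zero_mul]
    exact Finset.sum_comm
  rw [Finset.sum_congr rfl expand, Finset.sum_comm, lCoeff, Finset.mul_sum]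
  refine Finset.sum_congr rfl fun g hg ↦ ?_
  have card_aroots : (g.aroots K).card = m :=
    IsAlgClosed.card_aroots_eq_natDegree.trans (mem_monicOfDegree.1 hg).2
  have count := sum_card_orbitSegment_le (φ := φ) φ.toRingHom.injective
    (map_frobeniusAlgHom_aroots g) fun _ hj ↦ mem_extensionPoints_iff_isPeriodicPt (F := F) hj
  rw [card_aroots] at count
  rw [← Finset.sum_mul, ← Nat.cast_sum, count]

end LFunction

section WeilBound

theorem norm_sum_addChar_comp_le {A ι : Type*} [AddCommGroup A] [Fintype A] {ψ : AddChar A ℂ}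
    (hψ : ψ ≠ 0) {s : Finset ι} {τ : ι → A} {M : ℕ}
    (hM : ∀ t, (s.filter fun x ↦ τ x = t).card ≤ M) :
    ‖∑ x ∈ s, ψ (τ x)‖ ≤ Fintype.card A * M - s.card := by
  let N (t : A) : ℕ := (s.filter fun x ↦ τ x = t).card
  have sum_N : ∑ t, (N t : ℝ) = s.card := by
    exact_mod_cast (Finset.card_eq_sum_card_fiberwise fun x _ ↦ Finset.mem_coe.2
      (Finset.mem_univ (τ x))).symm
  have by_fibres : ∑ x ∈ s, ψ (τ x) = ∑ t, (N t : ℂ) * ψ t := by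
    rw [← Finset.sum_fiberwise s τ]
    refine Finset.sum_congr rfl fun t _ ↦ ?_
    rw [Finset.sum_congr rfl fun x hx ↦ congrArg ψ (Finset.mem_filter.1 hx).2, Finset.sum_const,
      nsmul_eq_mul]
  have centred : ∑ t, (N t : ℂ) * ψ t = -∑ t, ((M - N t : ℝ) : ℂ) * ψ t := by
    simp [sub_mul, Finset.sum_sub_distrib, ← Finset.mul_sum, AddChar.sum_eq_zero_iff_ne_zero.2 hψ]
  rw [by_fibres, centred, norm_neg]
  refine (norm_sum_le _ _).trans_eq ?_
  have norm_term (t : A) : ‖((M - N t : ℝ) : ℂ) * ψ t‖ = M - N t := by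
    rw [norm_mul, AddChar.norm_apply, mul_one, Complex.norm_real, Real.norm_of_nonneg]
    exact sub_nonneg.2 (by exact_mod_cast hM t)
  simp only [norm_term, Finset.sum_sub_distrib, sum_N, Finset.sum_const, Finset.card_univ,
    nsmul_eq_mul]

section AlgebraicClosure

open FiniteField (frobeniusAlgHom)

variable {F K : Type*} [Field F] [Field K] [Algebra F K]

theorem neg_one_pow_mul_esymm_aroots [IsAlgClosed K] {g : F[X]} (hg : g.Monic) {k : ℕ}
    (hk : k ≤ g.natDegree) :
    (-1) ^ k * (g.aroots K).esymm k = algebraMap F K (g.coeff (g.natDegree - k)) := by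
  have := coeff_eq_esymm_roots_of_splits (IsAlgClosed.splits (g.map (algebraMap F K)))
    (k := g.natDegree - k) (by rw [natDegree_map]; lia)
  rw [(hg.map _).leadingCoeff, natDegree_map, Nat.sub_sub_self hk, coeff_map, one_mul] at this
  exact this.symm

theorem sum_map_aeval (f : F[X]) (s : Multiset K) :
    (s.map (aeval · f)).sum =
      ∑ k ∈ Finset.range (f.natDegree + 1), algebraMap F K (f.coeff k) * powerSum s k := by
  simp only [aeval_eq_sum_range, Algebra.smul_def, Multiset.sum_map_sum, Multiset.sum_map_mul_left,
    powerSum]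

theorem powerSum_aroots_add [IsAlgClosed K] {g : F[X]} {t : F} {m d k : ℕ} (hk : k ≤ d)
    (hd : d ≤ m) (hg : g.Monic ∧ g.natDegree = m)
    (hg' : (g + C t * X ^ (m - d)).Monic ∧ (g + C t * X ^ (m - d)).natDegree = m) :
    powerSum ((g + C t * X ^ (m - d)).aroots K) k =
      powerSum (g.aroots K) k - algebraMap F K (k * if k = d then t else 0) := by
  obtain ⟨monic, rfl⟩ := hg
  set g' := g + C t * X ^ (g.natDegree - d) with g'_def
  have esymm_eq {k : ℕ} (hk : k ≤ d) : (-1) ^ k * (g'.aroots K).esymm k =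
      (-1) ^ k * (g.aroots K).esymm k + algebraMap F K (if k = d then t else 0) := by
    rw [neg_one_pow_mul_esymm_aroots hg'.1 (by lia), neg_one_pow_mul_esymm_aroots monic (by lia),
      hg'.2, ← map_add, g'_def, coeff_add, coeff_C_mul_X_pow]
    congr 3
    exact propext (by lia)
  rcases Nat.eq_zero_or_pos k with rfl | hk_pos
  · simp [powerSum, IsAlgClosed.card_aroots_eq_natDegree, hg'.2]
  · have := (isNewtonPair_esymm_powerSum (g.aroots K)).sub_eq_of_agree
      (isNewtonPair_esymm_powerSum (g'.aroots K)) (by simp [multisetEsymm_zero])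
      (fun i hi ↦ by simp [esymm_eq hi.le, hi.ne]) hk_pos hk
    rw [esymm_eq hk] at this
    rw [map_mul, map_natCast]
    linear_combination -this

theorem sum_aeval_aroots_add [IsAlgClosed K] (f : F[X]) {g : F[X]} (t : F) {m : ℕ}
    (hm : f.natDegree ≤ m) (hg : g.Monic ∧ g.natDegree = m)
    (hg' : (g + C t * X ^ (m - f.natDegree)).Monic ∧
      (g + C t * X ^ (m - f.natDegree)).natDegree = m) :
    (((g + C t * X ^ (m - f.natDegree)).aroots K).map (aeval · f)).sum =
      ((g.aroots K).map (aeval · f)).sum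
        - algebraMap F K (f.leadingCoeff * f.natDegree * t) := by
  rw [sum_map_aeval, sum_map_aeval, Finset.sum_congr rfl fun k hk ↦ by
    rw [powerSum_aroots_add (Nat.lt_succ_iff.1 (Finset.mem_range.1 hk)) hm hg hg', mul_sub,
      ← map_mul (algebraMap F K)]]
  simp [Finset.sum_sub_distrib, mul_assoc, ← map_sum]

theorem prod_addChar_eq {ψ : AddChar F ℂ} (π : K →ₗ[F] F) (f : F[X]) (s : Multiset K) :
    (s.map fun x ↦ ψ (π (aeval x f))).prod = ψ (π (s.map (aeval · f)).sum) := by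
  induction s using Multiset.induction_on with
  | empty => simp
  | cons x s ih => simp [ih, AddChar.map_add_eq_mul]

variable [Fintype F] {ψ : AddChar F ℂ} {π : K →ₗ[F] F} {f : F[X]}

theorem lCoeff_eq_zero [IsAlgClosed K] (hψ : ψ ≠ 0) (hπ : ∀ t, π (algebraMap F K t) = t)
    (hf : (f.natDegree : F) ≠ 0) {m : ℕ} (hm : f.natDegree ≤ m) :
    lCoeff F (fun x : K ↦ ψ (π (aeval x f))) m = 0 := by
  obtain ⟨u, hu⟩ := AddChar.ne_zero_iff.1 hψ
  have natDegree_pos : 0 < f.natDegree := Nat.pos_of_ne_zero fun h ↦ hf (by simp [h])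
  have leadingCoeff_ne : f.leadingCoeff ≠ 0 :=
    leadingCoeff_ne_zero.2 (ne_zero_of_natDegree_gt natDegree_pos)
  let t : F := u / (f.leadingCoeff * f.natDegree)
  have ht : f.leadingCoeff * f.natDegree * t = u :=
    mul_div_cancel₀ _ (mul_ne_zero leadingCoeff_ne hf)
  -- Adding `t X ^ (m - d)`, with `d` the degree of `f`, multiplies the term at `g` by `ψ (-u)`.
  have maps (t : F) {g : F[X]} (hg : g ∈ monicOfDegree F m) :
      g + C t * X ^ (m - f.natDegree) ∈ monicOfDegree F m :=
    add_mem_monicOfDegree (by lia) hg t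
  refine eq_zero_of_mul_eq_self_left hu ?_
  rw [lCoeff, Finset.mul_sum]
  symm
  refine Finset.sum_nbij' (· + C t * X ^ (m - f.natDegree)) (· + C (-t) * X ^ (m - f.natDegree))
    (fun g ↦ maps t) (fun g ↦ maps (-t)) (by simp) (by simp) fun g hg ↦ ?_
  rw [prod_addChar_eq, prod_addChar_eq, sum_aeval_aroots_add f t hm
    (mem_monicOfDegree.1 hg) (mem_monicOfDegree.1 (maps t hg)), ht, map_sub, hπ,
    ← AddChar.map_add_eq_mul, add_sub_cancel]

theorem exists_algebraMap_eq_sum_pow {x : K} {m : ℕ} (hx : x ^ Fintype.card F ^ m = x) :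
    ∃ t, algebraMap F K t = ∑ i ∈ Finset.range m, x ^ Fintype.card F ^ i := by
  refine mem_range_algebraMap_of_pow_card_eq ?_
  have frobenius_eq := map_sum (frobeniusAlgHom F K) (fun i ↦ x ^ Fintype.card F ^ i)
    (Finset.range m)
  simp only [FiniteField.coe_frobeniusAlgHom, ← pow_mul, ← pow_succ] at frobenius_eq
  have rotate := Finset.sum_range_succ (fun i ↦ x ^ Fintype.card F ^ i) m
  rw [Finset.sum_range_succ', pow_zero, pow_one, hx] at rotate
  exact frobenius_eq.trans (add_right_cancel rotate)

theorem aeval_pow_card_pow (x : K) (f : F[X]) (i : ℕ) :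
    aeval (x ^ Fintype.card F ^ i) f = aeval x f ^ Fintype.card F ^ i := by
  induction i with
  | zero => simp
  | succ i ih =>
    rw [pow_succ, pow_mul, pow_mul, ← ih, ← expand_aeval, FiniteField.expand_card, map_pow]

theorem coprime_card_of_natCast_ne_zero {d : ℕ} (hd : (d : F) ≠ 0) :
    Nat.Coprime (Fintype.card F) d := by
  obtain ⟨p, hp⟩ := CharP.exists F
  obtain ⟨k, prime, hk⟩ := FiniteField.card F p
  rw [hk]
  exact Nat.Coprime.pow_left _ ((Nat.Prime.coprime_iff_not_dvd prime).2
    fun h ↦ hd ((CharP.cast_eq_zero_iff F p d).2 h))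

theorem card_filter_sum_pow_le [IsAlgClosed K] (hf : (f.natDegree : F) ≠ 0) {c : ℕ}
    (hc : Fintype.card F ^ c + f.natDegree + 1 < Fintype.card F ^ (c + 1)) (a : K) :
    ((extensionPoints F K (2 * (c + 1))).filter fun x ↦
      ∑ i ∈ Finset.range (2 * (c + 1)), aeval x f ^ Fintype.card F ^ i = a).card ≤
      Fintype.card F ^ (2 * c + 1) + (2 * f.natDegree + 1) * Fintype.card F ^ (c + 1) := by
  obtain ⟨p, hp⟩ := CharP.exists F
  obtain ⟨e, prime, he⟩ := FiniteField.card F p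
  have := charP_of_injective_algebraMap (algebraMap F K).injective p
  have : Fact p.Prime := ⟨prime⟩
  set q := Fintype.card F
  have hq : 1 < q := Fintype.one_lt_card
  have natDegree_pos : 0 < f.natDegree := Nat.pos_of_ne_zero fun h ↦ hf (by simp [h])
  -- Half a trace: for `x` in the extension of degree `2 (c + 1)`, the trace of `f x` is
  -- `z x + (z x) ^ q ^ (c + 1)`.
  let z : K[X] := ∑ i ∈ Finset.range (c + 1), f.map (algebraMap F K) ^ q ^ i
  have natDegree_z : z.natDegree = f.natDegree * q ^ c := by
    rw [natDegree_sum_pow_pow (by rwa [natDegree_map]) hq, natDegree_map]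
  have q_mul : q * q ^ c = p ^ (e * (c + 1)) := by rw [← pow_succ', he, ← pow_mul]
  have bound := card_le_of_eval_pow_eq_sub natDegree_z q_mul
    (coprime_card_of_natCast_ne_zero hf) (by rwa [← pow_succ']) a
    ((extensionPoints F K (2 * (c + 1))).filter fun x ↦
      ∑ i ∈ Finset.range (2 * (c + 1)), aeval x f ^ q ^ i = a) fun x hx ↦ ?_
  · convert bound using 2 <;> ring
  obtain ⟨hx, trace_eq⟩ := Finset.mem_filter.1 hx
  rw [mem_extensionPoints (by lia)] at hx
  have eval_z : z.eval x = ∑ i ∈ Finset.range (c + 1), aeval x f ^ q ^ i := by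
    simp [z, eval_finsetSum, aeval_def, eval_map]
  constructor
  · rw [← q_mul, ← pow_succ', ← pow_mul, mul_comm]
    exact hx
  · rw [eq_sub_iff_add_eq', ← trace_eq, two_mul, Finset.sum_range_add, eval_z, sum_pow_char_pow]
    refine congrArg _ (Finset.sum_congr rfl fun i _ ↦ ?_)
    rw [← q_mul, ← pow_succ', ← pow_mul, ← pow_add, add_comm]

theorem norm_lPowerSum_le [IsAlgClosed K] (hψ : ψ ≠ 0) (hπ : ∀ t, π (algebraMap F K t) = t)
    (hf : (f.natDegree : F) ≠ 0) {c : ℕ}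
    (hc : Fintype.card F ^ c + f.natDegree + 1 < Fintype.card F ^ (c + 1)) :
    ‖lPowerSum F (fun x : K ↦ ψ (π (aeval x f))) (2 * (c + 1))‖ ≤
      Fintype.card F * (2 * f.natDegree + 1) * (Fintype.card F : ℝ) ^ (c + 1) := by
  set q := Fintype.card F
  let m := 2 * (c + 1)
  have hm : m ≠ 0 := by lia
  let trace (x : K) : K := ∑ i ∈ Finset.range m, aeval x f ^ q ^ i
  have algebraMap_trace {x : K} (hx : x ∈ extensionPoints F K m) :
      algebraMap F K (π (trace x)) = trace x := by
    rw [mem_extensionPoints hm] at hx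
    obtain ⟨t, ht⟩ := exists_algebraMap_eq_sum_pow (x := aeval x f) (m := m)
      (by rw [← aeval_pow_card_pow, hx])
    rw [show trace x = algebraMap F K t from ht.symm, hπ]
  have sum_eq : lPowerSum F (fun x : K ↦ ψ (π (aeval x f))) m =
      ∑ x ∈ extensionPoints F K m, ψ (π (trace x)) := by
    refine Finset.sum_congr rfl fun x _ ↦ ?_
    rw [prod_addChar_eq, orbitSegment, Multiset.map_map]
    simp only [Function.comp_def, iterate_frobeniusAlgHom, aeval_pow_card_pow]
    rfl
  have fibre_le (t : F) : ((extensionPoints F K m).filter fun x ↦ π (trace x) = t).card ≤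
      q ^ (2 * c + 1) + (2 * f.natDegree + 1) * q ^ (c + 1) := by
    refine le_trans (Finset.card_le_card fun x hx ↦ ?_)
      (card_filter_sum_pow_le hf hc (algebraMap F K t))
    obtain ⟨mem, rfl⟩ := Finset.mem_filter.1 hx
    exact Finset.mem_filter.2 ⟨mem, (algebraMap_trace mem).symm⟩
  rw [sum_eq]
  refine (norm_sum_addChar_comp_le hψ fibre_le).trans_eq ?_
  rw [card_extensionPoints F K hm]
  push_cast
  ring

end AlgebraicClosure

/-- **Weil's bound** -/
theorem norm_sum_addChar_eval_le {F : Type*} [Field F] [Fintype F] {ψ : AddChar F ℂ} (hψ : ψ ≠ 0)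
    {f : F[X]} (hf : (f.natDegree : F) ≠ 0) :
    ‖∑ x, ψ (f.eval x)‖ ≤ (f.natDegree - 1) * √(Fintype.card F) := by
  let K := AlgebraicClosure F
  let q := Fintype.card F
  obtain ⟨π, hπ⟩ := (Algebra.linearMap F K).exists_leftInverse_of_injective
    (LinearMap.ker_eq_bot.2 (algebraMap F K).injective)
  replace hπ (t : F) : π (algebraMap F K t) = t := LinearMap.congr_fun hπ t
  let χ (x : K) : ℂ := ψ (π (aeval x f))
  have natDegree_pos : 0 < f.natDegree := Nat.pos_of_ne_zero fun h ↦ hf (by simp [h])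
  have growth (c : ℕ) (hc : f.natDegree + 3 ≤ c) :
      ‖lPowerSum F χ (2 * c)‖ ≤ q * (2 * f.natDegree + 1) * (q : ℝ) ^ c := by
    obtain ⟨c, rfl⟩ := Nat.exists_eq_succ_of_ne_zero (by lia : c ≠ 0)
    refine norm_lPowerSum_le hψ hπ hf ?_
    have lt_pow : c < q ^ c := Nat.lt_pow_self Fintype.one_lt_card
    have two_mul_le : 2 * q ^ c ≤ q ^ (c + 1) := by
      rw [pow_succ']
      exact Nat.mul_le_mul_right _ Fintype.one_lt_card
    lia
  have bound := (isNewtonPair_lCoeff_lPowerSum χ).norm_le_mul_sqrt (lCoeff_zero F χ)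
    (n := f.natDegree - 1) (fun m hm ↦ lCoeff_eq_zero hψ hπ hf (by lia))
    (by exact_mod_cast Fintype.card_pos) growth
  have lPowerSum_one : lPowerSum F χ 1 = ∑ x, ψ (f.eval x) := by
    simp [lPowerSum, extensionPoints_one, orbitSegment, χ, aeval_algebraMap_apply, hπ]
  rwa [lPowerSum_one, Nat.cast_pred natDegree_pos] at bound

end WeilBound

section LargeIndex

open FiniteField (frobeniusAlgHom)

variable {F : Type*} [Field F]

theorem toFinset_aroots_taylor {K : Type*} [Field K] [Algebra F K] (c : F) {g : F[X]}
    (hg : g ≠ 0) :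
    ((taylor c g).aroots K).toFinset =
      (g.aroots K).toFinset.map (Equiv.subRight (algebraMap F K c)).toEmbedding := by
  have taylor_ne_zero : taylor c g ≠ 0 := (taylor_eq_zero c g).not.2 hg
  ext x
  rw [Finset.mem_map_equiv, Multiset.mem_toFinset, Multiset.mem_toFinset,
    mem_aroots, mem_aroots, aeval_def, aeval_def, ← eval_map, ← eval_map, map_taylor, taylor_eval]
  simp [hg, taylor_ne_zero]

theorem polyIndexOver_taylor (c : F) (g : F[X]) :
    polyIndexOver F (taylor c g) = polyIndexOver F g := by
  obtain rfl | hg := eq_or_ne g 0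
  · rw [map_zero]
  have := congrArg Finset.card (toFinset_aroots_taylor (K := AlgebraicClosure F) c hg)
  rw [Finset.card_map] at this
  exact congrArg₂ (· - ·) (natDegree_taylor g c) this

theorem card_toFinset_aroots_le {K : Type*} [Field K] [Algebra F K] [IsAlgClosed K] (g : F[X]) :
    (g.aroots K).toFinset.card ≤ g.natDegree :=
  (Multiset.toFinset_card_le _).trans_eq IsAlgClosed.card_aroots_eq_natDegree

theorem exists_monic_aroots_eq_toFinset_val [Finite F] {K : Type*} [Field K] [Algebra F K]
    [IsAlgClosed K] (g : F[X]) : ∃ r : F[X], r.Monic ∧ r.aroots K = (g.aroots K).toFinset.val := by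
  have := Fintype.ofFinite F
  refine exists_monic_aroots_eq ?_
  have := Multiset.dedup_map_of_injective (frobeniusAlgHom F K).toRingHom.injective (g.aroots K)
  exact this.symm.trans (congrArg Multiset.dedup (map_frobeniusAlgHom_aroots g))

theorem le_card_nsmul_dedup {α : Type*} (s : Multiset α) : s ≤ s.card • s.dedup := by
  refine Multiset.le_iff_count.2 fun x ↦ ?_
  by_cases hx : x ∈ s
  · rw [Multiset.count_nsmul, Multiset.count_dedup, if_pos hx, mul_one]
    exact Multiset.count_le_card x s
  · rw [Multiset.count_eq_zero_of_notMem hx]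
    exact Nat.zero_le _

variable [Fintype F]

theorem card_filter_toFinset_aroots_eq_le {K : Type*} [Field K] [Algebra F K] [IsAlgClosed K]
    (n : ℕ) (R : Finset K) :
    ((monicOfDegree F n).filter fun g ↦ (g.aroots K).toFinset = R).card ≤ (n + 1) ^ R.card := by
  have card_Iic : (Finset.Iic (n • R.val)).card = (n + 1) ^ R.card := by
    have count_eq : ∀ x ∈ (n • R.val).toFinset, (n • R.val).count x + 1 = n + 1 := fun x hx ↦ by
      have mem : x ∈ R.val := Multiset.mem_of_mem_nsmul (Multiset.mem_toFinset.1 hx)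
      rw [Multiset.count_nsmul, Multiset.count_eq_one_of_mem R.nodup mem, mul_one]
    rw [Multiset.card_Iic, Finset.prod_congr rfl count_eq, Finset.prod_const]
    obtain rfl | hn := eq_or_ne n 0
    · simp
    · rw [Multiset.toFinset_nsmul _ _ hn, Finset.val_toFinset]
  rw [← card_Iic]
  refine Finset.card_le_card_of_injOn (fun g ↦ g.aroots K) (fun g hg ↦ ?_) fun g hg h hh eq ↦ ?_
  · obtain ⟨mem, rfl⟩ := Finset.mem_filter.1 hg
    obtain ⟨-, rfl⟩ := mem_monicOfDegree.1 mem
    rw [Finset.coe_Iic, Set.mem_Iic, ← IsAlgClosed.card_aroots_eq_natDegree (B := K)]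
    exact le_card_nsmul_dedup _
  · exact eq_of_aroots_eq (mem_monicOfDegree.1 (Finset.mem_filter.1 hg).1).1
      (mem_monicOfDegree.1 (Finset.mem_filter.1 hh).1).1 eq

variable (F) in
/-- The monic polynomials of degree `n` over the finite field `F` whose index is at least `k`. -/
noncomputable def largeIndex (n k : ℕ) : Finset F[X] :=
  (monicOfDegree F n).filter fun g ↦ k ≤ polyIndexOver F g

theorem mem_largeIndex {n k : ℕ} {g : F[X]} :
    g ∈ largeIndex F n k ↔ (g.Monic ∧ g.natDegree = n) ∧ k ≤ polyIndexOver F g := by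
  rw [largeIndex, Finset.mem_filter, mem_monicOfDegree]

variable (F) in
theorem largeIndex_eq_empty {n k : ℕ} (hk : n < k) : largeIndex F n k = ∅ := by
  refine Finset.eq_empty_of_forall_notMem fun g hg ↦ ?_
  obtain ⟨⟨-, rfl⟩, le⟩ := mem_largeIndex.1 hg
  exact (le.trans (Nat.sub_le _ _)).not_gt hk

theorem taylor_mem_largeIndex {n k : ℕ} (c : F) {g : F[X]} :
    taylor c g ∈ largeIndex F n k ↔ g ∈ largeIndex F n k := by
  simp only [mem_largeIndex, polyIndexOver_taylor, natDegree_taylor, Monic, leadingCoeff_taylor]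

theorem sum_largeIndex_taylor {R : Type*} [AddCommMonoid R] (n k : ℕ) (c : F) (φ : F[X] → R) :
    ∑ g ∈ largeIndex F n k, φ (taylor c g) = ∑ g ∈ largeIndex F n k, φ g :=
  Finset.sum_equiv (taylorEquiv c).toEquiv (fun _ ↦ (taylor_mem_largeIndex c).symm) fun _ _ ↦ rfl

variable (F) in
theorem card_biUnion_monicOfDegree_le (m : ℕ) :
    ((Finset.range (m + 1)).biUnion (monicOfDegree F)).card ≤ (m + 1) * Fintype.card F ^ m := by
  have := Finset.card_biUnion_le_card_mul (Finset.range (m + 1)) (monicOfDegree F)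
    (Fintype.card F ^ m) fun i hi ↦ by
      rw [card_monicOfDegree]
      exact Nat.pow_le_pow_right Fintype.card_pos (Finset.mem_range_succ_iff.1 hi)
  rwa [Finset.card_range] at this

variable (F) in
theorem card_largeIndex_le (n k : ℕ) :
    (largeIndex F n k).card ≤ (n + 1) ^ (n + 1) * Fintype.card F ^ (n - k) := by
  let K := AlgebraicClosure F
  let roots (g : F[X]) : Finset K := (g.aroots K).toFinset
  let radicals := (Finset.range (n - k + 1)).biUnion (monicOfDegree F)
  have roots_mem : ∀ g ∈ largeIndex F n k, roots g ∈ radicals.image roots := by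
    intro g hg
    obtain ⟨⟨-, natDegree_eq⟩, hk⟩ := mem_largeIndex.1 hg
    obtain ⟨r, monic, aroots_r⟩ := exists_monic_aroots_eq_toFinset_val (K := K) g
    have card_roots_le : (roots g).card ≤ n := natDegree_eq ▸ card_toFinset_aroots_le g
    have natDegree_r : r.natDegree = (roots g).card := by
      rw [← IsAlgClosed.card_aroots_eq_natDegree (B := K), aroots_r, Finset.card_val]
    have index_eq : polyIndexOver F g = n - (roots g).card := natDegree_eq ▸ rfl
    refine Finset.mem_image.2 ⟨r, Finset.mem_biUnion.2
      ⟨r.natDegree, Finset.mem_range.2 (by lia), mem_monicOfDegree.2 ⟨monic, rfl⟩⟩, ?_⟩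
    simp only [roots, aroots_r, Finset.val_toFinset]
  have fibre_le : ∀ R ∈ radicals.image roots,
      ((largeIndex F n k).filter fun g ↦ roots g = R).card ≤ (n + 1) ^ n := by
    intro R hR
    obtain ⟨r, hr, rfl⟩ := Finset.mem_image.1 hR
    obtain ⟨m, hm, hr⟩ := Finset.mem_biUnion.1 hr
    have card_roots_le : (roots r).card ≤ n :=
      (card_toFinset_aroots_le r).trans (by
        rw [(mem_monicOfDegree.1 hr).2]
        have := Finset.mem_range.1 hm
        lia)
    calc _ ≤ ((monicOfDegree F n).filter fun g ↦ roots g = roots r).card :=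
          Finset.card_le_card (Finset.filter_subset_filter _ (Finset.filter_subset _ _))
      _ ≤ (n + 1) ^ (roots r).card := card_filter_toFinset_aroots_eq_le n _
      _ ≤ (n + 1) ^ n := Nat.pow_le_pow_right n.succ_pos card_roots_le
  calc (largeIndex F n k).card ≤ (n + 1) ^ n * (radicals.image roots).card :=
        Finset.card_le_mul_card_image_of_maps_to roots_mem _ fibre_le
    _ ≤ (n + 1) ^ n * ((n + 1) * Fintype.card F ^ (n - k)) := by
        gcongr
        refine Finset.card_image_le.trans ((card_biUnion_monicOfDegree_le F (n - k)).trans ?_)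
        gcongr
        lia
    _ = (n + 1) ^ (n + 1) * Fintype.card F ^ (n - k) := by ring

variable (F) in
theorem card_largeIndex_le_div (n k : ℕ) :
    ((largeIndex F n k).card : ℝ) ≤
      (n + 1) ^ (n + 1) * ((Fintype.card F : ℝ) ^ n / (Fintype.card F : ℝ) ^ k) := by
  obtain hk | hk := lt_or_ge n k
  · rw [largeIndex_eq_empty F hk, Finset.card_empty, Nat.cast_zero]
    positivity
  · have card_ne_zero : (Fintype.card F : ℝ) ≠ 0 := Nat.cast_ne_zero.2 Fintype.card_ne_zero
    rw [div_eq_mul_inv, ← pow_sub₀ _ card_ne_zero hk]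
    exact_mod_cast card_largeIndex_le F n k

end LargeIndex

section TranslateSums

variable {F : Type*} [Field F]

theorem sum_mul_coeff_taylor_eq_eval {n : ℕ} (u : Fin n → F) (c : F) (g : F[X]) :
    ∑ j, u j * (taylor c g).coeff j = (∑ j : Fin n, C (u j) * hasseDeriv j g).eval c := by
  simp only [eval_finsetSum, eval_mul, eval_C, taylor_coeff]

theorem natDegree_sum_C_mul_hasseDeriv {n : ℕ} {u : Fin n → F} {j : Fin n} (hj : u j ≠ 0)
    (min : ∀ i < j, u i = 0) {g : F[X]} (hg : g.Monic) (natDegree_g : g.natDegree = n)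
    (choose_ne_zero : (n.choose j : F) ≠ 0) :
    (∑ i : Fin n, C (u i) * hasseDeriv i g).natDegree = n - j := by
  refine natDegree_eq_of_le_of_coeff_ne_zero
    (natDegree_sum_le_of_forall_le _ _ fun i _ ↦ ?_) ?_
  · obtain hi | hi := lt_or_ge i j
    · simp [min i hi]
    · have := (natDegree_C_mul_le (u i) _).trans (natDegree_hasseDeriv_le g i)
      have : (j : ℕ) ≤ i := hi
      lia
  · have coeff_eq : (∑ i : Fin n, C (u i) * hasseDeriv i g).coeff (n - j) =
        u j * (hasseDeriv j g).coeff (n - j) := by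
      simp only [finsetSum_coeff, coeff_C_mul]
      refine Finset.sum_eq_single j (fun i _ hij ↦ ?_) (by simp)
      obtain hi | hi := lt_or_gt_of_ne hij
      · rw [min i hi, zero_mul]
      · have := natDegree_hasseDeriv_le g i
        have : (j : ℕ) < i := hi
        rw [coeff_eq_zero_of_natDegree_lt (by lia), mul_zero]
    have leading : g.coeff n = 1 := natDegree_g ▸ hg.coeff_natDegree
    rw [coeff_eq, hasseDeriv_coeff, Nat.sub_add_cancel j.2.le, leading, mul_one]
    exact mul_ne_zero hj choose_ne_zero

theorem norm_sum_addChar_coeff_taylor_le [Fintype F] {ψ : AddChar F ℂ} (hψ : ψ ≠ 0) {n : ℕ}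
    (factorial_ne_zero : (n.factorial : F) ≠ 0) {g : F[X]} (hg : g ∈ monicOfDegree F n)
    {u : Fin n → F} (hu : u ≠ 0) :
    ‖∑ c, ψ (∑ j, u j * (taylor c g).coeff j)‖ ≤ n * √(Fintype.card F) := by
  have ne_zero_of_dvd {m : ℕ} (hm : m ∣ n.factorial) : (m : F) ≠ 0 :=
    ne_zero_of_dvd_ne_zero factorial_ne_zero (Nat.cast_dvd_cast hm)
  obtain ⟨monic, natDegree_g⟩ := mem_monicOfDegree.1 hg
  obtain ⟨j, hj, min⟩ : ∃ j, u j ≠ 0 ∧ ∀ i < j, u i = 0 := by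
    obtain ⟨j, hj, min⟩ := WellFounded.has_min (wellFounded_lt (α := Fin n)) {j | u j ≠ 0}
      (Function.ne_iff.1 hu)
    exact ⟨j, hj, fun i hi ↦ by_contra fun h ↦ min i h hi⟩
  have natDegree_eq := natDegree_sum_C_mul_hasseDeriv hj min monic natDegree_g
    (ne_zero_of_dvd ⟨_, by
      rw [← mul_assoc, Nat.choose_mul_factorial_mul_factorial j.2.le]⟩)
  simp only [sum_mul_coeff_taylor_eq_eval]
  refine (norm_sum_addChar_eval_le hψ ?_).trans ?_
  · rw [natDegree_eq]
    exact ne_zero_of_dvd (Nat.dvd_factorial (Nat.sub_pos_of_lt j.2) (Nat.sub_le _ _))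
  · rw [natDegree_eq]
    gcongr
    have : ((n - j : ℕ) : ℝ) ≤ n := mod_cast Nat.sub_le n j
    linarith

end TranslateSums

section FejerKernel

/-- The unnormalised Fejér kernel of order `M` at `a` along the additive character `ψ`, i.e. the
Fourier series with coefficients `M - |m|` for `|m| < M`. -/
noncomputable def fejerKernel {R : Type*} [Ring R] (ψ : AddChar R ℂ) (M : ℕ) (a : R) : ℝ :=
  ‖∑ m ∈ Finset.range M, ψ (m * a)‖ ^ 2

theorem addChar_sum_eq_prod {A ι M : Type*} [AddCommMonoid A] [CommMonoid M] (ψ : AddChar A M)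
    (s : Finset ι) (f : ι → A) : ψ (∑ i ∈ s, f i) = ∏ i ∈ s, ψ (f i) :=
  map_prod ψ.toMonoidHom (fun i ↦ Multiplicative.ofAdd (f i)) s

variable {R : Type*}

theorem fejerKernel_nonneg [Ring R] (ψ : AddChar R ℂ) (M : ℕ) (a : R) : 0 ≤ fejerKernel ψ M a :=
  sq_nonneg _

theorem fejerKernel_eq_sum [Ring R] [Finite R] (ψ : AddChar R ℂ) (M : ℕ) (a : R) :
    (fejerKernel ψ M a : ℂ) =
      ∑ m ∈ Finset.range M ×ˢ Finset.range M, ψ ((m.1 - m.2 : R) * a) := by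
  rw [fejerKernel, Complex.ofReal_pow, ← Complex.mul_conj', map_sum, Finset.sum_mul_sum,
    Finset.sum_product]
  refine Finset.sum_congr rfl fun m _ ↦ Finset.sum_congr rfl fun m' _ ↦ ?_
  rw [← AddChar.map_neg_eq_conj, ← AddChar.map_add_eq_mul, sub_mul, sub_eq_add_neg]

/-- The frequencies occurring in a product over `ι` of Fejér kernels of order `M`; a pair `(m, m')`
stands for the frequency `m - m'`. -/
noncomputable def fejerFrequencies (ι : Type*) [Fintype ι] (M : ℕ) : Finset (ι → ℕ × ℕ) :=
  Fintype.piFinset fun _ ↦ Finset.range M ×ˢ Finset.range M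

variable {ι : Type*} [Fintype ι]

theorem card_fejerFrequencies (M : ℕ) :
    (fejerFrequencies ι M).card = M ^ (2 * Fintype.card ι) := by
  simp [fejerFrequencies, pow_mul, sq]

theorem prod_fejerKernel_eq_sum [CommRing R] [Finite R] (ψ : AddChar R ℂ) (M : ℕ) (a : ι → R) :
    ((∏ i, fejerKernel ψ M (a i) : ℝ) : ℂ) =
      ∑ w ∈ fejerFrequencies ι M, ψ (∑ i, ((w i).1 - (w i).2 : R) * a i) := by
  push_cast
  simp only [fejerKernel_eq_sum, Finset.prod_univ_sum, addChar_sum_eq_prod, fejerFrequencies]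

theorem card_filter_fejerFrequencies_le [Ring R] {p : ℕ} [CharP R p] {M : ℕ} (hM : M ≤ p) :
    ((fejerFrequencies ι M).filter fun w ↦ ∀ i, ((w i).1 - (w i).2 : R) = 0).card ≤
      M ^ Fintype.card ι := by
  have diagonal : ∀ w ∈ (fejerFrequencies ι M).filter fun w ↦ ∀ i, ((w i).1 - (w i).2 : R) = 0,
      ∀ i, (w i).1 < M ∧ (w i).1 = (w i).2 := by
    intro w hw i
    simp only [fejerFrequencies, Finset.mem_filter, Fintype.mem_piFinset, Finset.mem_product,
      Finset.mem_range] at hw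
    obtain ⟨lt, lt'⟩ := hw.1 i
    exact ⟨lt, CharP.natCast_injOn_Iio R p (lt.trans_le hM) (lt'.trans_le hM)
      (sub_eq_zero.1 (hw.2 i))⟩
  have card_eq : (Fintype.piFinset fun _ : ι ↦ Finset.range M).card = M ^ Fintype.card ι := by
    simp
  rw [← card_eq]
  refine Finset.card_le_card_of_injOn (fun w i ↦ (w i).1) (fun w hw ↦ ?_) fun w hw w' hw' eq ↦ ?_
  · exact Fintype.mem_piFinset.2 fun i ↦ Finset.mem_range.2 (diagonal w hw i).1
  · funext i
    have eq_fst : (w i).1 = (w' i).1 := congrFun eq i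
    exact Prod.ext eq_fst (((diagonal w hw i).2.symm.trans eq_fst).trans (diagonal w' hw' i).2)

theorem sum_prod_fejerKernel_le [CommRing R] [Finite R] {p : ℕ} [CharP R p] (ψ : AddChar R ℂ)
    {M : ℕ} (hM : M ≤ p) {κ : Type*} [Fintype κ] (a : κ → ι → R) {B : ℝ} (hB : 0 ≤ B)
    (bound : ∀ u : ι → R, u ≠ 0 → ‖∑ c, ψ (∑ i, u i * a c i)‖ ≤ B) :
    ∑ c, ∏ i, fejerKernel ψ M (a c i) ≤
      Fintype.card κ * (M : ℝ) ^ Fintype.card ι + (M : ℝ) ^ (2 * Fintype.card ι) * B := by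
  let u (w : ι → ℕ × ℕ) (i : ι) : R := (w i).1 - (w i).2
  let W := fejerFrequencies ι M
  have expand : ((∑ c, ∏ i, fejerKernel ψ M (a c i) : ℝ) : ℂ) =
      ∑ w ∈ W, ∑ c, ψ (∑ i, u w i * a c i) := by
    rw [Complex.ofReal_sum, Finset.sum_comm]
    exact Finset.sum_congr rfl fun c _ ↦ prod_fejerKernel_eq_sum ψ M (a c)
  have frequency_le (w : ι → ℕ × ℕ) : ‖∑ c, ψ (∑ i, u w i * a c i)‖ ≤
      (if ∀ i, u w i = 0 then (Fintype.card κ : ℝ) else 0) + B := by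
    split_ifs with hw
    · simpa [hw] using hB
    · rw [zero_add]
      exact bound _ fun h ↦ hw (congrFun h)
  calc ∑ c, ∏ i, fejerKernel ψ M (a c i)
      ≤ ‖((∑ c, ∏ i, fejerKernel ψ M (a c i) : ℝ) : ℂ)‖ := by
        rw [Complex.norm_real]
        exact le_abs_self _
    _ ≤ ∑ w ∈ W, ((if ∀ i, u w i = 0 then (Fintype.card κ : ℝ) else 0) + B) := by
        rw [expand]
        exact norm_sum_le_of_le _ fun w _ ↦ frequency_le w
    _ = Fintype.card κ * (W.filter fun w ↦ ∀ i, u w i = 0).card + W.card * B := by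
        rw [Finset.sum_add_distrib, ← Finset.sum_filter, Finset.sum_const, Finset.sum_const,
          nsmul_eq_mul, nsmul_eq_mul, mul_comm (Fintype.card κ : ℝ)]
    _ ≤ _ := by
        rw [card_fejerFrequencies, Nat.cast_pow]
        gcongr
        exact_mod_cast card_filter_fejerFrequencies_le hM

theorem sq_half_le_fejerKernel_stdAddChar {p : ℕ} [NeZero p] {M : ℕ} {H : ℝ} {a : ℤ}
    (ha : |(a : ℝ)| ≤ H) (hM : 8 * H * M ≤ p) :
    (M / 2 : ℝ) ^ 2 ≤ fejerKernel (ZMod.stdAddChar (N := p)) M a := by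
  have p_pos : (0 : ℝ) < p := mod_cast NeZero.pos p
  have half_le_re (m : ℕ) (hm : m ∈ Finset.range M) :
      (1 / 2 : ℝ) ≤ (ZMod.stdAddChar (N := p) (m * a)).re := by
    let θ : ℝ := 2 * Real.pi * (m * a) / p
    have eq_exp : ZMod.stdAddChar (N := p) (m * a) = Complex.exp (θ * Complex.I) := by
      have := ZMod.stdAddChar_coe (N := p) (m * a)
      push_cast at this
      rw [this]
      push_cast [θ]
      ring_nf
    have abs_le : |θ| ≤ Real.pi / 3 := by
      have m_le : (m : ℝ) ≤ M := mod_cast (Finset.mem_range.1 hm).le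
      have mul_le : (m : ℝ) * |(a : ℝ)| ≤ M * H := by gcongr
      have abs_θ : |θ| = Real.pi * (2 * (m * |(a : ℝ)|)) / p := by
        simp only [θ, abs_div, abs_mul, Nat.abs_cast, Nat.abs_ofNat, abs_of_pos Real.pi_pos]
        ring
      rw [abs_θ, div_le_iff₀ p_pos, div_mul_eq_mul_div, mul_div_assoc]
      gcongr
      linarith
    rw [eq_exp, Complex.exp_ofReal_mul_I_re, ← Real.cos_abs, ← Real.cos_pi_div_three]
    exact Real.cos_le_cos_of_nonneg_of_le_pi (abs_nonneg _) (by linarith [Real.pi_pos]) abs_le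
  have re_ge := Finset.card_nsmul_le_sum _ _ _ half_le_re
  rw [Finset.card_range, nsmul_eq_mul, ← Complex.re_sum] at re_ge
  rw [fejerKernel]
  gcongr
  calc (M / 2 : ℝ) = M * (1 / 2) := by ring
    _ ≤ _ := re_ge
    _ ≤ _ := Complex.re_le_norm _

end FejerKernel

section Equidistribution

theorem card_mul_sum_prod_fejerKernel_coeff_le {F : Type*} [Field F] [Fintype F] {p : ℕ}
    [CharP F p] {ψ : AddChar F ℂ} (hψ : ψ ≠ 0) {n : ℕ} (factorial_ne_zero : (n.factorial : F) ≠ 0)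
    (k : ℕ) {M : ℕ} (hM : M ≤ p) :
    Fintype.card F * ∑ g ∈ largeIndex F n k, ∏ j : Fin n, fejerKernel ψ M (g.coeff j) ≤
      (largeIndex F n k).card *
        (Fintype.card F * (M : ℝ) ^ n + (M : ℝ) ^ (2 * n) * (n * √(Fintype.card F))) := by
  let φ (g : F[X]) : ℝ := ∏ j : Fin n, fejerKernel ψ M (g.coeff j)
  have orbit_le (g : F[X]) (hg : g ∈ largeIndex F n k) : ∑ c, φ (taylor c g) ≤
      Fintype.card F * (M : ℝ) ^ n + (M : ℝ) ^ (2 * n) * (n * √(Fintype.card F)) := by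
    have := sum_prod_fejerKernel_le ψ hM (fun c (j : Fin n) ↦ (taylor c g).coeff j)
      (B := n * √(Fintype.card F)) (by positivity) fun u hu ↦
      norm_sum_addChar_coeff_taylor_le hψ factorial_ne_zero (Finset.mem_filter.1 hg).1 hu
    rwa [Fintype.card_fin] at this
  calc Fintype.card F * ∑ g ∈ largeIndex F n k, φ g
      = ∑ c : F, ∑ g ∈ largeIndex F n k, φ (taylor c g) := by
        simp only [sum_largeIndex_taylor, Finset.sum_const, Finset.card_univ, nsmul_eq_mul]
    _ = ∑ g ∈ largeIndex F n k, ∑ c, φ (taylor c g) := Finset.sum_comm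
    _ ≤ _ := (Finset.sum_le_card_nsmul _ _ _ orbit_le).trans_eq (nsmul_eq_mul _ _)

end Equidistribution

section BoxResidues

variable {ι : Type*} {m : ℕ}

theorem injOn_intCast_of_abs_le {H : ℝ} (hH : 2 * H < m) :
    Set.InjOn (fun (a : ι → ℤ) i ↦ (a i : ZMod m)) {a | ∀ i, |(a i : ℝ)| ≤ H} := by
  intro a ha b hb eq
  funext i
  have dvd := (ZMod.intCast_eq_intCast_iff_dvd_sub _ _ m).1 (congrFun eq i)
  have abs_lt : |((b i - a i : ℤ) : ℝ)| < m := by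
    have := abs_sub (b i : ℝ) (a i)
    have := ha i
    have := hb i
    push_cast
    linarith
  exact (sub_eq_zero.1 (Int.eq_zero_of_abs_lt_dvd dvd (mod_cast abs_lt))).symm

variable [Fintype ι]

/-- The integer points of the box `[-H, H]^ι` whose reduction modulo `m` lies in `S`. -/
noncomputable def boxResidues (H : ℝ) (S : Finset (ι → ZMod m)) : Finset (ι → ℤ) :=
  (Fintype.piFinset fun _ ↦ Finset.Icc (-⌊H⌋) ⌊H⌋).filter fun a ↦ (fun i ↦ (a i : ZMod m)) ∈ S

theorem mem_boxResidues {H : ℝ} {S : Finset (ι → ZMod m)} {a : ι → ℤ} :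
    a ∈ boxResidues H S ↔ (∀ i, |(a i : ℝ)| ≤ H) ∧ (fun i ↦ (a i : ZMod m)) ∈ S := by
  rw [boxResidues, Finset.mem_filter, Fintype.mem_piFinset]
  refine and_congr_left fun _ ↦ forall_congr' fun i ↦ ?_
  rw [Finset.mem_Icc, neg_le, Int.le_floor, Int.le_floor, abs_le, Int.cast_neg, neg_le]

theorem card_filter_Ioc_intCast_eq_le [NeZero m] {a b : ℤ} (hab : a ≤ b) (r : ZMod m) :
    (((Finset.Ioc a b).filter fun x : ℤ ↦ (x : ZMod m) = r).card : ℝ) ≤ (b - a) / m + 1 := by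
  obtain ⟨r, rfl⟩ := ZMod.intCast_surjective r
  have m_pos : 0 < (m : ℤ) := mod_cast NeZero.pos m
  let x : ℚ := (b - r) / (m : ℤ)
  let y : ℚ := (a - r) / (m : ℤ)
  have card_eq : (((Finset.Ioc a b).filter fun x : ℤ ↦ (x : ZMod m) = r).card : ℤ) =
      max (⌊x⌋ - ⌊y⌋) 0 := by
    simp only [ZMod.intCast_eq_intCast_iff]
    exact Int.Ioc_filter_modEq_card _ _ m_pos _
  have sub_le : ((max (⌊x⌋ - ⌊y⌋) 0 : ℤ) : ℚ) ≤ (b - a) / m + 1 := by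
    have : (a : ℚ) ≤ b := mod_cast hab
    have x_sub_y : x - y = (b - a) / m := by simp only [x, y, Int.cast_natCast]; ring
    have := Int.floor_le x
    have := Int.lt_floor_add_one y
    push_cast
    exact max_le (by linarith) (by positivity)
  rw [← card_eq] at sub_le
  exact_mod_cast sub_le

theorem card_filter_Icc_floor_intCast_eq_le [NeZero m] {H : ℝ} (hH : 0 ≤ H) (r : ZMod m) :
    (((Finset.Icc (-⌊H⌋) ⌊H⌋).filter fun x : ℤ ↦ (x : ZMod m) = r).card : ℝ) ≤
      2 * H / m + 2 := by
  have floor_nonneg : 0 ≤ ⌊H⌋ := Int.floor_nonneg.2 hH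
  have m_pos : (1 : ℝ) ≤ m := mod_cast NeZero.one_le
  rw [← Finset.Ioc_sub_one_left_eq_Icc]
  calc _ ≤ ((⌊H⌋ : ℝ) - ((-⌊H⌋ - 1 : ℤ) : ℝ)) / m + 1 :=
        card_filter_Ioc_intCast_eq_le (by lia) r
    _ = 2 * ⌊H⌋ / m + 1 / m + 1 := by push_cast; ring
    _ ≤ 2 * H / m + 1 + 1 := by
        gcongr
        · exact Int.floor_le H
        · exact div_le_one_of_le₀ m_pos (by positivity)
    _ = 2 * H / m + 2 := by ring

theorem card_boxResidues_le [NeZero m] {H : ℝ} (hH : 0 ≤ H) (S : Finset (ι → ZMod m)) :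
    ((boxResidues H S).card : ℝ) ≤ S.card * (2 * H / m + 2) ^ Fintype.card ι := by
  let residues (a : ι → ℤ) (i : ι) : ZMod m := a i
  have fibre_le (v : ι → ZMod m) : (((boxResidues H S).filter (residues · = v)).card : ℝ) ≤
      (2 * H / m + 2) ^ Fintype.card ι := by
    have subset : (boxResidues H S).filter (residues · = v) ⊆ Fintype.piFinset fun i ↦
        (Finset.Icc (-⌊H⌋) ⌊H⌋).filter fun x : ℤ ↦ (x : ZMod m) = v i := by
      intro a ha
      obtain ⟨mem, rfl⟩ := Finset.mem_filter.1 ha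
      have mem_box := Fintype.mem_piFinset.1 (Finset.mem_filter.1 mem).1
      exact Fintype.mem_piFinset.2 fun i ↦ Finset.mem_filter.2 ⟨mem_box i, rfl⟩
    calc _ ≤ ((Fintype.piFinset fun i ↦
          (Finset.Icc (-⌊H⌋) ⌊H⌋).filter fun x : ℤ ↦ (x : ZMod m) = v i).card : ℝ) := by
          exact_mod_cast Finset.card_le_card subset
      _ ≤ ∏ _i : ι, (2 * H / m + 2) := by
          rw [Fintype.card_piFinset, Nat.cast_prod]
          exact Finset.prod_le_prod (fun _ _ ↦ Nat.cast_nonneg _)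
            fun i _ ↦ card_filter_Icc_floor_intCast_eq_le hH (v i)
      _ = (2 * H / m + 2) ^ Fintype.card ι := by rw [Finset.prod_const, Finset.card_univ]
  rw [Finset.card_eq_sum_card_fiberwise (f := residues) (t := S)
      fun a ha ↦ (mem_boxResidues.1 ha).2,
    Nat.cast_sum, ← nsmul_eq_mul]
  exact Finset.sum_le_card_nsmul _ _ _ fun v _ ↦ fibre_le v

theorem card_boxResidues_mul_le_sum_fejerKernel [NeZero m] {M : ℕ} (M_pos : 0 < M) {H : ℝ}
    (hM : 8 * H * M ≤ m) (S : Finset (ι → ZMod m)) :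
    (boxResidues H S).card * ((M / 2 : ℝ) ^ 2) ^ Fintype.card ι ≤
      ∑ v ∈ S, ∏ i, fejerKernel (ZMod.stdAddChar (N := m)) M (v i) := by
  let residues (a : ι → ℤ) (i : ι) : ZMod m := a i
  let φ (v : ι → ZMod m) : ℝ := ∏ i, fejerKernel (ZMod.stdAddChar (N := m)) M (v i)
  have m_pos : (0 : ℝ) < m := mod_cast NeZero.pos m
  have two_mul_lt : 2 * H < m := by
    have : (1 : ℝ) ≤ M := mod_cast M_pos
    by_contra! h
    nlinarith
  have injOn : Set.InjOn residues (boxResidues H S) :=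
    (injOn_intCast_of_abs_le two_mul_lt).mono fun a ha ↦ (mem_boxResidues.1 ha).1
  calc (boxResidues H S).card * ((M / 2 : ℝ) ^ 2) ^ Fintype.card ι
      ≤ ∑ a ∈ boxResidues H S, φ (residues a) := by
        rw [← nsmul_eq_mul]
        refine Finset.card_nsmul_le_sum _ _ _ fun a ha ↦ ?_
        rw [← Finset.card_univ, ← Finset.prod_const]
        exact Finset.prod_le_prod (fun _ _ ↦ sq_nonneg _) fun i _ ↦
          sq_half_le_fejerKernel_stdAddChar ((mem_boxResidues.1 ha).1 i) hM
    _ = ∑ v ∈ (boxResidues H S).image residues, φ v := (Finset.sum_image injOn).symm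
    _ ≤ ∑ v ∈ S, φ v := by
        refine Finset.sum_le_sum_of_subset_of_nonneg
          (Finset.image_subset_iff.2 fun a ha ↦ (mem_boxResidues.1 ha).2) fun v _ _ ↦ ?_
        exact Finset.prod_nonneg fun i _ ↦ fejerKernel_nonneg _ M (v i)

end BoxResidues

section CoefficientVectors

/-- The monic polynomial `X ^ n + a 0 * X ^ (n - 1) + ⋯ + a (n - 1)` with coefficient vector `a`. -/
noncomputable def monicOfCoeffs {R : Type*} [Semiring R] {n : ℕ} (a : Fin n → R) : R[X] :=
  X ^ n + ∑ i : Fin n, C (a i) * X ^ (n - 1 - (i : ℕ))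

theorem coeff_rev_monicOfCoeffs {R : Type*} [Semiring R] {n : ℕ} (a : Fin n → R) (i : Fin n) :
    (monicOfCoeffs a).coeff i.rev = a i := by
  have rev_eq : n - (i + 1 : ℕ) = n - 1 - i := by lia
  rw [monicOfCoeffs, coeff_add, coeff_X_pow, if_neg i.rev.2.ne, zero_add, finsetSum_coeff,
    Fin.val_rev, rev_eq, Finset.sum_eq_single i (fun j _ hj ↦ ?_) (by simp)]
  · simp
  · rw [coeff_C_mul, coeff_X_pow, if_neg (by lia), mul_zero]

theorem monicOfCoeffs_injective {R : Type*} [Semiring R] {n : ℕ} :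
    Function.Injective (monicOfCoeffs : (Fin n → R) → R[X]) := fun a b eq ↦ funext fun i ↦ by
  rw [← coeff_rev_monicOfCoeffs a, eq, coeff_rev_monicOfCoeffs]

variable {F : Type*} [Field F] [Fintype F] {n : ℕ}

theorem monicOfCoeffs_mem_monicOfDegree (a : Fin n → F) :
    monicOfCoeffs a ∈ monicOfDegree F n := by
  have degree_lt : (∑ i : Fin n, C (a i) * X ^ (n - 1 - (i : ℕ))).degree < (n : WithBot ℕ) := by
    refine (degree_sum_le _ _).trans_lt ((Finset.sup_lt_iff (WithBot.bot_lt_coe n)).2 fun i _ ↦ ?_)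
    exact (degree_C_mul_X_pow_le _ _).trans_lt (Nat.cast_lt.2 (by lia))
  refine mem_monicOfDegree.2 ⟨monic_X_pow_add degree_lt, ?_⟩
  rw [monicOfCoeffs, natDegree_add_eq_left_of_degree_lt (by rwa [degree_X_pow]), natDegree_X_pow]

variable (F n) in
/-- The coefficient vectors of the monic polynomials of degree `n` and index at least `k`. -/
noncomputable def largeIndexCoeffs (k : ℕ) : Finset (Fin n → F) :=
  Finset.univ.filter fun a ↦ k ≤ polyIndexOver F (monicOfCoeffs a)

theorem monicOfCoeffs_mem_largeIndex {k : ℕ} {a : Fin n → F} (ha : a ∈ largeIndexCoeffs F n k) :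
    monicOfCoeffs a ∈ largeIndex F n k :=
  Finset.mem_filter.2 ⟨monicOfCoeffs_mem_monicOfDegree a, (Finset.mem_filter.1 ha).2⟩

variable (F n) in
theorem card_largeIndexCoeffs_le (k : ℕ) :
    (largeIndexCoeffs F n k).card ≤ (largeIndex F n k).card :=
  Finset.card_le_card_of_injOn _ (fun _ ↦ monicOfCoeffs_mem_largeIndex)
    monicOfCoeffs_injective.injOn

theorem sum_largeIndexCoeffs_le (k : ℕ) {φ : F → ℝ} (hφ : ∀ x, 0 ≤ φ x) :
    ∑ a ∈ largeIndexCoeffs F n k, ∏ i, φ (a i) ≤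
      ∑ g ∈ largeIndex F n k, ∏ j : Fin n, φ (g.coeff j) := by
  have prod_eq (a : Fin n → F) : ∏ j : Fin n, φ ((monicOfCoeffs a).coeff j) = ∏ i, φ (a i) := by
    rw [← Equiv.prod_comp (Fin.revPerm : Fin n ≃ Fin n)]
    simp only [Fin.revPerm_apply, coeff_rev_monicOfCoeffs]
  calc ∑ a ∈ largeIndexCoeffs F n k, ∏ i, φ (a i)
      = ∑ g ∈ (largeIndexCoeffs F n k).image monicOfCoeffs, ∏ j : Fin n, φ (g.coeff j) := by
        rw [Finset.sum_image monicOfCoeffs_injective.injOn]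
        exact Finset.sum_congr rfl fun a _ ↦ (prod_eq a).symm
    _ ≤ _ := Finset.sum_le_sum_of_subset_of_nonneg
        (Finset.image_subset_iff.2 fun _ ↦ monicOfCoeffs_mem_largeIndex)
        fun _ _ _ ↦ Finset.prod_nonneg fun _ _ ↦ hφ _

end CoefficientVectors

section LargeIndexInBoxes

variable {p : ℕ} [Fact p.Prime] {n : ℕ} {H : ℝ}

theorem exists_nat_mul_le_le_two_mul {x y : ℝ} (hx : 0 < x) (hxy : x ≤ y) :
    ∃ M : ℕ, 0 < M ∧ M * x ≤ y ∧ y ≤ 2 * (M * x) := by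
  have one_le : 1 ≤ y / x := (one_le_div hx).2 hxy
  have floor_le := Nat.floor_le (zero_le_one.trans one_le)
  have lt_floor := Nat.lt_floor_add_one (y / x)
  have floor_pos : 0 < ⌊y / x⌋₊ := Nat.floor_pos.2 one_le
  have : (1 : ℝ) ≤ ⌊y / x⌋₊ := mod_cast floor_pos
  refine ⟨_, floor_pos, (le_div_iff₀ hx).1 floor_le, ?_⟩
  rw [← mul_assoc, ← div_le_iff₀ hx]
  linarith

theorem card_boxResidues_largeIndexCoeffs_mul_le (hn : n < p) (k : ℕ) {M : ℕ} (M_pos : 0 < M)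
    (hM : 8 * H * M ≤ p) (M_le : M ≤ p) :
    p * ((boxResidues H (largeIndexCoeffs (ZMod p) n k)).card * ((M / 2 : ℝ) ^ 2) ^ n) ≤
      (largeIndex (ZMod p) n k).card * (p * (M : ℝ) ^ n + (M : ℝ) ^ (2 * n) * (n * √p)) := by
  have factorial_ne_zero : (n.factorial : ZMod p) ≠ 0 := by
    rw [Ne, ZMod.natCast_eq_zero_iff, (Fact.out : p.Prime).dvd_factorial]
    exact hn.not_ge
  have character_ne_zero : ZMod.stdAddChar (N := p) ≠ 0 := fun h ↦
    one_ne_zero (ZMod.injective_stdAddChar (h ▸ rfl : ZMod.stdAddChar (1 : ZMod p) = _))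
  have lower := card_boxResidues_mul_le_sum_fejerKernel M_pos hM (largeIndexCoeffs (ZMod p) n k)
  have upper := card_mul_sum_prod_fejerKernel_coeff_le character_ne_zero factorial_ne_zero k M_le
  rw [Fintype.card_fin] at lower
  rw [ZMod.card] at upper
  refine le_trans ?_ upper
  gcongr
  exact lower.trans (sum_largeIndexCoeffs_le k (fejerKernel_nonneg _ M))

theorem card_boxResidues_largeIndexCoeffs_le_of_mul_le (hn : n < p) (k : ℕ) {M : ℕ}
    (M_pos : 0 < M) (hM : 8 * H * M ≤ p) (M_le : M ≤ p) :
    ((boxResidues H (largeIndexCoeffs (ZMod p) n k)).card : ℝ) ≤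
      (largeIndex (ZMod p) n k).card * ((4 / M) ^ n + 4 ^ n * n / √p) := by
  set N := (boxResidues H (largeIndexCoeffs (ZMod p) n k)).card
  set s := (largeIndex (ZMod p) n k).card
  have p_pos : (0 : ℝ) < p := mod_cast (Fact.out : p.Prime).pos
  have : (0 : ℝ) < M := mod_cast M_pos
  have M_eq : (M / 2 : ℝ) ^ 2 * (4 / M) = M := by field_simp; norm_num
  have M_sq_eq : (M / 2 : ℝ) ^ 2 * 4 = M ^ 2 := by ring
  refine le_of_mul_le_mul_left ?_ (by positivity : 0 < p * ((M / 2 : ℝ) ^ 2) ^ n)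
  calc p * ((M / 2 : ℝ) ^ 2) ^ n * N = p * (N * ((M / 2 : ℝ) ^ 2) ^ n) := by ring
    _ ≤ s * (p * (M : ℝ) ^ n + (M : ℝ) ^ (2 * n) * (n * √p)) :=
        card_boxResidues_largeIndexCoeffs_mul_le hn k M_pos hM M_le
    _ = s * (p * ((M / 2 : ℝ) ^ 2 * (4 / M)) ^ n +
          ((M / 2 : ℝ) ^ 2 * 4) ^ n * (n * (p / √p))) := by
        rw [M_eq, M_sq_eq, Real.div_sqrt, ← pow_mul]
    _ = p * ((M / 2 : ℝ) ^ 2) ^ n * (s * ((4 / M) ^ n + 4 ^ n * n / √p)) := by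
        rw [mul_pow, mul_pow]
        ring

theorem card_boxResidues_largeIndexCoeffs_le_of_lt (hn : n < p) (k : ℕ) (one_le : 1 ≤ H)
    (hH : 8 * H ≤ p) :
    ((boxResidues H (largeIndexCoeffs (ZMod p) n k)).card : ℝ) ≤
      (largeIndex (ZMod p) n k).card * ((64 * H / p) ^ n + 4 ^ n * n / √p) := by
  obtain ⟨M, M_pos, M_mul_le, le_mul⟩ := exists_nat_mul_le_le_two_mul (by positivity) hH
  have p_pos : (0 : ℝ) < p := mod_cast (Fact.out : p.Prime).pos
  have M_pos' : (0 : ℝ) < M := mod_cast M_pos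
  have M_le : (M : ℝ) ≤ p := by nlinarith
  refine (card_boxResidues_largeIndexCoeffs_le_of_mul_le hn k M_pos (by linarith)
    (mod_cast M_le)).trans ?_
  gcongr _ * (?_ ^ n + _)
  rw [div_le_div_iff₀ M_pos' p_pos]
  linarith

theorem card_boxResidues_largeIndexCoeffs_le (k : ℕ) (hH : 1 ≤ H) :
    ((boxResidues H (largeIndexCoeffs (ZMod p) n k)).card : ℝ) ≤
      (largeIndex (ZMod p) n k).card * ((64 * (n + 1) * H / p) ^ n + 4 ^ n * n / √p) := by
  have p_pos : (0 : ℝ) < p := mod_cast (Fact.out : p.Prime).pos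
  have : (0 : ℝ) ≤ n := n.cast_nonneg
  have le_succ_mul : 64 * H / p ≤ 64 * (n + 1) * H / p := by
    gcongr
    linarith
  by_cases large : n < p ∧ 8 * H ≤ p
  · refine (card_boxResidues_largeIndexCoeffs_le_of_lt large.1 k hH large.2).trans ?_
    gcongr
  · have p_le : (p : ℝ) ≤ 8 * (n + 1) * H := by
      obtain le | lt := not_and_or.1 large
      · have : (p : ℝ) ≤ n := mod_cast not_lt.1 le
        nlinarith
      · nlinarith
    have base_le : 2 * H / p + 2 ≤ 64 * (n + 1) * H / p := by
      rw [div_add' _ _ _ p_pos.ne']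
      gcongr
      nlinarith
    calc _ ≤ _ := card_boxResidues_le (by linarith) _
      _ ≤ (largeIndex (ZMod p) n k).card * (64 * (n + 1) * H / p) ^ n := by
        rw [Fintype.card_fin]
        gcongr
        exact card_largeIndexCoeffs_le _ n k
      _ ≤ _ := by
        gcongr
        exact le_add_of_nonneg_right (by positivity)

end LargeIndexInBoxes

theorem index_ge_k_count_single_prime_general (n : ℕ) :
    ∃ C : ℝ, 0 < C ∧ ∀ (k p : ℕ) (hp : p.Prime) (H : ℝ), 1 ≤ H →
      (Set.ncard {a : Fin n → ℤ |
          (∀ i, |(a i : ℝ)| ≤ H) ∧ k ≤ indexModP p hp n a} : ℝ)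
        ≤ C * (H ^ n / (p : ℝ) ^ k + (p : ℝ) ^ ((n : ℝ) - k - 1 / 2)) := by
  refine ⟨(n + 1) ^ (n + 1) * ((64 * (n + 1)) ^ n + 4 ^ n * n), by positivity,
    fun k p hp H hH ↦ ?_⟩
  have : Fact p.Prime := ⟨hp⟩
  have p_pos : (0 : ℝ) < p := mod_cast hp.pos
  have set_eq : {a : Fin n → ℤ | (∀ i, |(a i : ℝ)| ≤ H) ∧ k ≤ indexModP p hp n a} =
      boxResidues H (largeIndexCoeffs (ZMod p) n k) := by
    ext a
    rw [Finset.mem_coe, mem_boxResidues, largeIndexCoeffs, Finset.mem_filter_univ]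
    rfl
  have rpow_eq : (p : ℝ) ^ ((n : ℝ) - k - 1 / 2) = p ^ n / p ^ k / √p := by
    rw [Real.rpow_sub p_pos, Real.rpow_sub p_pos, Real.rpow_natCast, Real.rpow_natCast,
      Real.sqrt_eq_rpow]
  have card_le := card_largeIndex_le_div (ZMod p) n k
  rw [ZMod.card] at card_le
  rw [set_eq, Set.ncard_coe_finset, rpow_eq]
  calc _ ≤ _ := card_boxResidues_largeIndexCoeffs_le k hH
    _ ≤ (n + 1) ^ (n + 1) * ((p : ℝ) ^ n / p ^ k) *
        ((64 * (n + 1) * H / p) ^ n + 4 ^ n * n / √p) := by gcongr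
    _ = (n + 1) ^ (n + 1) *
        ((64 * (n + 1)) ^ n * (H ^ n / p ^ k) + 4 ^ n * n * (p ^ n / p ^ k / √p)) := by
      rw [div_pow, mul_pow]
      field_simp
    _ ≤ (n + 1) ^ (n + 1) * (((64 * (n + 1)) ^ n + 4 ^ n * n) *
        (H ^ n / p ^ k + p ^ n / p ^ k / √p)) := by
      gcongr
      have := mul_nonneg (by positivity : (0 : ℝ) ≤ (64 * (n + 1)) ^ n)
        (by positivity : 0 ≤ (p : ℝ) ^ n / p ^ k / √p)
      have := mul_nonneg (by positivity : (0 : ℝ) ≤ 4 ^ n * n)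
        (by positivity : 0 ≤ H ^ n / (p : ℝ) ^ k)
      linarith
    _ = _ := by ring

/-- Corollary 4.6 of Bhargava's paper. Fix `n ≥ 1`, `k ≥ 0` and `ε > 0`. There is a
constant `C` such that for every prime `p` and every `H ≥ 1`, the number of monic
integer polynomials `x^n + a_1 x^{n-1} + ... + a_n` with `|a_i| ≤ H` whose reduction
modulo `p` has index at least `k` over `𝔽_p` is at most
`C·(H^n/p^k + p^{n-k-1/2+ε})`. -/
theorem index_ge_k_count_single_prime (n : ℕ) (hn : 1 ≤ n) (k : ℕ) (ε : ℝ)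
    (hε : 0 < ε) :
    ∃ C : ℝ, 0 < C ∧ ∀ (p : ℕ) (hp : p.Prime) (H : ℝ), 1 ≤ H →
      (Set.ncard {a : Fin n → ℤ |
          (∀ i, |(a i : ℝ)| ≤ H) ∧ k ≤ indexModP p hp n a} : ℝ)
        ≤ C * (H ^ n / (p : ℝ) ^ k + (p : ℝ) ^ ((n : ℝ) - k - 1 / 2 + ε)) := by
  obtain ⟨C, C_pos, bound⟩ := index_ge_k_count_single_prime_general n
  refine ⟨C, C_pos, fun p hp H hH ↦ (bound k p hp H hH).trans ?_⟩
  gcongr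
  · exact_mod_cast hp.one_le
  · linarith
end
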